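/- (Gradient upper and lower bounds near initialization.) There exist absolute constants C, c > 0 such that the following holds. Assume the separateness assumption with parameter δ ≤ 1/(CL) and m ≥ C·n²⁴·L¹²·d·(log m)⁵/δ⁸, and set ω = δ^{3/2}/(C·n^{9/2}·L⁶·(log m)³). With probability at least 1 − e^{−c·m·ω^{2/3}·L} over the random initialization (W⁽⁰⁾, A, B): for every ℓ ∈ [L], every i ∈ [n], and every weight tuple W with ‖W − W⁽⁰⁾‖₂ ≤ ω, one has ‖∇_{W_ℓ}F_i(W)‖_F² ≤ C·(m/d)·F_i(W), ‖∇_{W_ℓ}F(W)‖_F² ≤ C·(m·n/d)·F(W), and ‖∇_{W_L}F(W)‖_F² ≥ (δ·m)/(C·d·n²)·F(W). -/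

import Mathlib

/-!
All estimates are first proved at the random initialization and then transferred to every weight
tuple within spectral distance `ω` by a deterministic perturbation argument.

**At initialization.** Conditionally on the earlier layers, the rows of a layer matrix are
independent Gaussian vectors, so Chernoff bounds and union bounds give, off one event of small
probability (`init_good`): the hidden vectors have norm between `1/2` and `2` (`norm_good`); hidden
vectors of different samples stay `δ/4`-separated through all layers (`sep_good`); at most `4 τ m`
pre-activations of a layer are so small that they could change sign (`count_good`); the chains
`W_b D_{b-1} ⋯ D_a W_a` and `B D_L ⋯ D_a W_a` have bounded operator norm, with much smaller bounds
between `s`-sparse coordinate sets (`chain_good`).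

**The lower bound at initialization.** Row `k` of the last-layer gradient is
`∑ i, ⟨b_k, v_i⟩ 1[⟨w_k, h_i⟩ ≥ 0] h_i`. Let `i₀` be the sample with the largest loss vector. With
probability of order `δ / n` the vector `w_k` is so close to the hyperplane orthogonal to `h_{i₀}`
that, by separation, reflecting `w_k` in that hyperplane flips the sign of `⟨w_k, h_{i₀}⟩` and no
other sign; the reflection preserves the Gaussian law, and the row is large for `w_k` or for its
mirror image. A net over the loss vectors makes this uniform in
`v` (`last_good`): a `δ / (2048 n)` fraction of the rows has norm at least `‖v_{i₀}‖ / (16 √d)`.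

**Perturbation.** The ReLU difference of two vectors is a diagonal matrix with entries in `[0, 1]`
applied to their difference, and it agrees with the sign matrix at initialization off the set of
flipped coordinates. Induction over the layers gives simultaneously that at most `s` coordinates
flip per layer and that the hidden vectors move by at most `3·10⁵ ω L³` (`forward_stable`), because
every flip costs a factor from the sparse-to-sparse bound. The same expansion bounds the backward
operators (`backward_stable`). The upper gradient bounds follow from `grad_upper`, the lower bound
from `grad_lower`, since the unflipped rows still dominate.
-/

open MeasureTheory ProbabilityTheory

noncomputable section

namespace DNNPaper

/-! ### Elementary linear algebra on plain function matrices -/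

def mulVec {p q : ℕ} (M : Fin p → Fin q → ℝ) (v : Fin q → ℝ) : Fin p → ℝ :=
  fun i => ∑ j, M i j * v j

def mmul {p q r : ℕ} (M : Fin p → Fin q → ℝ) (N : Fin q → Fin r → ℝ) :
    Fin p → Fin r → ℝ :=
  fun i k => ∑ j, M i j * N j k

def transpose {p q : ℕ} (M : Fin p → Fin q → ℝ) : Fin q → Fin p → ℝ :=
  fun j i => M i j

def dot {p : ℕ} (u v : Fin p → ℝ) : ℝ := ∑ i, u i * v i

def outer {p q : ℕ} (u : Fin p → ℝ) (v : Fin q → ℝ) : Fin p → Fin q → ℝ :=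
  fun i j => u i * v j

def idMat (p : ℕ) : Fin p → Fin p → ℝ := fun i j => if i = j then 1 else 0

def diagMat {p : ℕ} (dg : Fin p → ℝ) : Fin p → Fin p → ℝ :=
  fun i j => if i = j then dg i else 0

def relu {p : ℕ} (v : Fin p → ℝ) : Fin p → ℝ := fun k => max (v k) 0

/-- diagonal entries of the ReLU sign matrix of a pre-activation vector -/
def signOf {p : ℕ} (g : Fin p → ℝ) : Fin p → ℝ := fun k => if 0 ≤ g k then 1 else 0

/-- Euclidean norm -/
def l2 {p : ℕ} (v : Fin p → ℝ) : ℝ := Real.sqrt (∑ k, v k ^ 2)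

/-- max-norm -/
def linf {p : ℕ} (v : Fin p → ℝ) : ℝ := ⨆ k, |v k|

/-- number of nonzero entries -/
def l0 {p : ℕ} (v : Fin p → ℝ) : ℕ := (Finset.univ.filter fun k => v k ≠ 0).card

/-- Frobenius norm -/
def frob {p q : ℕ} (M : Fin p → Fin q → ℝ) : ℝ := Real.sqrt (∑ i, ∑ j, M i j ^ 2)

/-- spectral norm (ℓ₂ operator norm) -/
def spec {p q : ℕ} (M : Fin p → Fin q → ℝ) : ℝ :=
  sSup {r | ∃ v : Fin q → ℝ, l2 v ≤ 1 ∧ r = l2 (mulVec M v)}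

/-- trace (Frobenius) inner product -/
def innerF {p q : ℕ} (M N : Fin p → Fin q → ℝ) : ℝ := ∑ i, ∑ j, M i j * N i j

/-- `‖W‖₂ = max_ℓ ‖W_ℓ‖₂` for a tuple of matrices -/
def tupleSpec {m L : ℕ} (W : Fin L → Fin m → Fin m → ℝ) : ℝ := ⨆ ℓ, spec (W ℓ)

/-! ### The network -/

variable {𝔡 m d L : ℕ}

/-- `Wat W ℓ` is the weight matrix of layer `ℓ ∈ {1,…,L}` (identity outside this range). -/
def Wat (W : Fin L → Fin m → Fin m → ℝ) (ℓ : ℕ) : Fin m → Fin m → ℝ :=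
  if h : 1 ≤ ℓ ∧ ℓ ≤ L then W ⟨ℓ - 1, by omega⟩ else idMat m

/-- the forward (post-activation) vectors `h_ℓ`, `ℓ = 0,1,…,L` -/
def hseq (A : Fin m → Fin 𝔡 → ℝ) (W : Fin L → Fin m → Fin m → ℝ) (x : Fin 𝔡 → ℝ) :
    ℕ → Fin m → ℝ
  | 0 => relu (mulVec A x)
  | ℓ + 1 =>
      if ℓ + 1 ≤ L then relu (mulVec (Wat W (ℓ + 1)) (hseq A W x ℓ)) else hseq A W x ℓ

/-- the pre-activation vectors `g_ℓ`, `ℓ = 0,1,…,L` -/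
def gseq (A : Fin m → Fin 𝔡 → ℝ) (W : Fin L → Fin m → Fin m → ℝ) (x : Fin 𝔡 → ℝ) :
    ℕ → Fin m → ℝ
  | 0 => mulVec A x
  | ℓ + 1 => mulVec (Wat W (ℓ + 1)) (hseq A W x ℓ)

/-- `chainProd W Dfun a b = (D_b W_b) (D_{b-1} W_{b-1}) ⋯ (D_a W_a)` where `D_ℓ` is the
diagonal matrix with entries `Dfun ℓ`; it is the identity when `b < a`, and factors with
index outside `{1,…,L}` are skipped. -/
def chainProd (W : Fin L → Fin m → Fin m → ℝ) (Dfun : ℕ → Fin m → ℝ) (a : ℕ) :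
    ℕ → Fin m → Fin m → ℝ
  | 0 => idMat m
  | b + 1 =>
      if a ≤ b + 1 ∧ b + 1 ≤ L then
        mmul (mmul (diagMat (Dfun (b + 1))) (Wat W (b + 1))) (chainProd W Dfun a b)
      else chainProd W Dfun a b

/-- `prodDW A W x a b = D_b W_b D_{b-1} W_{b-1} ⋯ D_a W_a` with the sign matrices of input `x` -/
def prodDW (A : Fin m → Fin 𝔡 → ℝ) (W : Fin L → Fin m → Fin m → ℝ) (x : Fin 𝔡 → ℝ)
    (a b : ℕ) : Fin m → Fin m → ℝ :=
  chainProd W (fun ℓ => signOf (gseq A W x ℓ)) a b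

/-- `Back_ℓ = B D_L W_L ⋯ D_ℓ W_ℓ` (equal to `B` for `ℓ = L+1`) -/
def backMat (B : Fin d → Fin m → ℝ) (A : Fin m → Fin 𝔡 → ℝ)
    (W : Fin L → Fin m → Fin m → ℝ) (x : Fin 𝔡 → ℝ) (ℓ : ℕ) : Fin d → Fin m → ℝ :=
  mmul B (prodDW A W x ℓ L)

/-- formula gradient w.r.t. `W_ℓ` with an arbitrary (fake) loss vector `v`:
`D_ℓ (Back_{ℓ+1}ᵀ v) h_{ℓ-1}ᵀ` -/
def gradW (B : Fin d → Fin m → ℝ) (A : Fin m → Fin 𝔡 → ℝ)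
    (W : Fin L → Fin m → Fin m → ℝ) (x : Fin 𝔡 → ℝ) (v : Fin d → ℝ) (ℓ : ℕ) :
    Fin m → Fin m → ℝ :=
  outer (mulVec (diagMat (signOf (gseq A W x ℓ)))
      (mulVec (transpose (backMat B A W x (ℓ + 1))) v))
    (hseq A W x (ℓ - 1))

/-- loss vector `B h_L − y` -/
def lossVec (B : Fin d → Fin m → ℝ) (A : Fin m → Fin 𝔡 → ℝ)
    (W : Fin L → Fin m → Fin m → ℝ) (x : Fin 𝔡 → ℝ) (y : Fin d → ℝ) : Fin d → ℝ :=
  fun j => mulVec B (hseq A W x L) j - y j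

/-- per-sample ℓ₂ regression loss `F_i` -/
def objFi (B : Fin d → Fin m → ℝ) (A : Fin m → Fin 𝔡 → ℝ)
    (W : Fin L → Fin m → Fin m → ℝ) (x : Fin 𝔡 → ℝ) (y : Fin d → ℝ) : ℝ :=
  (1 / 2) * l2 (lossVec B A W x y) ^ 2

/-- total objective `F` -/
def objF {n : ℕ} (B : Fin d → Fin m → ℝ) (A : Fin m → Fin 𝔡 → ℝ)
    (W : Fin L → Fin m → Fin m → ℝ) (x : Fin n → Fin 𝔡 → ℝ)
    (y : Fin n → Fin d → ℝ) : ℝ :=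
  ∑ i, objFi B A W (x i) (y i)

/-- formula gradient of the total objective w.r.t. `W_ℓ` -/
def gradF {n : ℕ} (B : Fin d → Fin m → ℝ) (A : Fin m → Fin 𝔡 → ℝ)
    (W : Fin L → Fin m → Fin m → ℝ) (x : Fin n → Fin 𝔡 → ℝ)
    (y : Fin n → Fin d → ℝ) (ℓ : ℕ) : Fin m → Fin m → ℝ :=
  ∑ i, gradW B A W (x i) (lossVec B A W (x i) (y i)) ℓ

/-! ### Random initialization -/

/-- a `p × q` random matrix with i.i.d. `N(0, v)` entries -/
def gaussMat (p q : ℕ) (v : NNReal) : Measure (Fin p → Fin q → ℝ) :=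
  Measure.pi fun _ => Measure.pi fun _ => gaussianReal 0 v

/-- joint law of `(A, W)` at random initialization -/
def initAW (𝔡 m L : ℕ) :
    Measure ((Fin m → Fin 𝔡 → ℝ) × (Fin L → Fin m → Fin m → ℝ)) :=
  (gaussMat m 𝔡 (2 / m)).prod (Measure.pi fun _ : Fin L => gaussMat m m (2 / m))

/-- joint law of `(A, W, B)` at random initialization -/
def initMeasure (𝔡 m d L : ℕ) :
    Measure ((Fin m → Fin 𝔡 → ℝ) ×
      (Fin L → Fin m → Fin m → ℝ) × (Fin d → Fin m → ℝ)) :=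
  (gaussMat m 𝔡 (2 / m)).prod
    ((Measure.pi fun _ : Fin L => gaussMat m m (2 / m)).prod (gaussMat d m (1 / d)))

/-! ### Euclidean linear algebra on function vectors -/

lemma l2_eq_norm {p : ℕ} (v : Fin p → ℝ) : l2 v = ‖WithLp.toLp 2 v‖ := by
  simp [l2, EuclideanSpace.norm_eq]

lemma l2_nonneg {p : ℕ} (v : Fin p → ℝ) : 0 ≤ l2 v := Real.sqrt_nonneg _

lemma l2_sq {p : ℕ} (v : Fin p → ℝ) : l2 v ^ 2 = ∑ k, v k ^ 2 :=
  Real.sq_sqrt (Finset.sum_nonneg fun _ _ => sq_nonneg _)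

lemma l2_add_le {p : ℕ} (u v : Fin p → ℝ) : l2 (u + v) ≤ l2 u + l2 v := by
  simp only [l2_eq_norm, WithLp.toLp_add]; exact norm_add_le _ _

lemma l2_sub_le {p : ℕ} (u v : Fin p → ℝ) : l2 (u - v) ≤ l2 u + l2 v := by
  simp only [l2_eq_norm, WithLp.toLp_sub]; exact norm_sub_le _ _

lemma l2_sub_comm {p : ℕ} (u v : Fin p → ℝ) : l2 (u - v) = l2 (v - u) := by
  simp only [l2_eq_norm, WithLp.toLp_sub]; exact norm_sub_rev _ _

lemma l2_smul {p : ℕ} (c : ℝ) (v : Fin p → ℝ) : l2 (c • v) = |c| * l2 v := by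
  simp only [l2_eq_norm, WithLp.toLp_smul, norm_smul, Real.norm_eq_abs]

@[simp] lemma l2_zero {p : ℕ} : l2 (0 : Fin p → ℝ) = 0 := by simp [l2]

lemma l2_eq_zero {p : ℕ} {v : Fin p → ℝ} : l2 v = 0 ↔ v = 0 := by
  rw [l2_eq_norm, norm_eq_zero, WithLp.toLp_eq_zero]

lemma l2_sum_le {p : ℕ} {ι : Type*} (s : Finset ι) (f : ι → Fin p → ℝ) :
    l2 (∑ i ∈ s, f i) ≤ ∑ i ∈ s, l2 (f i) := by
  simp only [l2_eq_norm, WithLp.toLp_sum]; exact norm_sum_le _ _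

lemma l2_mono {p : ℕ} {u v : Fin p → ℝ} (h : ∀ k, |u k| ≤ |v k|) : l2 u ≤ l2 v :=
  Real.sqrt_le_sqrt (Finset.sum_le_sum fun k _ => sq_le_sq.2 (h k))

lemma abs_dot_le {p : ℕ} (u v : Fin p → ℝ) : |dot u v| ≤ l2 u * l2 v := by
  have h := abs_real_inner_le_norm (WithLp.toLp 2 v) (WithLp.toLp 2 u)
  simp only [l2_eq_norm]
  rw [mul_comm]
  refine le_trans (le_of_eq ?_) h
  simp [dot, PiLp.inner_apply]

lemma dot_self {p : ℕ} (u : Fin p → ℝ) : dot u u = l2 u ^ 2 := by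
  rw [l2_sq]; simp [dot, sq]

lemma dot_comm {p : ℕ} (u v : Fin p → ℝ) : dot u v = dot v u := by
  simp [dot, mul_comm]

lemma dot_add {p : ℕ} (u v w : Fin p → ℝ) : dot u (v + w) = dot u v + dot u w := by
  simp [dot, mul_add, Finset.sum_add_distrib]

lemma dot_sub {p : ℕ} (u v w : Fin p → ℝ) : dot u (v - w) = dot u v - dot u w := by
  simp [dot, mul_sub, Finset.sum_sub_distrib]

lemma dot_smul {p : ℕ} (c : ℝ) (u v : Fin p → ℝ) : dot u (c • v) = c * dot u v := by
  simp [dot, Finset.mul_sum, mul_left_comm]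

lemma dot_neg_left {p : ℕ} (u v : Fin p → ℝ) : dot (-u) v = - dot u v := by
  simp [dot]

lemma dot_sub_left {p : ℕ} (u v w : Fin p → ℝ) : dot (u - v) w = dot u w - dot v w := by
  simp [dot, sub_mul, Finset.sum_sub_distrib]

lemma dot_smul_left {p : ℕ} (c : ℝ) (u v : Fin p → ℝ) : dot (c • u) v = c * dot u v := by
  simp [dot, Finset.mul_sum, mul_assoc]

lemma l2_sub_sq {p : ℕ} (u v : Fin p → ℝ) :
    l2 (u - v) ^ 2 = l2 u ^ 2 - 2 * dot u v + l2 v ^ 2 := by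
  simp only [l2_sq, dot, Finset.mul_sum, ← Finset.sum_sub_distrib, ← Finset.sum_add_distrib,
    Pi.sub_apply]
  exact Finset.sum_congr rfl fun k _ => by ring

lemma mulVec_eq_dot {p q : ℕ} (M : Fin p → Fin q → ℝ) (v : Fin q → ℝ) (k : Fin p) :
    mulVec M v k = dot (M k) v := rfl

lemma mulVec_add {p q : ℕ} (M : Fin p → Fin q → ℝ) (u v : Fin q → ℝ) :
    mulVec M (u + v) = mulVec M u + mulVec M v := by
  ext k; simp [mulVec, mul_add, Finset.sum_add_distrib]

lemma mulVec_sub {p q : ℕ} (M : Fin p → Fin q → ℝ) (u v : Fin q → ℝ) :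
    mulVec M (u - v) = mulVec M u - mulVec M v := by
  ext k; simp [mulVec, mul_sub, Finset.sum_sub_distrib]

lemma mulVec_smul {p q : ℕ} (M : Fin p → Fin q → ℝ) (c : ℝ) (v : Fin q → ℝ) :
    mulVec M (c • v) = c • mulVec M v := by
  ext k; simp [mulVec, Finset.mul_sum, mul_left_comm]

@[simp] lemma mulVec_zero {p q : ℕ} (M : Fin p → Fin q → ℝ) :
    mulVec M (0 : Fin q → ℝ) = 0 := by
  ext k; simp [mulVec]

lemma mulVec_sum {p q : ℕ} {ι : Type*} (M : Fin p → Fin q → ℝ) (s : Finset ι)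
    (f : ι → Fin q → ℝ) : mulVec M (∑ i ∈ s, f i) = ∑ i ∈ s, mulVec M (f i) := by
  classical
  induction s using Finset.induction_on with
  | empty => simp
  | insert a s ha ih => rw [Finset.sum_insert ha, Finset.sum_insert ha, mulVec_add, ih]

lemma sub_mulVec {p q : ℕ} (M N : Fin p → Fin q → ℝ) (v : Fin q → ℝ) :
    mulVec (M - N) v = mulVec M v - mulVec N v := by
  ext k; simp [mulVec, sub_mul, Finset.sum_sub_distrib]

lemma mulVec_mmul {p q r : ℕ} (M : Fin p → Fin q → ℝ) (N : Fin q → Fin r → ℝ) (v : Fin r → ℝ) :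
    mulVec (mmul M N) v = mulVec M (mulVec N v) := by
  ext k
  simp only [mulVec, mmul, Finset.sum_mul, Finset.mul_sum]
  rw [Finset.sum_comm]
  exact Finset.sum_congr rfl fun _ _ => Finset.sum_congr rfl fun _ _ => by ring

@[simp] lemma mulVec_idMat {p : ℕ} (v : Fin p → ℝ) : mulVec (idMat p) v = v := by
  ext k; simp [mulVec, idMat]

lemma mulVec_diagMat {p : ℕ} (c v : Fin p → ℝ) : mulVec (diagMat c) v = c * v := by
  ext k; simp [mulVec, diagMat]

lemma l2_had_le {p : ℕ} (c v : Fin p → ℝ) (hc : ∀ k, |c k| ≤ 1) : l2 (c * v) ≤ l2 v :=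
  l2_mono fun k => by
    rw [Pi.mul_apply, abs_mul]; exact mul_le_of_le_one_left (abs_nonneg _) (hc k)

lemma signOf_abs_le {p : ℕ} (g : Fin p → ℝ) (k : Fin p) : |signOf g k| ≤ 1 := by
  unfold signOf; split_ifs <;> simp

lemma relu_eq {p : ℕ} (g : Fin p → ℝ) : relu g = signOf g * g := by
  ext k
  simp only [relu, signOf, Pi.mul_apply]
  split_ifs with h
  · simp [h]
  · simp [le_of_lt (not_le.1 h)]

lemma dot_mulVec_transpose {p q : ℕ} (M : Fin p → Fin q → ℝ) (u : Fin p → ℝ) (v : Fin q → ℝ) :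
    dot (mulVec (transpose M) u) v = dot u (mulVec M v) := by
  simp only [dot, mulVec, transpose, Finset.sum_mul, Finset.mul_sum]
  rw [Finset.sum_comm]
  exact Finset.sum_congr rfl fun _ _ => Finset.sum_congr rfl fun _ _ => by ring

lemma l2_mulVec_transpose_le {p q : ℕ} (M : Fin p → Fin q → ℝ) {K : ℝ} (hK : 0 ≤ K)
    (h : ∀ v, l2 (mulVec M v) ≤ K * l2 v) (u : Fin p → ℝ) :
    l2 (mulVec (transpose M) u) ≤ K * l2 u := by
  set w := mulVec (transpose M) u with hw
  by_cases h0 : l2 w = 0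
  · rw [h0]; exact mul_nonneg hK (l2_nonneg _)
  have hpos : 0 < l2 w := lt_of_le_of_ne (l2_nonneg _) (Ne.symm h0)
  have h1 : l2 w ^ 2 ≤ l2 u * (K * l2 w) := by
    rw [← dot_self]
    conv_lhs => rw [hw]
    rw [dot_mulVec_transpose]
    exact (le_abs_self _).trans ((abs_dot_le _ _).trans
      (mul_le_mul_of_nonneg_left (h _) (l2_nonneg _)))
  nlinarith

lemma abs_coord_le_l2 {p : ℕ} (v : Fin p → ℝ) (k : Fin p) : |v k| ≤ l2 v := by
  apply Real.le_sqrt_of_sq_le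
  rw [sq_abs]
  exact Finset.single_le_sum (f := fun k => v k ^ 2) (fun _ _ => sq_nonneg _) (Finset.mem_univ k)

lemma l2_mulVec_le_frob {p q : ℕ} (M : Fin p → Fin q → ℝ) (v : Fin q → ℝ) :
    l2 (mulVec M v) ≤ frob M * l2 v := by
  apply Real.sqrt_le_iff.2 ⟨mul_nonneg (Real.sqrt_nonneg _) (l2_nonneg _), ?_⟩
  rw [mul_pow, Real.sq_sqrt (Finset.sum_nonneg fun _ _ => Finset.sum_nonneg
    fun _ _ => sq_nonneg _), l2_sq, Finset.sum_mul]
  refine Finset.sum_le_sum fun k _ => ?_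
  exact Finset.sum_mul_sq_le_sq_mul_sq _ _ _

lemma l2_mulVec_le_spec {p q : ℕ} (M : Fin p → Fin q → ℝ) (v : Fin q → ℝ) :
    l2 (mulVec M v) ≤ spec M * l2 v := by
  by_cases h0 : l2 v = 0
  · rw [l2_eq_zero.1 h0]; simp
  have hpos : 0 < l2 v := lt_of_le_of_ne (l2_nonneg _) (Ne.symm h0)
  have hb : BddAbove {r | ∃ v : Fin q → ℝ, l2 v ≤ 1 ∧ r = l2 (mulVec M v)} := by
    refine ⟨frob M, ?_⟩
    rintro r ⟨w, hw, rfl⟩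
    refine (l2_mulVec_le_frob M w).trans ?_
    exact mul_le_of_le_one_right (Real.sqrt_nonneg _) hw
  have h1 : l2 (mulVec M ((l2 v)⁻¹ • v)) ≤ spec M := by
    refine le_csSup hb ⟨_, ?_, rfl⟩
    rw [l2_smul, abs_of_pos (inv_pos.2 hpos), inv_mul_cancel₀ h0]
  rw [mulVec_smul, l2_smul, abs_of_pos (inv_pos.2 hpos), inv_mul_le_iff₀ hpos] at h1
  linarith

lemma frob_sq {p q : ℕ} (M : Fin p → Fin q → ℝ) : frob M ^ 2 = ∑ k, l2 (M k) ^ 2 := by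
  rw [frob, Real.sq_sqrt (Finset.sum_nonneg fun _ _ => Finset.sum_nonneg
    fun _ _ => sq_nonneg _)]
  simp only [l2_sq]

lemma frob_outer_sq {p q : ℕ} (u : Fin p → ℝ) (v : Fin q → ℝ) :
    frob (outer u v) ^ 2 = l2 u ^ 2 * l2 v ^ 2 := by
  rw [frob_sq]
  simp only [l2_sq, outer, mul_pow, Finset.sum_mul, ← Finset.mul_sum]

lemma frob_sum_sq_le {p q n : ℕ} (M : Fin n → Fin p → Fin q → ℝ) :
    frob (∑ i, M i) ^ 2 ≤ n * ∑ i, frob (M i) ^ 2 := by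
  simp only [frob_sq, l2_sq, Finset.sum_apply]
  calc ∑ k, ∑ j, (∑ i, M i k j) ^ 2 ≤ ∑ k, ∑ j, n * ∑ i, M i k j ^ 2 := by
        refine Finset.sum_le_sum fun k _ => Finset.sum_le_sum fun j _ => ?_
        simpa using sq_sum_le_card_mul_sum_sq (s := Finset.univ) (f := fun i => M i k j)
    _ = n * ∑ i, ∑ k, ∑ j, M i k j ^ 2 := by
        simp only [← Finset.mul_sum]
        congr 1
        rw [Finset.sum_comm]
        refine (Finset.sum_congr rfl fun k _ => Finset.sum_comm).trans ?_
        rw [Finset.sum_comm]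
        exact Finset.sum_congr rfl fun k _ => Finset.sum_comm

/-! ### Gaussian row vectors -/

/-- The law of a vector with `q` i.i.d. `N(0, v)` coordinates, i.e. of one row of `gaussMat`. -/
def rowG (q : ℕ) (v : NNReal) : Measure (Fin q → ℝ) := Measure.pi fun _ => gaussianReal 0 v

instance (q : ℕ) (v : NNReal) : IsProbabilityMeasure (rowG q v) := by unfold rowG; infer_instance

instance (p q : ℕ) (v : NNReal) : IsProbabilityMeasure (gaussMat p q v) := by
  unfold gaussMat; infer_instance

instance (𝔡 m d L : ℕ) : IsProbabilityMeasure (initMeasure 𝔡 m d L) := by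
  unfold initMeasure; infer_instance

@[fun_prop]
lemma measurable_dot {α : Type*} [MeasurableSpace α] {q : ℕ} {f g : α → Fin q → ℝ}
    (hf : Measurable f) (hg : Measurable g) : Measurable fun a => dot (f a) (g a) := by
  unfold dot; fun_prop

@[fun_prop]
lemma measurable_l2 {α : Type*} [MeasurableSpace α] {q : ℕ} {f : α → Fin q → ℝ}
    (hf : Measurable f) : Measurable fun a => l2 (f a) := by
  unfold l2; fun_prop

@[fun_prop]
lemma measurable_mulVec {α : Type*} [MeasurableSpace α] {p q : ℕ} {M : α → Fin p → Fin q → ℝ}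
    {f : α → Fin q → ℝ} (hM : Measurable M) (hf : Measurable f) :
    Measurable fun a => mulVec (M a) (f a) := by
  unfold mulVec; fun_prop

lemma row_charFun (q : ℕ) (v : NNReal) (y : Fin q → ℝ) :
    ∫ w, Complex.exp (dot w y * Complex.I) ∂rowG q v
      = Complex.exp (-((v : ℝ) * l2 y ^ 2 / 2 : ℝ)) := by
  have h1 : ∀ w : Fin q → ℝ, Complex.exp (dot w y * Complex.I)
      = ∏ j, Complex.exp ((y j : ℂ) * (w j) * Complex.I) := by
    intro w
    rw [← Complex.exp_sum, ← Finset.sum_mul]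
    congr 2
    simp [dot, mul_comm]
  simp_rw [h1]
  rw [rowG, integral_fintype_prod_eq_prod (𝕜 := ℂ)
    (fun (j : Fin q) (t : ℝ) => Complex.exp ((y j : ℂ) * t * Complex.I))]
  have h2 : ∀ j, ∫ t, Complex.exp ((y j : ℂ) * t * Complex.I) ∂gaussianReal 0 v
      = Complex.exp (-((v : ℝ) * y j ^ 2 / 2 : ℝ)) := by
    intro j
    rw [← charFun_apply_real, charFun_gaussianReal]
    congr 1; push_cast; ring
  simp_rw [h2]
  rw [← Complex.exp_sum]
  congr 1
  rw [l2_sq]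
  push_cast
  rw [Finset.sum_neg_distrib, Finset.mul_sum, Finset.sum_div]

lemma charFun_map_dot (q : ℕ) (v : NNReal) (y : Fin q → ℝ) (t : ℝ) :
    charFun ((rowG q v).map fun w => dot w y) t
      = Complex.exp (-((v : ℝ) * l2 y ^ 2 * t ^ 2 / 2 : ℝ)) := by
  rw [charFun_apply_real, integral_map (by fun_prop) (by fun_prop)]
  have := row_charFun q v (t • y)
  simp only [dot_smul, l2_smul, mul_pow, sq_abs] at this
  push_cast at this ⊢
  rw [this]
  congr 1; ring

/-- `w ↦ ⟨w, y⟩` is a centred Gaussian with standard deviation `√v ‖y‖`. -/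
lemma row_map_dot (q : ℕ) (v : NNReal) (y : Fin q → ℝ) :
    (rowG q v).map (fun w => dot w y)
      = (gaussianReal 0 1).map fun s => Real.sqrt v * l2 y * s := by
  rw [gaussianReal_map_const_mul]
  apply Measure.ext_of_charFun
  ext t
  rw [charFun_map_dot, charFun_gaussianReal]
  congr 1
  push_cast
  have hs : ((Real.sqrt v : ℝ) : ℂ) ^ 2 = (v : ℝ) := by
    rw [← Complex.ofReal_pow, Real.sq_sqrt (NNReal.coe_nonneg v)]
  rw [mul_pow, hs]
  ring

/-- A linear image of the row law under a map with norm-preserving adjoint is the row law. -/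
lemma row_map_isom (q : ℕ) (v : NNReal) (f g : (Fin q → ℝ) → Fin q → ℝ) (hf : Measurable f)
    (hfg : ∀ w y, dot (f w) y = dot w (g y)) (hg : ∀ y, l2 (g y) = l2 y) :
    MeasurePreserving f (rowG q v) (rowG q v) := by
  refine ⟨hf, ?_⟩
  have : IsProbabilityMeasure ((rowG q v).map f) := Measure.isProbabilityMeasure_map hf.aemeasurable
  apply Measure.ext_of_charFunDual
  ext T
  have hT : ∀ w, T w = dot w (fun j => T (Pi.single j 1)) := by
    intro w
    conv_lhs => rw [← Finset.univ_sum_single w]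
    rw [map_sum]
    refine Finset.sum_congr rfl fun j _ => ?_
    have : (Pi.single j (w j) : Fin q → ℝ) = w j • Pi.single j 1 := by
      rw [← Pi.single_smul]; simp
    rw [this, map_smul]; simp
  rw [charFunDual_apply, charFunDual_apply, integral_map hf.aemeasurable (by fun_prop)]
  have e1 : (fun w => Complex.exp ((T (f w) : ℝ) * Complex.I))
      = fun w => Complex.exp (dot w (g fun j => T (Pi.single j 1)) * Complex.I) := by
    ext w; rw [hT (f w), hfg]
  have e2 : (fun w => Complex.exp ((T w : ℝ) * Complex.I))
      = fun w => Complex.exp (dot w (fun j => T (Pi.single j 1)) * Complex.I) := by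
    ext w; rw [hT w]
  rw [e1, e2, row_charFun, row_charFun, hg]

lemma row_neg (q : ℕ) (v : NNReal) :
    MeasurePreserving (fun w : Fin q → ℝ => -w) (rowG q v) (rowG q v) :=
  row_map_isom q v _ (fun y => -y) (by fun_prop) (fun w y => by simp [dot])
    (fun y => by simp [l2])

/-- Reflection in the hyperplane orthogonal to the unit vector `u`. -/
def reflectRow {q : ℕ} (u w : Fin q → ℝ) : Fin q → ℝ := w - (2 * dot w u) • u

lemma dot_reflectRow {q : ℕ} (u w y : Fin q → ℝ) :
    dot (reflectRow u w) y = dot w y - 2 * dot w u * dot u y := by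
  rw [reflectRow, dot_sub_left, dot_smul_left]

lemma row_reflect (q : ℕ) (v : NNReal) (u : Fin q → ℝ) (hu : l2 u = 1) :
    MeasurePreserving (reflectRow u) (rowG q v) (rowG q v) := by
  refine row_map_isom q v _ (reflectRow u) (by unfold reflectRow; fun_prop) (fun w y => ?_)
    (fun y => ?_)
  · rw [dot_reflectRow, dot_comm w (reflectRow u y), dot_reflectRow, dot_comm y w, dot_comm u w, dot_comm y u]; ring
  · rw [← sq_eq_sq₀ (l2_nonneg _) (l2_nonneg _), reflectRow, l2_sub_sq, dot_smul, l2_smul, hu,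
      mul_one, sq_abs]; ring

/-- Coordinates along orthogonal directions are independent Gaussians. -/
lemma row_map_pair (q : ℕ) (v : NNReal) (a b : Fin q → ℝ) (hab : dot a b = 0) :
    (rowG q v).map (fun w => (dot w a, dot w b))
      = ((gaussianReal 0 1).prod (gaussianReal 0 1)).map
          fun s => (Real.sqrt v * l2 a * s.1, Real.sqrt v * l2 b * s.2) := by
  have hind : IndepFun (fun w : Fin q → ℝ => dot w a) (fun w => dot w b) (rowG q v) := by
    rw [indepFun_iff_charFun_prod (by fun_prop) (by fun_prop)]
    intro t
    rw [charFun_map_dot, charFun_map_dot, charFun_apply, integral_map (by fun_prop) (by fun_prop)]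
    have := row_charFun q v (t.ofLp.1 • a + t.ofLp.2 • b)
    have h2 : l2 (t.ofLp.1 • a + t.ofLp.2 • b) ^ 2
        = t.ofLp.1 ^ 2 * l2 a ^ 2 + t.ofLp.2 ^ 2 * l2 b ^ 2 := by
      rw [← dot_self, dot_add, dot_smul, dot_smul, dot_comm _ a, dot_comm _ b, dot_add, dot_add,
        dot_smul, dot_smul, dot_smul, dot_smul, dot_comm b a, hab, dot_self, dot_self]; ring
    rw [h2] at this
    rw [← Complex.exp_add]
    convert this using 2
    · ext w
      simp [dot_add, dot_smul]
    · push_cast; ring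
  rw [(indepFun_iff_map_prod_eq_prod_map_map (by fun_prop) (by fun_prop)).1 hind,
    row_map_dot, row_map_dot, Measure.map_prod_map _ _ (by fun_prop) (by fun_prop)]
  rfl

/-! ### Chernoff bounds and facts about the standard normal law -/

/-- Exponential Markov inequality for a sum of independent terms, one per row. -/
lemma chernoff_pi {p : ℕ} {α : Type*} [MeasurableSpace α] (ν : Measure α) [IsProbabilityMeasure ν]
    (f : Fin p → α → ℝ) (hf : ∀ k, Measurable (f k)) (c : Fin p → ℝ)
    (hc : ∀ k, ∫⁻ w, ENNReal.ofReal (Real.exp (f k w)) ∂ν ≤ ENNReal.ofReal (Real.exp (c k)))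
    (T : ℝ) :
    (Measure.pi fun _ : Fin p => ν) {G | T ≤ ∑ k, f k (G k)}
      ≤ ENNReal.ofReal (Real.exp (∑ k, c k - T)) := by
  set P := (Measure.pi fun _ : Fin p => ν)
  have hm : ∀ k, Measurable fun w => ENNReal.ofReal (Real.exp (f k w)) := fun k => by
    have := hf k; fun_prop
  have hind := iIndepFun_pi (μ := fun _ : Fin p => ν)
    (X := fun k w => ENNReal.ofReal (Real.exp (f k w))) (fun k => (hm k).aemeasurable)
  have hprod := lintegral_prod_eq_prod_lintegral_of_indepFun Finset.univ _ hind
    (fun k => (hm k).comp (measurable_pi_apply k))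
  have hev : ∀ k, ∫⁻ G, ENNReal.ofReal (Real.exp (f k (G k))) ∂P
      = ∫⁻ w, ENNReal.ofReal (Real.exp (f k w)) ∂ν := fun k =>
    (measurePreserving_eval (fun _ : Fin p => ν) k).lintegral_comp (hm k)
  have h1 : ∫⁻ G, ENNReal.ofReal (Real.exp (∑ k, f k (G k))) ∂P
      ≤ ENNReal.ofReal (Real.exp (∑ k, c k)) := by
    calc ∫⁻ G, ENNReal.ofReal (Real.exp (∑ k, f k (G k))) ∂P
        = ∫⁻ G, ∏ k, ENNReal.ofReal (Real.exp (f k (G k))) ∂P := by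
          refine lintegral_congr fun G => ?_
          rw [Real.exp_sum, ENNReal.ofReal_prod_of_nonneg fun _ _ => (Real.exp_pos _).le]
      _ = ∏ k, ∫⁻ w, ENNReal.ofReal (Real.exp (f k w)) ∂ν := by
          rw [hprod]; exact Finset.prod_congr rfl fun k _ => hev k
      _ ≤ ∏ k, ENNReal.ofReal (Real.exp (c k)) := Finset.prod_le_prod' fun k _ => hc k
      _ = _ := by
          rw [Real.exp_sum, ENNReal.ofReal_prod_of_nonneg fun _ _ => (Real.exp_pos _).le]
  have hsub : {G : Fin p → α | T ≤ ∑ k, f k (G k)}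
      ⊆ {G | ENNReal.ofReal (Real.exp T) ≤ ENNReal.ofReal (Real.exp (∑ k, f k (G k)))} := by
    intro G hG
    exact ENNReal.ofReal_le_ofReal (Real.exp_le_exp.2 hG)
  have hpos : ENNReal.ofReal (Real.exp T) ≠ 0 := by
    simpa using Real.exp_pos T
  have hmk := mul_meas_ge_le_lintegral (μ := P)
    (f := fun G => ENNReal.ofReal (Real.exp (∑ k, f k (G k))))
    (by
      have : Measurable fun G : Fin p → α => ∑ k, f k (G k) :=
        Finset.measurable_sum _ fun k _ => (hf k).comp (measurable_pi_apply k)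
      fun_prop) (ENNReal.ofReal (Real.exp T))
  rw [Real.exp_sub, ENNReal.ofReal_div_of_pos (Real.exp_pos _),
    ENNReal.le_div_iff_mul_le (Or.inl hpos) (Or.inl ENNReal.ofReal_ne_top), mul_comm]
  exact (mul_le_mul_right (measure_mono hsub) _).trans (hmk.trans h1)

lemma exp_neg_le_quad {z : ℝ} (hz : 0 ≤ z) : Real.exp (-z) ≤ 1 - z + z ^ 2 / 2 := by
  have h1 := Real.quadratic_le_exp_of_nonneg hz
  have h2 : Real.exp (-z) * Real.exp z = 1 := by rw [← Real.exp_add]; simp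
  have h3 : 0 < Real.exp (-z) := Real.exp_pos _
  have h4 : Real.exp (-z) * (1 + z + z ^ 2 / 2) ≤ 1 := by
    calc _ ≤ Real.exp (-z) * Real.exp z := mul_le_mul_of_nonneg_left h1 h3.le
      _ = 1 := h2
  have h5 : 0 ≤ 1 - z + z ^ 2 / 2 := by nlinarith [sq_nonneg (z - 1)]
  have h6 : 0 < 1 + z + z ^ 2 / 2 := by positivity
  by_contra hcon
  push Not at hcon
  have : (1 - z + z ^ 2 / 2) * (1 + z + z ^ 2 / 2) < 1 :=
    lt_of_lt_of_le (mul_lt_mul_of_pos_right hcon h6) h4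
  nlinarith [sq_nonneg (z ^ 2)]

/-- The standard normal law. -/
abbrev stdN : Measure ℝ := gaussianReal 0 1

lemma stdN_exp_sq {l : ℝ} (h0 : 0 ≤ l) (h1 : l ≤ 1 / 5) :
    ∫⁻ s, ENNReal.ofReal (Real.exp (l * s ^ 2)) ∂stdN
      ≤ ENNReal.ofReal (Real.exp (l + 2 * l ^ 2)) := by
  rw [stdN, gaussianReal_of_var_ne_zero _ (by simp), lintegral_withDensity_eq_lintegral_mul _
    (measurable_gaussianPDF _ _) (by fun_prop)]
  have e : ∀ s : ℝ, (gaussianPDF 0 1 * fun s => ENNReal.ofReal (Real.exp (l * s ^ 2))) s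
      = ENNReal.ofReal ((Real.sqrt (2 * Real.pi))⁻¹ * Real.exp (-(1 / 2 - l) * s ^ 2)) := by
    intro s
    simp only [Pi.mul_apply, gaussianPDF, gaussianPDFReal]
    rw [← ENNReal.ofReal_mul (by positivity)]
    congr 1
    simp only [NNReal.coe_one, mul_one, sub_zero]
    rw [mul_assoc, ← Real.exp_add]
    congr 2; ring
  simp_rw [e]
  have hb : 0 < 1 / 2 - l := by linarith
  rw [← ofReal_integral_eq_lintegral_ofReal ((integrable_exp_neg_mul_sq hb).const_mul _)
    (Filter.Eventually.of_forall fun s => by positivity), integral_const_mul, integral_gaussian]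
  apply ENNReal.ofReal_le_ofReal
  rw [← Real.sqrt_inv, ← Real.sqrt_mul (by positivity)]
  apply Real.sqrt_le_iff.2 ⟨(Real.exp_pos _).le, ?_⟩
  have e2 : (2 * Real.pi)⁻¹ * (Real.pi / (1 / 2 - l)) = (1 - 2 * l)⁻¹ := by
    have := Real.pi_pos
    have : 1 - 2 * l ≠ 0 := by linarith
    field_simp
  rw [e2, ← Real.exp_nat_mul, inv_le_comm₀ (by linarith) (Real.exp_pos _), ← Real.exp_neg]
  have h3 : 0 ≤ 2 * l + (2 * l) ^ 2 := by positivity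
  have := exp_neg_le_quad h3
  have e3 : -(((2 : ℕ) : ℝ) * (l + 2 * l ^ 2)) = -(2 * l + (2 * l) ^ 2) := by push_cast; ring
  rw [e3]
  refine this.trans ?_
  have h5 : (1 + 2 * l) ^ 2 ≤ 2 := by nlinarith
  nlinarith [sq_nonneg (2 * l)]

lemma stdN_integrable_pow (k : ℕ) : Integrable (fun s : ℝ => s ^ k) stdN := by
  have := (memLp_id_gaussianReal' (μ := 0) (v := 1) (k : ENNReal) (by simp)).integrable_norm_pow'
  rw [← integrable_norm_iff (by fun_prop)]
  simpa using this

lemma stdN_sq : ∫ s, s ^ 2 ∂stdN = 1 := by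
  have := variance_id_gaussianReal (μ := 0) (v := 1)
  rw [variance_of_integral_eq_zero (by fun_prop) (by simp)] at this
  simpa using this

lemma stdN_four : ∫ s, s ^ 4 ∂stdN ≤ 70 := by
  have h := stdN_exp_sq (l := 1 / 5) (by norm_num) le_rfl
  have h2 : ∫⁻ s, ENNReal.ofReal (s ^ 4) ∂stdN ≤ ENNReal.ofReal 70 := by
    calc ∫⁻ s, ENNReal.ofReal (s ^ 4) ∂stdN
        ≤ ∫⁻ s, ENNReal.ofReal 50 * ENNReal.ofReal (Real.exp (1 / 5 * s ^ 2)) ∂stdN := by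
          refine lintegral_mono fun s => ?_
          simp only
          rw [← ENNReal.ofReal_mul (by norm_num)]
          apply ENNReal.ofReal_le_ofReal
          have := Real.quadratic_le_exp_of_nonneg (x := 1 / 5 * s ^ 2) (by positivity)
          nlinarith [sq_nonneg s]
      _ = ENNReal.ofReal 50 * ∫⁻ s, ENNReal.ofReal (Real.exp (1 / 5 * s ^ 2)) ∂stdN := by
          rw [lintegral_const_mul _ (by fun_prop)]
      _ ≤ ENNReal.ofReal 50 * ENNReal.ofReal (Real.exp (1 / 5 + 2 * (1 / 5) ^ 2)) := by gcongr
      _ ≤ ENNReal.ofReal 70 := by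
          rw [← ENNReal.ofReal_mul (by norm_num)]
          apply ENNReal.ofReal_le_ofReal
          have : Real.exp (1 / 5 + 2 * (1 / 5) ^ 2) ≤ 1 / (1 - (1 / 5 + 2 * (1 / 5) ^ 2)) :=
            Real.exp_bound_div_one_sub_of_interval (by norm_num) (by norm_num)
          norm_num at this ⊢
          linarith
  rw [← ofReal_integral_eq_lintegral_ofReal (stdN_integrable_pow 4)
    (Filter.Eventually.of_forall fun s => by positivity)] at h2
  exact (ENNReal.ofReal_le_ofReal_iff (by norm_num)).1 h2

lemma stdN_abs_cube_integrable : Integrable (fun s : ℝ => |s| ^ 3) stdN := by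
  have := (stdN_integrable_pow 3).norm
  simpa using this

lemma stdN_abs_cube : ∫ s, |s| ^ 3 ∂stdN ≤ 36 := by
  have h : ∫ s, |s| ^ 3 ∂stdN ≤ ∫ s : ℝ, (1 / 2 * s ^ 2 + 1 / 2 * s ^ 4) ∂stdN := by
    refine integral_mono stdN_abs_cube_integrable
      (((stdN_integrable_pow 2).const_mul _).add ((stdN_integrable_pow 4).const_mul _)) fun s => ?_
    simp only
    have : |s| ^ 3 = |s| * |s| ^ 2 := by ring
    have h4 : s ^ 4 = |s| ^ 2 * |s| ^ 2 := by rw [sq_abs]; ring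
    rw [← sq_abs s, h4, this]
    nlinarith [sq_nonneg (|s| * (|s| - 1))]
  rw [integral_add ((stdN_integrable_pow 2).const_mul _) ((stdN_integrable_pow 4).const_mul _),
    integral_const_mul, integral_const_mul, stdN_sq] at h
  linarith [stdN_four]

lemma stdN_small_le (A : ℝ) : stdN {s | |s| ≤ A} ≤ ENNReal.ofReal A := by
  rw [stdN, gaussianReal_apply _ (by simp)]
  have hset : {s : ℝ | |s| ≤ A} = Set.Icc (-A) A := by ext s; simp [abs_le]
  rw [hset]
  calc ∫⁻ s in Set.Icc (-A) A, gaussianPDF 0 1 s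
      ≤ ∫⁻ s in Set.Icc (-A) A, ENNReal.ofReal (1 / 2) := by
        refine lintegral_mono fun s => ENNReal.ofReal_le_ofReal ?_
        simp only [gaussianPDFReal, NNReal.coe_one, mul_one]
        have h1 : Real.exp (-(s - 0) ^ 2 / 2) ≤ 1 := Real.exp_le_one_iff.2 (by
          have := sq_nonneg (s - 0); linarith)
        have h2 : (Real.sqrt (2 * Real.pi))⁻¹ ≤ 1 / 2 := by
          rw [inv_le_comm₀ (by positivity) (by norm_num)]
          apply Real.le_sqrt_of_sq_le
          have := Real.pi_gt_three; norm_num; linarith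
        calc _ ≤ (1 / 2 : ℝ) * 1 := by gcongr
          _ = _ := by norm_num
    _ = ENNReal.ofReal A := by
        rw [setLIntegral_const, Real.volume_Icc, ← ENNReal.ofReal_mul (by norm_num)]
        congr 1; ring

lemma stdN_small_ge {A : ℝ} (hA : 0 ≤ A) (hA1 : A ≤ 1) :
    ENNReal.ofReal (A / 4) ≤ stdN {s | |s| ≤ A} := by
  rw [stdN, gaussianReal_apply _ (by simp)]
  have hset : {s : ℝ | |s| ≤ A} = Set.Icc (-A) A := by ext s; simp [abs_le]
  rw [hset]
  calc ENNReal.ofReal (A / 4) = ∫⁻ s in Set.Icc (-A) A, ENNReal.ofReal (1 / 8) := by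
        rw [setLIntegral_const, Real.volume_Icc, ← ENNReal.ofReal_mul (by norm_num)]
        congr 1; ring
    _ ≤ ∫⁻ s in Set.Icc (-A) A, gaussianPDF 0 1 s := by
        refine setLIntegral_mono (measurable_gaussianPDF _ _) fun s hs =>
          ENNReal.ofReal_le_ofReal ?_
        simp only [gaussianPDFReal, NNReal.coe_one, mul_one]
        have hs2 : s ^ 2 ≤ 1 := by
          have := hs.1; have := hs.2; nlinarith
        have h1 : 1 / 2 ≤ Real.exp (-(s - 0) ^ 2 / 2) := by
          have := Real.add_one_le_exp (-(s - 0) ^ 2 / 2)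
          rw [sub_zero] at *
          linarith
        have h2 : 1 / 4 ≤ (Real.sqrt (2 * Real.pi))⁻¹ := by
          rw [le_inv_comm₀ (by norm_num) (by positivity)]
          apply Real.sqrt_le_iff.2 ⟨by norm_num, ?_⟩
          have := Real.pi_lt_four; norm_num; linarith
        calc (1 / 8 : ℝ) = 1 / 4 * (1 / 2) := by norm_num
          _ ≤ _ := by gcongr

lemma stdN_large_ge : ENNReal.ofReal (1 / 2) ≤ stdN {s | 1 / 2 ≤ |s|} := by
  have h1 := stdN_small_le (1 / 2)
  have h2 : (1 : ENNReal) ≤ stdN {s | |s| ≤ 1 / 2} + stdN {s | 1 / 2 ≤ |s|} := by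
    rw [← measure_univ (μ := stdN)]
    refine (measure_mono ?_).trans (measure_union_le _ _)
    intro s _
    exact le_total |s| (1 / 2)
  have h3 : (1 : ENNReal) ≤ ENNReal.ofReal (1 / 2) + stdN {s | 1 / 2 ≤ |s|} :=
    h2.trans (by gcongr)
  have h4 : (1 : ENNReal) = ENNReal.ofReal (1 / 2) + ENNReal.ofReal (1 / 2) := by
    rw [← ENNReal.ofReal_add (by norm_num) (by norm_num)]; norm_num
  rw [h4] at h3
  exact (ENNReal.add_le_add_iff_left ENNReal.ofReal_ne_top).1 h3

/-! ### Concentration for one random layer -/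

lemma lintegral_row_dot (q : ℕ) (v : NNReal) (y : Fin q → ℝ) (f : ℝ → ENNReal)
    (hf : Measurable f) :
    ∫⁻ w, f (dot w y) ∂rowG q v = ∫⁻ s, f (Real.sqrt v * l2 y * s) ∂stdN := by
  rw [← lintegral_map (g := fun w : Fin q → ℝ => dot w y) hf (by fun_prop), row_map_dot,
    lintegral_map hf (by fun_prop)]

lemma integral_row_dot (q : ℕ) (v : NNReal) (y : Fin q → ℝ) (f : ℝ → ℝ) (hf : Measurable f) :
    ∫ w, f (dot w y) ∂rowG q v = ∫ s, f (Real.sqrt v * l2 y * s) ∂stdN := by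
  rw [← integral_map (φ := fun w : Fin q → ℝ => dot w y) (by fun_prop)
    hf.aestronglyMeasurable, row_map_dot,
    integral_map (by fun_prop) hf.aestronglyMeasurable]

lemma row_dot_pow_integrable (q : ℕ) (v : NNReal) (y : Fin q → ℝ) (k : ℕ) :
    Integrable (fun w => dot w y ^ k) (rowG q v) := by
  have h : Integrable (fun s : ℝ => s ^ k) ((rowG q v).map fun w => dot w y) := by
    rw [row_map_dot, integrable_map_measure (by fun_prop) (by fun_prop)]
    have := (stdN_integrable_pow k).const_mul ((Real.sqrt v * l2 y) ^ k)
    simpa [Function.comp_def, mul_pow] using this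
  exact (integrable_map_measure (f := fun w : Fin q → ℝ => dot w y) (g := fun s : ℝ => s ^ k)
    (by fun_prop) (by fun_prop)).1 h

lemma row_dot_sq (q : ℕ) (v : NNReal) (y : Fin q → ℝ) :
    ∫ w, dot w y ^ 2 ∂rowG q v = v * l2 y ^ 2 := by
  rw [integral_row_dot q v y (fun s => s ^ 2) (by fun_prop)]
  simp_rw [mul_pow]
  rw [integral_const_mul, stdN_sq, Real.sq_sqrt (NNReal.coe_nonneg v), mul_one]

lemma row_dot_four (q : ℕ) (v : NNReal) (y : Fin q → ℝ) :
    ∫ w, dot w y ^ 4 ∂rowG q v ≤ 70 * (v * l2 y ^ 2) ^ 2 := by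
  rw [integral_row_dot q v y (fun s => s ^ 4) (by fun_prop)]
  simp_rw [mul_pow]
  rw [integral_const_mul]
  have e : Real.sqrt v ^ 4 * l2 y ^ 4 = ((v : ℝ) * l2 y ^ 2) ^ 2 := by
    have : Real.sqrt v ^ 4 = (Real.sqrt v ^ 2) ^ 2 := by ring
    rw [this, Real.sq_sqrt (NNReal.coe_nonneg v)]; ring
  rw [e, mul_comm, ← mul_pow]
  exact mul_le_mul_of_nonneg_right stdN_four (sq_nonneg _)

lemma row_exp_sq (q : ℕ) (v : NNReal) (y : Fin q → ℝ) {l u : ℝ} (hu : u = l * (v * l2 y ^ 2))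
    (h0 : 0 ≤ u) (h1 : u ≤ 1 / 5) :
    ∫⁻ w, ENNReal.ofReal (Real.exp (l * dot w y ^ 2)) ∂rowG q v
      ≤ ENNReal.ofReal (Real.exp (u + 2 * u ^ 2)) := by
  rw [lintegral_row_dot q v y (fun s => ENNReal.ofReal (Real.exp (l * s ^ 2))) (by fun_prop)]
  have e : ∀ s : ℝ, l * (Real.sqrt v * l2 y * s) ^ 2 = u * s ^ 2 := by
    intro s
    rw [hu, mul_pow, mul_pow, Real.sq_sqrt (NNReal.coe_nonneg v)]; ring
  simp_rw [e]
  exact stdN_exp_sq h0 h1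

lemma row_hyperplane_null (q : ℕ) (v : NNReal) (hv : v ≠ 0) (h : Fin q → ℝ) (hh : h ≠ 0) :
    rowG q v {w | dot w h = 0} = 0 := by
  have h1 : rowG q v {w | dot w h = 0} = (rowG q v).map (fun w => dot w h) {0} := by
    rw [Measure.map_apply (by fun_prop) (measurableSet_singleton _)]; rfl
  have hpos : Real.sqrt v * l2 h ≠ 0 := by
    refine mul_ne_zero ?_ (fun h0 => hh (l2_eq_zero.1 h0))
    rw [Real.sqrt_ne_zero (NNReal.coe_nonneg v)]
    exact_mod_cast hv
  rw [h1, row_map_dot, Measure.map_apply (by fun_prop) (measurableSet_singleton _)]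
  have h2 : (fun s => Real.sqrt v * l2 h * s) ⁻¹' {0} = {0} := by
    ext s
    simp only [Set.mem_preimage, Set.mem_singleton_iff, mul_eq_zero]
    constructor
    · rintro (h3 | h3)
      · exact absurd (mul_eq_zero.2 h3) hpos
      · exact h3
    · intro h3; exact Or.inr h3
  rw [h2]
  have := nullSingletonClass_gaussianReal (μ := 0) (v := 1) (by simp)
  exact measure_singleton 0

/-- Half of the rows are cut by the sign of an independent functional, so the moment generating
function of the truncated square is the average of `1` and the full one. -/
lemma row_exp_trunc_sq (q : ℕ) (v : NNReal) (hv : v ≠ 0) (h y : Fin q → ℝ) (hh : h ≠ 0)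
    {l u : ℝ} (hu : u = l * (v * l2 y ^ 2)) (h0 : 0 ≤ u) (h1 : u ≤ 1 / 5) :
    ∫⁻ w, ENNReal.ofReal (Real.exp (l * ((if 0 ≤ dot w h then 1 else 0) * dot w y) ^ 2))
        ∂rowG q v
      ≤ ENNReal.ofReal (Real.exp (u / 2 + 1.3 * u ^ 2)) := by
  set Φ : (Fin q → ℝ) → ENNReal := fun w =>
    ENNReal.ofReal (Real.exp (l * ((if 0 ≤ dot w h then 1 else 0) * dot w y) ^ 2)) with hΦ
  have hΦm : Measurable Φ := by
    have : Measurable fun w : Fin q → ℝ => (if 0 ≤ dot w h then (1 : ℝ) else 0) :=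
      Measurable.ite (measurableSet_le measurable_const (by fun_prop)) measurable_const
        measurable_const
    fun_prop
  have hneg : ∫⁻ w, Φ (-w) ∂rowG q v = ∫⁻ w, Φ w ∂rowG q v :=
    (row_neg q v).lintegral_comp hΦm
  have hae : ∀ᵐ w ∂rowG q v, Φ w + Φ (-w) ≤ 1 + ENNReal.ofReal (Real.exp (l * dot w y ^ 2)) := by
    have hnull : ∀ᵐ w ∂rowG q v, dot w h ≠ 0 := by
      rw [ae_iff]; simpa using row_hyperplane_null q v hv h hh
    filter_upwards [hnull] with w hw
    simp only [hΦ, dot_neg_left]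
    rcases lt_or_gt_of_ne hw with hlt | hgt
    · rw [if_neg (by linarith), if_pos (by linarith)]
      simp
    · rw [if_pos hgt.le, if_neg (by linarith)]
      simp [add_comm]
  have h2 : 2 * ∫⁻ w, Φ w ∂rowG q v ≤ 1 + ENNReal.ofReal (Real.exp (u + 2 * u ^ 2)) := by
    calc 2 * ∫⁻ w, Φ w ∂rowG q v = ∫⁻ w, (Φ w + Φ (-w)) ∂rowG q v := by
          rw [lintegral_add_left hΦm, hneg, two_mul]
      _ ≤ ∫⁻ w, (1 + ENNReal.ofReal (Real.exp (l * dot w y ^ 2))) ∂rowG q v := lintegral_mono_ae hae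
      _ = 1 + ∫⁻ w, ENNReal.ofReal (Real.exp (l * dot w y ^ 2)) ∂rowG q v := by
          rw [lintegral_add_left measurable_const]; simp
      _ ≤ _ := by gcongr; exact row_exp_sq q v y hu h0 h1
  have h3 : 1 + Real.exp (u + 2 * u ^ 2) ≤ 2 * Real.exp (u / 2 + 1.3 * u ^ 2) := by
    set z := u + 2 * u ^ 2 with hz
    have hc := Real.cosh_le_exp_half_sq (z / 2)
    rw [Real.cosh_eq] at hc
    have e1 : Real.exp z = Real.exp (z / 2) * Real.exp (z / 2) := by rw [← Real.exp_add]; ring_nf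
    have e2 : Real.exp (z / 2) * Real.exp (-(z / 2)) = 1 := by rw [← Real.exp_add]; simp
    have hp : 0 < Real.exp (z / 2) := Real.exp_pos _
    have e3 : 1 + Real.exp z = 2 * (Real.exp (z / 2)
        * ((Real.exp (z / 2) + Real.exp (-(z / 2))) / 2)) := by
      rw [e1]; linear_combination (-1 : ℝ) * e2
    rw [e3]
    have : Real.exp (z / 2) * ((Real.exp (z / 2) + Real.exp (-(z / 2))) / 2)
        ≤ Real.exp (u / 2 + 1.3 * u ^ 2) := by
      refine (mul_le_mul_of_nonneg_left hc hp.le).trans ?_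
      rw [← Real.exp_add]
      apply Real.exp_le_exp.2
      have : z ≤ 1.4 * u := by rw [hz]; nlinarith
      have hz0 : 0 ≤ z := by positivity
      have : z ^ 2 ≤ (1.4 * u) ^ 2 := by gcongr
      nlinarith
    linarith
  have h4 : 2 * ∫⁻ w, Φ w ∂rowG q v ≤ 2 * ENNReal.ofReal (Real.exp (u / 2 + 1.3 * u ^ 2)) := by
    refine h2.trans ?_
    have e : (2 : ENNReal) = ENNReal.ofReal 2 := by simp
    rw [← ENNReal.ofReal_one, ← ENNReal.ofReal_add (by norm_num) (Real.exp_pos _).le, e,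
      ← ENNReal.ofReal_mul (by norm_num)]
    exact ENNReal.ofReal_le_ofReal h3
  exact (ENNReal.mul_le_mul_iff_right (by simp) (by simp)).1 h4

lemma layer_upper {m q : ℕ} (hm : 0 < m) (h y : Fin q → ℝ) (hh : h ≠ 0) {ε : ℝ} (h0 : 0 ≤ ε)
    (h1 : ε ≤ 1) :
    gaussMat m q (2 / m) {G | (1 + ε) * l2 y ^ 2 < l2 (signOf (mulVec G h) * mulVec G y) ^ 2}
      ≤ ENNReal.ofReal (Real.exp (-(m * ε ^ 2 / 30))) := by
  by_cases hy : y = 0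
  · have : {G : Fin m → Fin q → ℝ |
        (1 + ε) * l2 y ^ 2 < l2 (signOf (mulVec G h) * mulVec G y) ^ 2} = ∅ := by
      ext G; simp [hy, l2]
    rw [this]; simp
  have hy0 : 0 < l2 y := lt_of_le_of_ne (l2_nonneg _) fun h => hy (l2_eq_zero.1 h.symm)
  have hm' : (0 : ℝ) < m := by exact_mod_cast hm
  have hvc : ((2 / m : NNReal) : ℝ) = 2 / m := by push_cast; rfl
  have hv : (2 / m : NNReal) ≠ 0 := by
    intro h; have := congrArg NNReal.toReal h; rw [hvc] at this; simp at this; omega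
  set u := ε / 6 with hu
  set l := u / (2 / m * l2 y ^ 2) with hl
  have hl0 : 0 ≤ l := by positivity
  have hlu : u = l * (((2 / m : NNReal) : ℝ) * l2 y ^ 2) := by
    rw [hvc, hl]; field_simp
  have hch := chernoff_pi (p := m) (rowG q (2 / m))
    (fun _ w => l * ((if 0 ≤ dot w h then 1 else 0) * dot w y) ^ 2)
    (fun _ => by
      have : Measurable fun w : Fin q → ℝ => (if 0 ≤ dot w h then (1 : ℝ) else 0) :=
        Measurable.ite (measurableSet_le measurable_const (by fun_prop)) measurable_const
          measurable_const
      fun_prop)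
    (fun _ => u / 2 + 1.3 * u ^ 2)
    (fun _ => row_exp_trunc_sq q _ hv h y hh hlu (by positivity) (by rw [hu]; linarith))
    (l * ((1 + ε) * l2 y ^ 2))
  refine (measure_mono ?_).trans (hch.trans (ENNReal.ofReal_le_ofReal (Real.exp_le_exp.2 ?_)))
  · intro G hG
    simp only [Set.mem_ofPred_eq] at hG ⊢
    rw [← Finset.mul_sum]
    refine mul_le_mul_of_nonneg_left ?_ hl0
    rw [l2_sq (signOf _ * _)] at hG
    exact hG.le
  · have e : l * ((1 + ε) * l2 y ^ 2) = u * (1 + ε) * m / 2 := by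
      rw [hl]; field_simp
    rw [e]
    simp only [Finset.sum_const, Finset.card_univ, Fintype.card_fin, nsmul_eq_mul]
    rw [hu]
    nlinarith [mul_nonneg hm'.le (sq_nonneg ε)]

lemma layer_rows {p q : ℕ} (v : NNReal) (hv : v ≠ 0) (S : Finset (Fin p)) (y : Fin q → ℝ) {t : ℝ}
    (ht : 4 * (S.card : ℝ) ≤ t) :
    gaussMat p q v {G | t * (v * l2 y ^ 2) < ∑ k ∈ S, mulVec G y k ^ 2}
      ≤ ENNReal.ofReal (Real.exp (-(t / 8))) := by
  by_cases hy : y = 0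
  · have : {G : Fin p → Fin q → ℝ | t * (v * l2 y ^ 2) < ∑ k ∈ S, mulVec G y k ^ 2} = ∅ := by
      ext G; simp [hy, l2, mulVec]
    rw [this]; simp
  have hy0 : 0 < l2 y := lt_of_le_of_ne (l2_nonneg _) fun h => hy (l2_eq_zero.1 h.symm)
  have hv0 : (0 : ℝ) < v := by exact_mod_cast pos_iff_ne_zero.2 hv
  set l := (1 / 5) / ((v : ℝ) * l2 y ^ 2) with hl
  have hl0 : 0 ≤ l := by positivity
  have hlu : (1 / 5 : ℝ) = l * ((v : ℝ) * l2 y ^ 2) := by rw [hl]; field_simp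
  classical
  have hch := chernoff_pi (p := p) (rowG q v)
    (fun k w => if k ∈ S then l * dot w y ^ 2 else 0)
    (fun k => by split_ifs <;> fun_prop)
    (fun k => if k ∈ S then 1 / 5 + 2 * (1 / 5) ^ 2 else 0)
    (fun k => by
      split_ifs with hk
      · exact row_exp_sq q v y hlu (by norm_num) le_rfl
      · simp)
    (l * (t * (v * l2 y ^ 2)))
  refine (measure_mono ?_).trans (hch.trans (ENNReal.ofReal_le_ofReal (Real.exp_le_exp.2 ?_)))
  · intro G hG
    simp only [Set.mem_ofPred_eq] at hG ⊢
    rw [Finset.sum_ite_mem, Finset.univ_inter, ← Finset.mul_sum]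
    exact mul_le_mul_of_nonneg_left hG.le hl0
  · have e : l * (t * (v * l2 y ^ 2)) = t / 5 := by
      rw [mul_left_comm, ← hlu]; ring
    rw [e, Finset.sum_ite_mem, Finset.univ_inter]
    simp only [Finset.sum_const, nsmul_eq_mul]
    nlinarith

/-! ### Lower bounds for the distance of two ReLU images -/

/-- `reluGap x y` is `(x - y)²` when `x, y` have the same sign and `x² + y²` otherwise; it is the
sum of `(φ(x) - φ(y))²` and its value at `(-x, -y)`. -/
def reluGap (x y : ℝ) : ℝ := x ^ 2 + y ^ 2 - 2 * max (x * y) 0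

lemma reluGap_eq (x y : ℝ) :
    (max x 0 - max y 0) ^ 2 + (max (-x) 0 - max (-y) 0) ^ 2 = reluGap x y := by
  unfold reluGap
  rcases le_total 0 x with hx | hx <;> rcases le_total 0 y with hy | hy
  · rw [max_eq_left hx, max_eq_left hy, max_eq_right (by linarith : -x ≤ 0),
      max_eq_right (by linarith : -y ≤ 0), max_eq_left (mul_nonneg hx hy)]; ring
  · rw [max_eq_left hx, max_eq_right hy, max_eq_right (by linarith : -x ≤ 0),
      max_eq_left (by linarith : 0 ≤ -y),
      max_eq_right (mul_nonpos_of_nonneg_of_nonpos hx hy)]; ring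
  · rw [max_eq_right hx, max_eq_left hy, max_eq_left (by linarith : 0 ≤ -x),
      max_eq_right (by linarith : -y ≤ 0),
      max_eq_right (mul_nonpos_of_nonpos_of_nonneg hx hy)]; ring
  · rw [max_eq_right hx, max_eq_right hy, max_eq_left (by linarith : 0 ≤ -x),
      max_eq_left (by linarith : 0 ≤ -y),
      max_eq_left (mul_nonneg_of_nonpos_of_nonpos hx hy)]; ring

lemma reluGap_nonneg (x y : ℝ) : 0 ≤ reluGap x y := by
  rw [← reluGap_eq]; positivity

lemma reluGap_le (x y : ℝ) : reluGap x y ≤ (x - y) ^ 2 := by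
  unfold reluGap
  have := le_max_left (x * y) 0
  nlinarith

lemma reluGap_flip (b y z : ℝ) :
    4 / 3 * z ^ 2 ≤ reluGap (b * y + z) y + reluGap (b * y - z) y := by
  unfold reluGap
  have key : ∀ c : ℝ, 2 * c ^ 2 + 3 / 2 * y ^ 2 - 2 * c * y ≥ 4 / 3 * c ^ 2 := fun c => by
    nlinarith [sq_nonneg (2 * c - 3 * y)]
  rcases le_total 0 ((b * y + z) * y) with h1 | h1 <;>
    rcases le_total 0 ((b * y - z) * y) with h2 | h2 <;>
    simp only [max_eq_left, max_eq_right, h1, h2]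
  · nlinarith [sq_nonneg ((b - 1) * y), sq_nonneg z]
  · nlinarith [key z, sq_nonneg (((b - 1) * y + z) + (b * y - z))]
  · nlinarith [key (-z), sq_nonneg (((b - 1) * y - z) + (b * y + z))]
  · nlinarith [sq_nonneg (b * y), sq_nonneg z, sq_nonneg y]

@[fun_prop]
lemma measurable_reluGap {α : Type*} [MeasurableSpace α] {f g : α → ℝ} (hf : Measurable f)
    (hg : Measurable g) : Measurable fun a => reluGap (f a) (g a) := by
  unfold reluGap; fun_prop

lemma reluGap_integrable (q : ℕ) (v : NNReal) (p r : Fin q → ℝ) :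
    Integrable (fun w => reluGap (dot w p) (dot w r)) (rowG q v) := by
  refine (row_dot_pow_integrable q v (p - r) 2).mono'
    (measurable_reluGap (by fun_prop) (by fun_prop)).aestronglyMeasurable
    (Filter.Eventually.of_forall fun w => ?_)
  rw [Real.norm_eq_abs, abs_of_nonneg (reluGap_nonneg _ _), dot_sub]
  exact reluGap_le _ _

lemma integral_relu_diff (q : ℕ) (v : NNReal) (p r : Fin q → ℝ) :
    Integrable (fun w => (max (dot w p) 0 - max (dot w r) 0) ^ 2) (rowG q v) ∧
    2 * ∫ w, (max (dot w p) 0 - max (dot w r) 0) ^ 2 ∂rowG q v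
      = ∫ w, reluGap (dot w p) (dot w r) ∂rowG q v := by
  set X : (Fin q → ℝ) → ℝ := fun w => (max (dot w p) 0 - max (dot w r) 0) ^ 2 with hX
  have hXm : Measurable X := by fun_prop
  have hle : ∀ w, X w + X (-w) = reluGap (dot w p) (dot w r) := by
    intro w; simp only [hX, dot_neg_left]; exact reluGap_eq _ _
  have hInt : Integrable X (rowG q v) := by
    refine (reluGap_integrable q v p r).mono' hXm.aestronglyMeasurable
      (Filter.Eventually.of_forall fun w => ?_)
    rw [Real.norm_eq_abs, abs_of_nonneg (sq_nonneg _), ← hle]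
    have : 0 ≤ X (-w) := sq_nonneg _
    linarith
  refine ⟨hInt, ?_⟩
  have hneg : ∫ w, X (-w) ∂rowG q v = ∫ w, X w ∂rowG q v := by
    have := integral_map (μ := rowG q v) (φ := fun w : Fin q → ℝ => -w) (by fun_prop)
      (f := X) hXm.aestronglyMeasurable
    rw [(row_neg q v).map_eq] at this
    exact this.symm
  have hInt2 : Integrable (fun w => X (-w)) (rowG q v) :=
    (row_neg q v).integrable_comp_of_integrable hInt
  rw [two_mul]
  nth_rw 2 [← hneg]
  rw [← integral_add hInt hInt2]
  exact integral_congr_ae (Filter.Eventually.of_forall hle)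

lemma row_exp_neg_relu_diff (q : ℕ) (v : NNReal) (p r : Fin q → ℝ) {K l : ℝ} (hl : 0 ≤ l)
    (hK : K * v ≤ ∫ w, reluGap (dot w p) (dot w r) ∂rowG q v) :
    ∫⁻ w, ENNReal.ofReal (Real.exp (-(l * (max (dot w p) 0 - max (dot w r) 0) ^ 2))) ∂rowG q v
      ≤ ENNReal.ofReal (Real.exp (-(l * K * v / 2) + 35 * (l * (v * l2 (p - r) ^ 2)) ^ 2)) := by
  obtain ⟨hInt, heq⟩ := integral_relu_diff q v p r
  set X : (Fin q → ℝ) → ℝ := fun w => (max (dot w p) 0 - max (dot w r) 0) ^ 2 with hX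
  have hX0 : ∀ w, 0 ≤ X w := fun w => sq_nonneg _
  have hXm : Measurable X := by fun_prop
  have hXle : ∀ w, X w ≤ dot w (p - r) ^ 2 := by
    intro w
    refine le_trans ?_ ((reluGap_le (dot w p) (dot w r)).trans_eq (by rw [dot_sub]))
    rw [← reluGap_eq]
    have : 0 ≤ (max (-dot w p) 0 - max (-dot w r) 0) ^ 2 := sq_nonneg _
    simp only [hX]; linarith
  have h4 := row_dot_pow_integrable q v (p - r) 4
  have hbd : ∀ w, Real.exp (-(l * X w)) ≤ 1 - l * X w + l ^ 2 / 2 * dot w (p - r) ^ 4 := by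
    intro w
    refine (exp_neg_le_quad (mul_nonneg hl (hX0 w))).trans ?_
    have : X w ^ 2 ≤ (dot w (p - r) ^ 2) ^ 2 := pow_le_pow_left₀ (hX0 w) (hXle w) 2
    nlinarith [mul_le_mul_of_nonneg_left this (sq_nonneg l)]
  have hei : Integrable (fun w => Real.exp (-(l * X w))) (rowG q v) := by
    refine (integrable_const (1 : ℝ)).mono' (by fun_prop) (Filter.Eventually.of_forall fun w => ?_)
    rw [Real.norm_eq_abs, abs_of_pos (Real.exp_pos _)]
    exact Real.exp_le_one_iff.2 (by have := mul_nonneg hl (hX0 w); linarith)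
  rw [← ofReal_integral_eq_lintegral_ofReal hei
    (Filter.Eventually.of_forall fun w => (Real.exp_pos _).le)]
  apply ENNReal.ofReal_le_ofReal
  have hint1 : Integrable (fun w => 1 - l * X w) (rowG q v) :=
    (integrable_const _).sub (hInt.const_mul _)
  have h5 : ∫ w, Real.exp (-(l * X w)) ∂rowG q v
      ≤ 1 - l * ∫ w, X w ∂rowG q v + l ^ 2 / 2 * ∫ w, dot w (p - r) ^ 4 ∂rowG q v := by
    refine (integral_mono hei (hint1.add (h4.const_mul (l ^ 2 / 2))) hbd).trans_eq ?_
    rw [integral_add' hint1 (h4.const_mul _), integral_sub (integrable_const _)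
      (hInt.const_mul _), integral_const_mul, integral_const_mul]
    simp
  refine h5.trans ?_
  refine le_trans ?_ (Real.add_one_le_exp _)
  have h6 := row_dot_four q v (p - r)
  have h7 : l ^ 2 / 2 * ∫ w, dot w (p - r) ^ 4 ∂rowG q v
      ≤ l ^ 2 / 2 * (70 * (v * l2 (p - r) ^ 2) ^ 2) :=
    mul_le_mul_of_nonneg_left h6 (by positivity)
  have h8 : l * K * v / 2 ≤ l * ∫ w, X w ∂rowG q v := by
    have : K * v / 2 ≤ ∫ w, X w ∂rowG q v := by linarith
    calc l * K * v / 2 = l * (K * v / 2) := by ring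
      _ ≤ _ := mul_le_mul_of_nonneg_left this hl
  nlinarith

/-- Lower tail of `‖φ(Gp) - φ(Gr)‖²` around (a lower bound `K` of) its mean. -/
lemma layer_lower {m q : ℕ} (hm : 0 < m) (p r : Fin q → ℝ) {K ε : ℝ} (hε : 0 ≤ ε)
    (hK : K * ((2 / m : NNReal) : ℝ) ≤ ∫ w, reluGap (dot w p) (dot w r) ∂rowG q (2 / m)) :
    gaussMat m q (2 / m)
        {G | l2 (relu (mulVec G p) - relu (mulVec G r)) ^ 2 < K - ε * l2 (p - r) ^ 2}
      ≤ ENNReal.ofReal (Real.exp (-(m * ε ^ 2 / 560))) := by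
  have hm' : (0 : ℝ) < m := by exact_mod_cast hm
  have hvc : ((2 / m : NNReal) : ℝ) = 2 / m := by push_cast; rfl
  by_cases hpr : l2 (p - r) = 0
  · have hp : p = r := by rwa [l2_eq_zero, sub_eq_zero] at hpr
    have hK0 : K ≤ 0 := by
      have : ∀ w : Fin q → ℝ, reluGap (dot w p) (dot w r) = 0 := by
        intro w
        refine le_antisymm ((reluGap_le _ _).trans_eq (by rw [hp]; ring)) (reluGap_nonneg _ _)
      simp_rw [this] at hK
      rw [hvc, integral_zero] at hK
      by_contra hcon
      push Not at hcon
      have : 0 < K * (2 / m) := by positivity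
      linarith
    have : {G : Fin m → Fin q → ℝ | l2 (relu (mulVec G p) - relu (mulVec G r)) ^ 2
        < K - ε * l2 (p - r) ^ 2} = ∅ := by
      ext G
      simp only [hpr, Set.mem_ofPred_eq, Set.mem_empty_iff_false, iff_false, not_lt]
      have := sq_nonneg (l2 (relu (mulVec G p) - relu (mulVec G r)))
      nlinarith
    rw [this]; simp
  have hR : 0 < l2 (p - r) := lt_of_le_of_ne (l2_nonneg _) (Ne.symm hpr)
  set l := m * ε / (280 * l2 (p - r) ^ 2) with hl
  have hl0 : 0 ≤ l := by positivity
  have hch := chernoff_pi (p := m) (rowG q (2 / m))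
    (fun _ w => -(l * (max (dot w p) 0 - max (dot w r) 0) ^ 2))
    (fun _ => by fun_prop) _ (fun _ => row_exp_neg_relu_diff q _ p r hl0 hK)
    (-(l * (K - ε * l2 (p - r) ^ 2)))
  refine (measure_mono ?_).trans (hch.trans (ENNReal.ofReal_le_ofReal (Real.exp_le_exp.2 ?_)))
  · intro G hG
    simp only [Set.mem_ofPred_eq] at hG ⊢
    rw [Finset.sum_neg_distrib, neg_le_neg_iff, ← Finset.mul_sum]
    refine mul_le_mul_of_nonneg_left ?_ hl0
    rw [l2_sq] at hG
    exact hG.le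
  · simp only [Finset.sum_const, Finset.card_univ, Fintype.card_fin, nsmul_eq_mul]
    rw [hvc]
    have e1 : l * (2 / m * l2 (p - r) ^ 2) = ε / 140 := by rw [hl]; field_simp; ring
    have e2 : (m : ℝ) * (l * K * (2 / m) / 2) = l * K := by field_simp
    have e3 : l * (ε * l2 (p - r) ^ 2) = m * ε ^ 2 / 280 := by rw [hl]; field_simp
    rw [e1]
    have : (m : ℝ) * (-(l * K * (2 / m) / 2) + 35 * (ε / 140) ^ 2)
        - -(l * (K - ε * l2 (p - r) ^ 2)) = 35 * m * (ε / 140) ^ 2 - m * ε ^ 2 / 280 := by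
      linear_combination -e2 - e3
    rw [this]
    apply le_of_eq; ring

lemma reluGap_integral_zero (q : ℕ) (v : NNReal) (p : Fin q → ℝ) :
    l2 p ^ 2 * v ≤ ∫ w, reluGap (dot w p) (dot w 0) ∂rowG q v := by
  have : ∀ w : Fin q → ℝ, reluGap (dot w p) (dot w 0) = dot w p ^ 2 := by
    intro w; simp [reluGap, dot]
  simp_rw [this]
  rw [row_dot_sq, mul_comm]

/-- Averaging over the reflection that flips the component orthogonal to `r`. -/
lemma reluGap_integral_coarse (q : ℕ) (v : NNReal) (r w' : Fin q → ℝ) (b : ℝ)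
    (hort : dot r w' = 0) :
    2 / 3 * l2 w' ^ 2 * v ≤ ∫ w, reluGap (dot w (b • r + w')) (dot w r) ∂rowG q v := by
  by_cases h0 : l2 w' = 0
  · rw [h0]; simp only [ne_eq, OfNat.ofNat_ne_zero, not_false_eq_true, zero_pow, mul_zero, zero_mul]
    exact integral_nonneg fun w => reluGap_nonneg _ _
  set u := (l2 w')⁻¹ • w' with hu
  have hu1 : l2 u = 1 := by
    rw [hu, l2_smul, abs_of_nonneg (inv_nonneg.2 (l2_nonneg _)), inv_mul_cancel₀ h0]
  have hpres := row_reflect q v u hu1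
  have hw' : w' = l2 w' • u := by rw [hu, smul_smul, mul_inv_cancel₀ h0, one_smul]
  have hur : dot u r = 0 := by rw [hu, dot_smul_left, dot_comm, hort, mul_zero]
  have huw : dot u w' = l2 w' := by
    conv_lhs => rw [hw', dot_smul, dot_self, hu1]
    ring
  set f : (Fin q → ℝ) → ℝ := fun w => reluGap (dot w (b • r + w')) (dot w r) with hf
  have hfm : Measurable f := by fun_prop
  have hfi : Integrable f (rowG q v) := reluGap_integrable q v _ _
  have hneg : ∫ w, f (reflectRow u w) ∂rowG q v = ∫ w, f w ∂rowG q v := by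
    have := integral_map (μ := rowG q v) (φ := reflectRow u) hpres.measurable.aemeasurable
      (f := f) hfm.aestronglyMeasurable
    rw [hpres.map_eq] at this
    exact this.symm
  have hfi2 : Integrable (fun w => f (reflectRow u w)) (rowG q v) :=
    hpres.integrable_comp_of_integrable hfi
  have hpt : ∀ w, 4 / 3 * dot w w' ^ 2 ≤ f w + f (reflectRow u w) := by
    intro w
    have e1 : dot (reflectRow u w) r = dot w r := by rw [dot_reflectRow, hur]; ring
    have e2 : dot (reflectRow u w) w' = - dot w w' := by
      rw [dot_reflectRow, huw]
      conv_lhs => enter [1]; rw [hw', dot_smul]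
      conv_rhs => rw [hw', dot_smul]
      ring
    simp only [hf, dot_add, dot_smul, e1, e2, ← sub_eq_add_neg]
    exact reluGap_flip _ _ _
  have := integral_mono ((row_dot_pow_integrable q v w' 2).const_mul (4 / 3)) (hfi.add hfi2) hpt
  rw [integral_add' hfi hfi2, hneg, integral_const_mul, row_dot_sq] at this
  linarith

/-- The sign disagreement of `⟨w, br + w'⟩` and `⟨w, r⟩` costs only third order in `‖w'‖`. -/
lemma reluGap_integral_fine (q : ℕ) (v : NNReal) (r w' : Fin q → ℝ) {b : ℝ} (hb : 0 < b)
    (hr : 0 < l2 r) (hort : dot r w' = 0) :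
    (l2 (b • r + w' - r) ^ 2 - 18 * l2 w' ^ 3 / (b ^ 2 * l2 r)) * v
      ≤ ∫ w, reluGap (dot w (b • r + w')) (dot w r) ∂rowG q v := by
  by_cases hv : v = 0
  · rw [hv]; simp only [NNReal.coe_zero, mul_zero]
    exact integral_nonneg fun w => reluGap_nonneg _ _
  have hv0 : (0 : ℝ) < v := by exact_mod_cast pos_iff_ne_zero.2 hv
  have hsv : 0 < Real.sqrt v := Real.sqrt_pos.2 hv0
  -- `g (⟨w, w'⟩, ⟨w, r⟩)` dominates the negative part of the product
  set g : ℝ × ℝ → ℝ := fun s => if b * |s.2| ≤ |s.1| then s.1 ^ 2 / (4 * b) else 0 with hg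
  have hgm : Measurable g :=
    Measurable.ite (measurableSet_le (by fun_prop) (by fun_prop)) (by fun_prop) (by fun_prop)
  have hg0 : ∀ s, 0 ≤ g s := fun s => by simp only [hg]; split_ifs <;> positivity
  have hpt : ∀ w, dot w (b • r + w' - r) ^ 2 - 2 * g (dot w w', dot w r)
      ≤ reluGap (dot w (b • r + w')) (dot w r) := by
    intro w
    rw [dot_sub, dot_add, dot_smul]
    set y := dot w r
    set z := dot w w'
    simp only [hg, reluGap]
    rcases le_total 0 ((b * y + z) * y) with h1 | h1
    · rw [max_eq_left h1]
      have := hg0 (z, y); simp only [hg] at this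
      nlinarith
    · rw [max_eq_right h1]
      have h2 : b * |y| ≤ |z| := by
        rcases eq_or_ne y 0 with hy | hy
        · rw [hy]; simp
        have h3 : b * y ^ 2 ≤ |z| * |y| := by
          rw [← abs_mul]; have := neg_abs_le (z * y); nlinarith
        have hy' : 0 < |y| := abs_pos.2 hy
        rw [← sq_abs y] at h3
        nlinarith
      rw [if_pos h2]
      have : (z ^ 2 / (4 * b)) * (4 * b) = z ^ 2 := by field_simp
      have h4 : -((b * y + z) * y) ≤ z ^ 2 / (4 * b) := by
        rw [le_div_iff₀ (by positivity)]
        nlinarith [sq_nonneg (2 * b * y + z)]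
      nlinarith
  have hbound : ∫⁻ w, ENNReal.ofReal (g (dot w w', dot w r)) ∂rowG q v
      ≤ ENNReal.ofReal (9 * l2 w' ^ 3 / (b ^ 2 * l2 r) * v) := by
    have hgm' : Measurable fun s => ENNReal.ofReal (g s) := hgm.ennreal_ofReal
    have hm2 : Measurable fun a : ℝ × ℝ =>
        ENNReal.ofReal (g (Real.sqrt v * l2 w' * a.1, Real.sqrt v * l2 r * a.2)) :=
      hgm'.comp (by fun_prop)
    rw [← lintegral_map (g := fun w : Fin q → ℝ => (dot w w', dot w r)) hgm' (by fun_prop),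
      row_map_pair q v w' r (by rw [dot_comm, hort]), lintegral_map hgm' (by fun_prop),
      lintegral_prod _ hm2.aemeasurable]
    set D := l2 w' with hD
    have hD0 : 0 ≤ D := l2_nonneg _
    have hin : ∀ t : ℝ, ∫⁻ s, ENNReal.ofReal (g (Real.sqrt v * D * t, Real.sqrt v * l2 r * s)) ∂stdN
        ≤ ENNReal.ofReal (v * D ^ 3 / (4 * b ^ 2 * l2 r)) * ENNReal.ofReal (|t| ^ 3) := by
      intro t
      have e1 : ∀ s : ℝ, ENNReal.ofReal (g (Real.sqrt v * D * t, Real.sqrt v * l2 r * s))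
          ≤ ({s | |s| ≤ D * |t| / (b * l2 r)} : Set ℝ).indicator
            (fun _ => ENNReal.ofReal (v * D ^ 2 * t ^ 2 / (4 * b))) s := by
        intro s
        simp only [hg]
        split_ifs with hcond
        · have hmem : |s| ≤ D * |t| / (b * l2 r) := by
            rw [le_div_iff₀ (by positivity)]
            simp only [abs_mul, abs_of_pos hsv, abs_of_pos hr, abs_of_nonneg hD0] at hcond
            have : Real.sqrt v * (|s| * (b * l2 r)) ≤ Real.sqrt v * (D * |t|) := by
              nlinarith
            exact le_of_mul_le_mul_left this hsv
          rw [Set.indicator_of_mem (by exact hmem)]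
          apply le_of_eq
          congr 2
          rw [mul_pow, mul_pow, Real.sq_sqrt hv0.le]
        · simp
      refine (lintegral_mono e1).trans ?_
      rw [lintegral_indicator_const (measurableSet_le (by fun_prop) (by fun_prop))]
      refine (mul_le_mul_right (stdN_small_le _) _).trans ?_
      rw [← ENNReal.ofReal_mul (by positivity), ← ENNReal.ofReal_mul (by positivity)]
      apply ENNReal.ofReal_le_ofReal
      apply le_of_eq
      rw [← sq_abs t]
      field_simp
    refine (lintegral_mono hin).trans ?_
    rw [lintegral_const_mul _ (by fun_prop), ← ofReal_integral_eq_lintegral_ofReal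
      stdN_abs_cube_integrable (Filter.Eventually.of_forall fun s => by positivity),
      ← ENNReal.ofReal_mul (by positivity)]
    apply ENNReal.ofReal_le_ofReal
    refine (mul_le_mul_of_nonneg_left stdN_abs_cube (by positivity)).trans_eq ?_
    field_simp
    ring
  have hgi : Integrable (fun w => g (dot w w', dot w r)) (rowG q v) := by
    refine ⟨(hgm.comp (by fun_prop)).aestronglyMeasurable, ?_⟩
    rw [hasFiniteIntegral_iff_ofReal (Filter.Eventually.of_forall fun w => hg0 _)]
    exact hbound.trans_lt ENNReal.ofReal_lt_top
  have hgb : ∫ w, g (dot w w', dot w r) ∂rowG q v ≤ 9 * l2 w' ^ 3 / (b ^ 2 * l2 r) * v := by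
    rw [← ofReal_integral_eq_lintegral_ofReal hgi
      (Filter.Eventually.of_forall fun w => hg0 _)] at hbound
    have := l2_nonneg w'
    exact (ENNReal.ofReal_le_ofReal_iff (by positivity)).1 hbound
  have h2i := row_dot_pow_integrable q v (b • r + w' - r) 2
  have := integral_mono (h2i.sub (hgi.const_mul 2)) (reluGap_integrable q v _ _) hpt
  rw [integral_sub' h2i (hgi.const_mul 2), integral_const_mul, row_dot_sq] at this
  calc _ = v * l2 (b • r + w' - r) ^ 2 - 2 * (9 * l2 w' ^ 3 / (b ^ 2 * l2 r) * v) := by ring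
    _ ≤ _ := by linarith

/-! ### Counting rows with a given property -/

lemma measurable_ite_one {α : Type*} [MeasurableSpace α] {P : α → Prop} [DecidablePred P]
    (hP : MeasurableSet {w | P w}) : Measurable fun w => if P w then (1 : ℝ) else 0 :=
  Measurable.ite hP measurable_const measurable_const

lemma count_upper {p : ℕ} {α : Type*} [MeasurableSpace α] (ν : Measure α) [IsProbabilityMeasure ν]
    {P : α → Prop} [DecidablePred P] (hP : MeasurableSet {w | P w}) {r : ℝ} (hr : 0 ≤ r)
    (hν : ν {w | P w} ≤ ENNReal.ofReal r) :
    (Measure.pi fun _ : Fin p => ν)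
        {G | 4 * r * p ≤ ((Finset.univ.filter fun k => P (G k)).card : ℝ)}
      ≤ ENNReal.ofReal (Real.exp (-(2 * r * p))) := by
  have hc : ∫⁻ w, ENNReal.ofReal (Real.exp (if P w then (1 : ℝ) else 0)) ∂ν
      ≤ ENNReal.ofReal (Real.exp (2 * r)) := by
    have h1 : ∀ w, ENNReal.ofReal (Real.exp (if P w then (1 : ℝ) else 0))
        ≤ 1 + ({w | P w} : Set α).indicator (fun _ => 2) w := by
      intro w
      by_cases h : P w
      · rw [if_pos h, Set.indicator_of_mem (by exact h)]
        have : Real.exp 1 ≤ 3 := by linarith [Real.exp_one_lt_d9]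
        refine (ENNReal.ofReal_le_ofReal this).trans ?_
        norm_num
      · rw [if_neg h, Set.indicator_of_notMem (by exact h)]; simp
    refine (lintegral_mono h1).trans ?_
    rw [lintegral_add_left measurable_const, lintegral_indicator_const hP, lintegral_const,
      measure_univ, mul_one]
    calc (1 : ENNReal) + 2 * ν {w | P w} ≤ 1 + 2 * ENNReal.ofReal r := by gcongr
      _ = ENNReal.ofReal (1 + 2 * r) := by
          rw [ENNReal.ofReal_add (by norm_num) (by positivity),
            ENNReal.ofReal_mul (by norm_num)]; simp
      _ ≤ _ := ENNReal.ofReal_le_ofReal (by linarith [Real.add_one_le_exp (2 * r)])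
  have := chernoff_pi (p := p) ν (fun _ w => if P w then (1 : ℝ) else 0)
    (fun _ => measurable_ite_one hP) (fun _ => 2 * r) (fun _ => hc) (4 * r * p)
  refine (measure_mono ?_).trans (this.trans_eq ?_)
  · intro G hG
    simp only [Set.mem_ofPred_eq] at hG ⊢
    rwa [Finset.card_filter, Nat.cast_sum, Finset.sum_congr rfl (fun k _ => by
      rw [Nat.cast_ite, Nat.cast_one, Nat.cast_zero])] at hG
  · congr 2
    simp only [Finset.sum_const, Finset.card_univ, Fintype.card_fin, nsmul_eq_mul]; ring

lemma count_lower {p : ℕ} {α : Type*} [MeasurableSpace α] (ν : Measure α) [IsProbabilityMeasure ν]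
    {P : α → Prop} [DecidablePred P] (hP : MeasurableSet {w | P w}) {r : ℝ} (hr : 0 ≤ r)
    (hν : ENNReal.ofReal r ≤ ν {w | P w}) :
    (Measure.pi fun _ : Fin p => ν)
        {G | ((Finset.univ.filter fun k => P (G k)).card : ℝ) ≤ r * p / 4}
      ≤ ENNReal.ofReal (Real.exp (-(r * p / 4))) := by
  have hc : ∫⁻ w, ENNReal.ofReal (Real.exp (-(if P w then (1 : ℝ) else 0))) ∂ν
      ≤ ENNReal.ofReal (Real.exp (-(r / 2))) := by
    have h1 : ∀ w, ENNReal.ofReal (Real.exp (-(if P w then (1 : ℝ) else 0)))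
        + ({w | P w} : Set α).indicator (fun _ => ENNReal.ofReal (1 / 2)) w ≤ 1 := by
      intro w
      by_cases h : P w
      · rw [if_pos h, Set.indicator_of_mem (by exact h), ← ENNReal.ofReal_add (by positivity)
          (by norm_num)]
        have := exp_neg_le_quad (z := 1) (by norm_num)
        rw [← ENNReal.ofReal_one]
        exact ENNReal.ofReal_le_ofReal (by linarith)
      · rw [if_neg h, Set.indicator_of_notMem (by exact h)]; simp
    have h2 : ∫⁻ w, ENNReal.ofReal (Real.exp (-(if P w then (1 : ℝ) else 0))) ∂ν
        + ENNReal.ofReal (r / 2) ≤ 1 := by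
      calc _ ≤ ∫⁻ w, ENNReal.ofReal (Real.exp (-(if P w then (1 : ℝ) else 0))) ∂ν
            + ENNReal.ofReal (1 / 2) * ν {w | P w} := by
            gcongr
            rw [show r / 2 = 1 / 2 * r by ring, ENNReal.ofReal_mul (by norm_num)]
            gcongr
        _ = ∫⁻ w, (ENNReal.ofReal (Real.exp (-(if P w then (1 : ℝ) else 0)))
            + ({w | P w} : Set α).indicator (fun _ => ENNReal.ofReal (1 / 2)) w) ∂ν := by
            rw [lintegral_add_right _ (measurable_const.indicator hP), lintegral_indicator_const hP]
        _ ≤ ∫⁻ _, 1 ∂ν := lintegral_mono h1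
        _ = 1 := by simp
    refine (ENNReal.le_sub_of_add_le_right ENNReal.ofReal_ne_top h2).trans ?_
    rw [← ENNReal.ofReal_one, ← ENNReal.ofReal_sub _ (by positivity)]
    exact ENNReal.ofReal_le_ofReal (by linarith [Real.add_one_le_exp (-(r / 2))])
  have := chernoff_pi (p := p) ν (fun _ w => -(if P w then (1 : ℝ) else 0))
    (fun _ => (measurable_ite_one hP).neg) (fun _ => -(r / 2)) (fun _ => hc) (-(r * p / 4))
  refine (measure_mono ?_).trans (this.trans_eq ?_)
  · intro G hG
    simp only [Set.mem_ofPred_eq] at hG ⊢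
    rw [Finset.card_filter, Nat.cast_sum, Finset.sum_congr rfl (fun k _ => by
      rw [Nat.cast_ite, Nat.cast_one, Nat.cast_zero])] at hG
    rw [Finset.sum_neg_distrib]
    linarith
  · congr 2
    simp only [Finset.sum_const, Finset.card_univ, Fintype.card_fin, nsmul_eq_mul]; ring

lemma row_small_le (q : ℕ) (v : NNReal) (hv : v ≠ 0) (h : Fin q → ℝ) (hh : 0 < l2 h) (τ : ℝ) :
    rowG q v {w | |dot w h| ≤ τ * l2 h * Real.sqrt v} ≤ ENNReal.ofReal τ := by
  have hsv : 0 < Real.sqrt v := Real.sqrt_pos.2 (by exact_mod_cast pos_iff_ne_zero.2 hv)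
  have h1 : rowG q v {w | |dot w h| ≤ τ * l2 h * Real.sqrt v}
      = (rowG q v).map (fun w => dot w h) {s | |s| ≤ τ * l2 h * Real.sqrt v} := by
    rw [Measure.map_apply (by fun_prop) (measurableSet_le (by fun_prop) (by fun_prop))]; rfl
  rw [h1, row_map_dot, Measure.map_apply (by fun_prop) (measurableSet_le (by fun_prop)
    (by fun_prop))]
  refine (measure_mono ?_).trans (stdN_small_le τ)
  intro s hs
  simp only [Set.mem_preimage, Set.mem_ofPred_eq] at hs ⊢
  rw [abs_mul, abs_of_pos (mul_pos hsv hh)] at hs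
  have : (Real.sqrt v * l2 h) * |s| ≤ (Real.sqrt v * l2 h) * τ := by linarith
  exact le_of_mul_le_mul_left this (mul_pos hsv hh)

/-- Few pre-activations of a Gaussian layer are close to zero. -/
lemma layer_small_count {m q : ℕ} (hm : 0 < m) (h : Fin q → ℝ) (hh : 0 < l2 h) {τ : ℝ}
    (hτ : 0 ≤ τ) :
    gaussMat m q (2 / m) {G | 4 * τ * m ≤ ((Finset.univ.filter fun k =>
        |mulVec G h k| ≤ τ * l2 h * Real.sqrt (2 / m)).card : ℝ)}
      ≤ ENNReal.ofReal (Real.exp (-(2 * τ * m))) := by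
  have hv : (2 / m : NNReal) ≠ 0 := by positivity
  have h1 := row_small_le q (2 / m) hv h hh τ
  have hvc : ((2 / m : NNReal) : ℝ) = 2 / m := by push_cast; rfl
  rw [hvc] at h1
  exact count_upper (p := m) (rowG q (2 / m)) (P := fun w => |dot w h| ≤ τ * l2 h * Real.sqrt (2 / m))
    (measurableSet_le (by fun_prop) (by fun_prop)) hτ h1

/-! ### Rows of a Gaussian layer paired with columns of the output matrix -/

lemma gaussMat_uncurry (p q : ℕ) (v : NNReal) :
    (gaussMat p q v).map (fun G (a : Fin p × Fin q) => G a.1 a.2)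
      = Measure.pi fun _ => gaussianReal 0 v := by
  symm
  apply Measure.pi_eq
  intro s hs
  rw [Measure.map_apply (by fun_prop) (MeasurableSet.univ_pi hs)]
  have : (fun (G : Fin p → Fin q → ℝ) (a : Fin p × Fin q) => G a.1 a.2) ⁻¹' Set.pi Set.univ s
      = Set.pi Set.univ fun i => Set.pi Set.univ fun j => s (i, j) := by
    ext G; simp [Set.mem_pi]
  rw [this, gaussMat, Measure.pi_pi, Fintype.prod_prod_type]
  simp [Measure.pi_pi]

lemma gaussMat_transpose (p q : ℕ) (v : NNReal) :
    (gaussMat p q v).map transpose = gaussMat q p v := by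
  have hT : Measurable (transpose : (Fin p → Fin q → ℝ) → Fin q → Fin p → ℝ) := by
    unfold transpose; fun_prop
  have h2 : Measurable fun (f : Fin q × Fin p → ℝ) (i : Fin q) (j : Fin p) => f (i, j) := by
    fun_prop
  have h1 : ((gaussMat p q v).map transpose).map (fun G (a : Fin q × Fin p) => G a.1 a.2)
      = (gaussMat q p v).map (fun G (a : Fin q × Fin p) => G a.1 a.2) := by
    rw [gaussMat_uncurry, Measure.map_map (by fun_prop) hT]
    symm
    apply Measure.pi_eq
    intro s hs
    rw [Measure.map_apply (by unfold transpose; fun_prop) (MeasurableSet.univ_pi hs)]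
    have : ((fun (G : Fin q → Fin p → ℝ) (a : Fin q × Fin p) => G a.1 a.2) ∘ transpose)
          ⁻¹' Set.pi Set.univ s
        = Set.pi Set.univ fun j => Set.pi Set.univ fun i => s (i, j) := by
      ext G; simp only [Set.mem_preimage, Set.mem_pi, transpose, Function.comp]
      exact ⟨fun h j _ i _ => h (i, j) trivial, fun h a _ => h a.2 trivial a.1 trivial⟩
    rw [this, gaussMat, Measure.pi_pi, Fintype.prod_prod_type, Finset.prod_comm]
    simp [Measure.pi_pi]
  have h3 := congrArg (Measure.map fun (f : Fin q × Fin p → ℝ) (i : Fin q) (j : Fin p) => f (i, j)) h1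
  rw [Measure.map_map h2 (by fun_prop), Measure.map_map h2 (by fun_prop)] at h3
  simpa [Function.comp_def] using h3

lemma pi_prod_pi {p : ℕ} {α β : Type*} [MeasurableSpace α] [MeasurableSpace β] (μ : Measure α)
    (ν : Measure β) [IsProbabilityMeasure μ] [IsProbabilityMeasure ν] :
    ((Measure.pi fun _ : Fin p => μ).prod (Measure.pi fun _ : Fin p => ν)).map
        (fun z k => (z.1 k, z.2 k)) = Measure.pi fun _ : Fin p => μ.prod ν := by
  symm
  refine Measure.pi_eq_generateFrom (C := fun _ => Set.image2 (· ×ˢ ·) {s : Set α | MeasurableSet s}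
    {t : Set β | MeasurableSet t}) (fun _ => generateFrom_prod) (fun _ => isPiSystem_prod)
    (fun _ => ⟨fun _ => Set.univ, fun _ => ⟨Set.univ, MeasurableSet.univ, Set.univ,
      MeasurableSet.univ, by simp⟩, fun _ => by simp, by simp [Set.iUnion_const]⟩) ?_
  intro s hs
  choose a ha b hb hab using hs
  have hs' : ∀ k, s k = a k ×ˢ b k := fun k => (hab k).symm
  rw [Measure.map_apply (by fun_prop) (MeasurableSet.univ_pi fun k => by
    rw [hs']; exact (ha k).prod (hb k))]
  have : (fun (z : (Fin p → α) × (Fin p → β)) k => (z.1 k, z.2 k)) ⁻¹' Set.pi Set.univ s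
      = (Set.pi Set.univ a) ×ˢ (Set.pi Set.univ b) := by
    ext z
    simp only [Set.mem_preimage, Set.mem_pi, hs', Set.mem_prod]
    exact ⟨fun h => ⟨fun k _ => (h k trivial).1, fun k _ => (h k trivial).2⟩,
      fun h k _ => ⟨h.1 k trivial, h.2 k trivial⟩⟩
  rw [this, Measure.prod_prod, Measure.pi_pi, Measure.pi_pi, ← Finset.prod_mul_distrib]
  simp [hs', Measure.prod_prod]

/-- The pairs (row `k` of `G`, column `k` of `B`) are independent and identically distributed. -/
lemma gauss_pair_law (m q d : ℕ) (v v' : NNReal) :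
    ((gaussMat m q v).prod (gaussMat d m v')).map (fun z k => (z.1 k, transpose z.2 k))
      = Measure.pi fun _ : Fin m => (rowG q v).prod (rowG d v') := by
  have hT : Measurable (transpose : (Fin d → Fin m → ℝ) → Fin m → Fin d → ℝ) := by
    unfold transpose; fun_prop
  have h0 := pi_prod_pi (p := m) (rowG q v) (rowG d v')
  have h1 : (gaussMat m q v).prod (gaussMat m d v')
      = ((gaussMat m q v).prod (gaussMat d m v')).map (Prod.map id transpose) := by
    rw [← gaussMat_transpose d m v']
    conv_lhs => rw [← Measure.map_id (μ := gaussMat m q v)]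
    rw [Measure.map_prod_map _ _ measurable_id hT]
  change Measure.map _ ((gaussMat m q v).prod (gaussMat m d v')) = _ at h0
  rw [h1, Measure.map_map (by fun_prop) (by fun_prop)] at h0
  exact h0

/-- The `k`-th row of the last-layer gradient, as a function of the `k`-th row `w` of `W_L` and the
`k`-th column `b` of `B`, for hidden vectors `h i` and arbitrary vectors `v i` in place of the
losses. -/
def rowR {n q d : ℕ} (h : Fin n → Fin q → ℝ) (v : Fin n → Fin d → ℝ) (w : Fin q → ℝ)
    (b : Fin d → ℝ) : Fin q → ℝ :=
  ∑ i, (dot b (v i) * (if 0 ≤ dot w (h i) then 1 else 0)) • h i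

lemma measurable_rowR {α : Type*} [MeasurableSpace α] {n q d : ℕ} {h : α → Fin n → Fin q → ℝ}
    {v : Fin n → Fin d → ℝ} {w : α → Fin q → ℝ} {b : α → Fin d → ℝ} (hh : Measurable h)
    (hw : Measurable w) (hb : Measurable b) : Measurable fun a => rowR (h a) v (w a) (b a) := by
  unfold rowR
  refine Finset.measurable_fun_sum _ fun i _ => ?_
  have h1 : Measurable fun a => if 0 ≤ dot (w a) (h a i) then (1 : ℝ) else 0 :=
    Measurable.ite (measurableSet_le (by fun_prop) (by fun_prop)) measurable_const
      measurable_const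
  fun_prop

/-- Reflecting `w` along `h i₀` flips the activation of sample `i₀` only, provided `w` is closer to
the hyperplane of `h i₀` than to those of the other samples. -/
lemma rowR_reflect {n q d : ℕ} (h : Fin n → Fin q → ℝ) (v : Fin n → Fin d → ℝ) (w : Fin q → ℝ)
    (b : Fin d → ℝ) (i₀ : Fin n) (u : Fin q → ℝ) (hu : l2 u = 1) {a : ℝ} (ha : 0 < a)
    (hh : h i₀ = a • u) (hle : ∀ j, l2 (h j) ≤ 2) (hρ : dot w u ≠ 0)
    (hj : ∀ j, j ≠ i₀ → 2 * |dot w u| < |dot w (h j - dot u (h j) • u)|) :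
    |dot b (v i₀)| * a ≤ l2 (rowR h v w b) + l2 (rowR h v (reflectRow u w) b) := by
  have huu : dot u u = 1 := by rw [dot_self, hu]; norm_num
  have hother : ∀ j, j ≠ i₀ → ((0 ≤ dot w (h j)) ↔ (0 ≤ dot (reflectRow u w) (h j))) := by
    intro j hji
    have h1 := hj j hji
    rw [dot_sub, dot_smul] at h1
    rw [dot_reflectRow]
    have h2 : |dot u (h j)| ≤ 2 := (abs_dot_le _ _).trans (by rw [hu]; linarith [hle j])
    have h3 : |dot w u * dot u (h j)| ≤ 2 * |dot w u| := by
      rw [abs_mul]; nlinarith [abs_nonneg (dot w u)]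
    obtain ⟨h4, h5⟩ := abs_le.1 h3
    rcases lt_abs.1 h1 with h6 | h6
    · exact ⟨fun _ => by nlinarith, fun _ => by nlinarith⟩
    · exact ⟨fun _ => by nlinarith, fun _ => by nlinarith⟩
  have hdiff : rowR h v w b - rowR h v (reflectRow u w) b
      = (dot b (v i₀) * ((if 0 ≤ dot w (h i₀) then 1 else 0)
          - (if 0 ≤ dot (reflectRow u w) (h i₀) then 1 else 0))) • h i₀ := by
    rw [rowR, rowR, ← Finset.sum_sub_distrib, Finset.sum_eq_single i₀]
    · rw [← sub_smul]; congr 1; ring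
    · intro j _ hji
      by_cases h0 : 0 ≤ dot w (h j)
      · rw [if_pos h0, if_pos ((hother j hji).1 h0), sub_self]
      · rw [if_neg h0, if_neg (fun h1 => h0 ((hother j hji).2 h1)), sub_self]
    · intro h; exact absurd (Finset.mem_univ _) h
  have hfl : |(if 0 ≤ dot w (h i₀) then (1 : ℝ) else 0)
      - (if 0 ≤ dot (reflectRow u w) (h i₀) then 1 else 0)| = 1 := by
    rw [dot_reflectRow, hh, dot_smul, dot_smul, huu]
    rcases lt_or_gt_of_ne hρ with h1 | h1
    · rw [if_neg (by nlinarith), if_pos (by nlinarith)]; norm_num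
    · rw [if_pos (by nlinarith), if_neg (by nlinarith)]; norm_num
  have hl : l2 (rowR h v w b - rowR h v (reflectRow u w) b) = |dot b (v i₀)| * a := by
    rw [hdiff, l2_smul, abs_mul, hfl, mul_one, hh, l2_smul, hu, abs_of_pos ha, mul_one]
  rw [← hl]
  exact l2_sub_le _ _

lemma row_near_one (q n : ℕ) (hn : 0 < n) (v : NNReal) (hv : v ≠ 0) (h : Fin n → Fin q → ℝ)
    (i₀ : Fin n) (u : Fin q → ℝ) (hu : l2 u = 1) {δ : ℝ} (hδ : 0 < δ) (hδ1 : δ ≤ 1)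
    (hsep : ∀ j, j ≠ i₀ → δ / 4 ≤ l2 (h j - dot u (h j) • u)) :
    ENNReal.ofReal (δ / (128 * n)) ≤ rowG q v {w | dot w u ≠ 0 ∧
      ∀ j, j ≠ i₀ → 2 * |dot w u| < |dot w (h j - dot u (h j) • u)|} := by
  classical
  have hn' : (1 : ℝ) ≤ n := by exact_mod_cast hn
  have hsv : 0 < Real.sqrt v := Real.sqrt_pos.2 (by exact_mod_cast pos_iff_ne_zero.2 hv)
  set θ := δ / (16 * n) with hθ
  have hθ0 : 0 < θ := by positivity
  have hθ1 : θ ≤ 1 := by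
    rw [hθ, div_le_one (by positivity)]; nlinarith
  set σ := Real.sqrt v with hσ
  set P0 := stdN {s | |s| ≤ θ} with hP0
  set N := {w : Fin q → ℝ | dot w u ≠ 0 ∧
      ∀ j, j ≠ i₀ → 2 * |dot w u| < |dot w (h j - dot u (h j) • u)|} with hN
  have hN0 : rowG q v {w | |dot w u| ≤ θ * σ} = P0 := by
    have h1 : rowG q v {w | |dot w u| ≤ θ * σ}
        = (rowG q v).map (fun w => dot w u) {s | |s| ≤ θ * σ} := by
      rw [Measure.map_apply (by fun_prop) (measurableSet_le (by fun_prop) (by fun_prop))]; rfl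
    rw [h1, row_map_dot, Measure.map_apply (by fun_prop) (measurableSet_le (by fun_prop)
      (by fun_prop)), hP0]
    congr 1
    ext s
    simp only [Set.mem_preimage, Set.mem_ofPred_eq, hu, mul_one]
    rw [← hσ, abs_mul, abs_of_pos hsv, mul_comm, mul_le_mul_iff_left₀ hsv]
  have hMj : ∀ j, j ≠ i₀ → rowG q v {w | |dot w u| ≤ θ * σ ∧
      |dot w (h j - dot u (h j) • u)| ≤ 2 * (θ * σ)} ≤ P0 * ENNReal.ofReal (1 / (2 * n)) := by
    intro j hj
    set pj := h j - dot u (h j) • u with hpj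
    have hpu : dot u pj = 0 := by
      rw [hpj, dot_sub, dot_smul, dot_self, hu]; ring
    have hpl := hsep j hj
    have hpl0 : 0 < l2 pj := lt_of_lt_of_le (by positivity) hpl
    have hms : MeasurableSet {s : ℝ × ℝ | |s.1| ≤ θ * σ ∧ |s.2| ≤ 2 * (θ * σ)} :=
      MeasurableSet.inter (s₁ := {s : ℝ × ℝ | |s.1| ≤ θ * σ})
        (s₂ := {s : ℝ × ℝ | |s.2| ≤ 2 * (θ * σ)})
        (measurableSet_le (by fun_prop) (by fun_prop))
        (measurableSet_le (by fun_prop) (by fun_prop))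
    have h1 : rowG q v {w | |dot w u| ≤ θ * σ ∧ |dot w pj| ≤ 2 * (θ * σ)}
        = (rowG q v).map (fun w => (dot w u, dot w pj))
          {s | |s.1| ≤ θ * σ ∧ |s.2| ≤ 2 * (θ * σ)} := by
      rw [Measure.map_apply (by fun_prop) hms]; rfl
    rw [h1, row_map_pair q v u pj hpu, Measure.map_apply (by fun_prop) hms]
    have h2 : (fun s : ℝ × ℝ => (Real.sqrt v * l2 u * s.1, Real.sqrt v * l2 pj * s.2)) ⁻¹'
        {s | |s.1| ≤ θ * σ ∧ |s.2| ≤ 2 * (θ * σ)} ⊆ {s : ℝ | |s| ≤ θ} ×ˢ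
          {s : ℝ | |s| ≤ 1 / (2 * n)} := by
      intro s hs
      simp only [Set.mem_preimage, Set.mem_ofPred_eq, hu, mul_one, Set.mem_prod] at hs ⊢
      rw [← hσ, abs_mul, abs_mul, abs_of_pos hsv, abs_of_pos (mul_pos hsv hpl0)] at hs
      refine ⟨?_, ?_⟩
      · have := hs.1
        rw [mul_comm, mul_le_mul_iff_left₀ hsv] at this; exact this
      · have h3 : σ * (l2 pj * |s.2|) ≤ σ * (2 * θ) := by linarith [hs.2]
        have h4 := le_of_mul_le_mul_left h3 hsv
        have h5 : δ / 4 * |s.2| ≤ 2 * θ :=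
          (mul_le_mul_of_nonneg_right hpl (abs_nonneg _)).trans h4
        have h6 : 2 * θ = δ / 4 * (1 / (2 * n)) := by rw [hθ]; field_simp; norm_num
        rw [h6] at h5
        exact le_of_mul_le_mul_left h5 (by positivity)
    refine (measure_mono h2).trans ?_
    rw [Measure.prod_prod]
    gcongr
    exact stdN_small_le _
  have hcover : {w | |dot w u| ≤ θ * σ} ⊆ N ∪ ({w | dot w u = 0} ∪
      ⋃ j ∈ Finset.univ.filter (· ≠ i₀), {w | |dot w u| ≤ θ * σ ∧
        |dot w (h j - dot u (h j) • u)| ≤ 2 * (θ * σ)}) := by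
    intro w hw
    by_cases h0 : dot w u = 0
    · right; left; exact h0
    by_cases h1 : ∀ j, j ≠ i₀ → 2 * |dot w u| < |dot w (h j - dot u (h j) • u)|
    · left; exact ⟨h0, h1⟩
    · right; right
      push Not at h1
      obtain ⟨j, hj, hj2⟩ := h1
      simp only [Set.mem_iUnion]
      refine ⟨j, by simp [hj], hw, hj2.trans ?_⟩
      have : |dot w u| ≤ θ * σ := hw
      linarith
  have hu0 : u ≠ 0 := by intro h0; rw [h0, l2_zero] at hu; norm_num at hu
  have hmain : P0 ≤ rowG q v N + P0 * ENNReal.ofReal (1 / 2) := by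
    calc P0 = rowG q v {w | |dot w u| ≤ θ * σ} := hN0.symm
      _ ≤ rowG q v N + (rowG q v {w | dot w u = 0} + ∑ j ∈ Finset.univ.filter (· ≠ i₀),
          rowG q v {w | |dot w u| ≤ θ * σ ∧
            |dot w (h j - dot u (h j) • u)| ≤ 2 * (θ * σ)}) := by
          refine (measure_mono hcover).trans ((measure_union_le _ _).trans ?_)
          gcongr
          refine (measure_union_le _ _).trans ?_
          gcongr
          exact measure_biUnion_finset_le _ _
      _ ≤ rowG q v N + (0 + ∑ j ∈ Finset.univ.filter (· ≠ i₀),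
            P0 * ENNReal.ofReal (1 / (2 * n))) := by
          rw [row_hyperplane_null q v hv u hu0]
          gcongr with j hj
          exact hMj j (by simpa using hj)
      _ ≤ rowG q v N + P0 * ENNReal.ofReal (1 / 2) := by
          rw [zero_add, Finset.sum_const, nsmul_eq_mul, mul_left_comm]
          gcongr
          calc ((Finset.univ.filter (· ≠ i₀)).card : ENNReal) * ENNReal.ofReal (1 / (2 * n))
              ≤ (n : ENNReal) * ENNReal.ofReal (1 / (2 * n)) := by
                gcongr
                exact (Finset.card_filter_le _ _).trans (by simp)
            _ = ENNReal.ofReal (1 / 2) := by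
                rw [← ENNReal.ofReal_natCast, ← ENNReal.ofReal_mul (by positivity)]
                congr 1; field_simp
  have hP0ge := stdN_small_ge hθ0.le hθ1
  rw [← hP0] at hP0ge
  have hf : rowG q v N ≠ ⊤ := measure_ne_top _ _
  have hf0 : P0 ≠ ⊤ := measure_ne_top _ _
  have hm2 := ENNReal.toReal_mono (by finiteness) hmain
  rw [ENNReal.toReal_add hf (by finiteness), ENNReal.toReal_mul, ENNReal.toReal_ofReal
    (by norm_num)] at hm2
  rw [ENNReal.ofReal_le_iff_le_toReal hf]
  rw [ENNReal.ofReal_le_iff_le_toReal hf0] at hP0ge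
  have : δ / (128 * n) = θ / 4 / 2 := by rw [hθ]; field_simp; norm_num
  rw [this]
  linarith

lemma col_large (d : ℕ) (hd : 0 < d) (v : Fin d → ℝ) :
    ENNReal.ofReal (1 / 2) ≤ rowG d (1 / d) {b | l2 v / (2 * Real.sqrt d) ≤ |dot b v|} := by
  have hd' : (0 : ℝ) < d := by exact_mod_cast hd
  have h1 : rowG d (1 / d) {b | l2 v / (2 * Real.sqrt d) ≤ |dot b v|}
      = (rowG d (1 / d)).map (fun w => dot w v) {s | l2 v / (2 * Real.sqrt d) ≤ |s|} := by
    rw [Measure.map_apply (by fun_prop) (measurableSet_le (by fun_prop) (by fun_prop))]; rfl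
  rw [h1, row_map_dot, Measure.map_apply (by fun_prop) (measurableSet_le (by fun_prop)
    (by fun_prop))]
  refine stdN_large_ge.trans (measure_mono ?_)
  intro s hs
  simp only [Set.mem_preimage, Set.mem_ofPred_eq] at hs ⊢
  have hvc : ((1 / d : NNReal) : ℝ) = 1 / d := by push_cast; rfl
  have := l2_nonneg v
  rw [hvc, abs_mul, abs_mul, abs_of_nonneg this, abs_of_nonneg (Real.sqrt_nonneg _),
    Real.sqrt_div (by norm_num), Real.sqrt_one]
  have h2 : l2 v / (2 * Real.sqrt d) = 1 / Real.sqrt d * l2 v * (1 / 2) := by field_simp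
  rw [h2]
  gcongr

/-- A single row of the last-layer gradient is large with probability of order `δ / n`. -/
lemma row_event (q n d : ℕ) (hn : 0 < n) (hd : 0 < d) (s : NNReal) (hs : s ≠ 0)
    (h : Fin n → Fin q → ℝ) (v : Fin n → Fin d → ℝ) (i₀ : Fin n) {δ : ℝ} (hδ : 0 < δ)
    (hδ1 : δ ≤ 1) (hlo : ∀ j, 1 / 2 ≤ l2 (h j)) (hhi : ∀ j, l2 (h j) ≤ 2)
    (hsep : ∀ j, j ≠ i₀ → ∀ t : ℝ, δ / 4 ≤ l2 (h j - t • h i₀)) :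
    ENNReal.ofReal (δ / (512 * n)) ≤ ((rowG q s).prod (rowG d (1 / d)))
      {z | l2 (v i₀) / (8 * Real.sqrt d) ≤ l2 (rowR h v z.1 z.2)} := by
  have ha : 0 < l2 (h i₀) := lt_of_lt_of_le (by norm_num) (hlo i₀)
  set a := l2 (h i₀) with haa
  set u := a⁻¹ • h i₀ with hu
  have hu1 : l2 u = 1 := by
    rw [hu, l2_smul, abs_of_pos (inv_pos.2 ha), ← haa]; field_simp
  have hhu : h i₀ = a • u := by rw [hu, smul_smul, mul_inv_cancel₀ ha.ne', one_smul]
  have hN := row_near_one q n hn s hs h i₀ u hu1 hδ hδ1 (fun j hj => by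
    have := hsep j hj (dot u (h j) * a⁻¹)
    rwa [← smul_smul, ← hu] at this)
  have hB := col_large d hd (v i₀)
  set N := {w : Fin q → ℝ | dot w u ≠ 0 ∧
      ∀ j, j ≠ i₀ → 2 * |dot w u| < |dot w (h j - dot u (h j) • u)|} with hNd
  set Bs := {b : Fin d → ℝ | l2 (v i₀) / (2 * Real.sqrt d) ≤ |dot b (v i₀)|} with hBd
  set Ev := {z : (Fin q → ℝ) × (Fin d → ℝ) |
    l2 (v i₀) / (8 * Real.sqrt d) ≤ l2 (rowR h v z.1 z.2)} with hEv
  have hEvm : MeasurableSet Ev := measurableSet_le (by fun_prop)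
    (measurable_l2 (measurable_rowR measurable_const measurable_fst measurable_snd))
  have hmp : MeasurePreserving (Prod.map (reflectRow u) id) ((rowG q s).prod (rowG d (1 / d)))
      ((rowG q s).prod (rowG d (1 / d))) :=
    (row_reflect q s u hu1).prod (MeasurePreserving.id _)
  have hsub : N ×ˢ Bs ⊆ Ev ∪ (Prod.map (reflectRow u) id) ⁻¹' Ev := by
    rintro ⟨w, b⟩ ⟨hw, hb⟩
    have h1 := rowR_reflect h v w b i₀ u hu1 ha hhu hhi hw.1 hw.2
    have hb' : l2 (v i₀) / (2 * Real.sqrt d) ≤ |dot b (v i₀)| := hb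
    have h2 : l2 (v i₀) / (2 * Real.sqrt d) * (1 / 2) ≤ |dot b (v i₀)| * a :=
      mul_le_mul hb' (hlo i₀) (by norm_num) (abs_nonneg _)
    have h3 : l2 (v i₀) / (2 * Real.sqrt d) * (1 / 2) = 2 * (l2 (v i₀) / (8 * Real.sqrt d)) := by
      have : 0 < Real.sqrt d := Real.sqrt_pos.2 (by exact_mod_cast hd)
      field_simp; norm_num
    rw [h3] at h2
    by_contra hcon
    simp only [Set.mem_union, Set.mem_preimage, hEv, Set.mem_ofPred_eq, Prod.map, id, not_or,
      not_le] at hcon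
    linarith [hcon.1, hcon.2]
  have h4 : ENNReal.ofReal (δ / (128 * n)) * ENNReal.ofReal (1 / 2)
      ≤ 2 * ((rowG q s).prod (rowG d (1 / d))) Ev := by
    calc _ ≤ (rowG q s) N * (rowG d (1 / d)) Bs := by gcongr
      _ = ((rowG q s).prod (rowG d (1 / d))) (N ×ˢ Bs) := (Measure.prod_prod _ _).symm
      _ ≤ _ := measure_mono hsub
      _ ≤ _ := measure_union_le _ _
      _ = 2 * ((rowG q s).prod (rowG d (1 / d))) Ev := by
          rw [hmp.measure_preimage hEvm.nullMeasurableSet, two_mul]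
  have hn' : (0 : ℝ) < n := by exact_mod_cast hn
  rw [← ENNReal.ofReal_mul (by positivity)] at h4
  have hfin : ((rowG q s).prod (rowG d (1 / d))) Ev ≠ ⊤ := measure_ne_top _ _
  rw [ENNReal.ofReal_le_iff_le_toReal (by finiteness), ENNReal.toReal_mul] at h4
  rw [ENNReal.ofReal_le_iff_le_toReal hfin]
  have : δ / (512 * n) = δ / (128 * n) * (1 / 2) / 2 := by field_simp; norm_num
  rw [this]
  simp only [ENNReal.toReal_ofNat] at h4
  linarith

/-- Many rows of the last-layer gradient are large. -/
lemma last_layer_count (m q n d : ℕ) (hn : 0 < n) (hd : 0 < d) (s : NNReal) (hs : s ≠ 0)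
    (h : Fin n → Fin q → ℝ) (v : Fin n → Fin d → ℝ) (i₀ : Fin n) {δ : ℝ} (hδ : 0 < δ)
    (hδ1 : δ ≤ 1) (hlo : ∀ j, 1 / 2 ≤ l2 (h j)) (hhi : ∀ j, l2 (h j) ≤ 2)
    (hsep : ∀ j, j ≠ i₀ → ∀ t : ℝ, δ / 4 ≤ l2 (h j - t • h i₀)) :
    ((gaussMat m q s).prod (gaussMat d m (1 / d)))
      {z | ((Finset.univ.filter fun k => l2 (v i₀) / (8 * Real.sqrt d)
          ≤ l2 (rowR h v (z.1 k) (transpose z.2 k))).card : ℝ) ≤ δ * m / (2048 * n)}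
      ≤ ENNReal.ofReal (Real.exp (-(δ * m / (2048 * n)))) := by
  have hn' : (0 : ℝ) < n := by exact_mod_cast hn
  have hT : Measurable (transpose : (Fin d → Fin m → ℝ) → Fin m → Fin d → ℝ) := by
    unfold transpose; fun_prop
  have hEvm : MeasurableSet {z : (Fin q → ℝ) × (Fin d → ℝ) |
      l2 (v i₀) / (8 * Real.sqrt d) ≤ l2 (rowR h v z.1 z.2)} := measurableSet_le (by fun_prop)
    (measurable_l2 (measurable_rowR measurable_const measurable_fst measurable_snd))
  have h1 := count_lower (p := m) _ (P := fun z : (Fin q → ℝ) × (Fin d → ℝ) =>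
    l2 (v i₀) / (8 * Real.sqrt d) ≤ l2 (rowR h v z.1 z.2)) hEvm (by positivity)
    (row_event q n d hn hd s hs h v i₀ hδ hδ1 hlo hhi hsep)
  rw [← gauss_pair_law] at h1
  have e : δ / (512 * n) * m / 4 = δ * m / (2048 * n) := by field_simp; ring
  rw [e] at h1
  refine le_trans ?_ h1
  exact Measure.le_map_apply (by fun_prop) _

/-! ### Separation of two samples through one layer -/

lemma relu_smul {p : ℕ} {t : ℝ} (ht : 0 ≤ t) (v : Fin p → ℝ) : relu (t • v) = t • relu v := by
  ext k
  simp only [relu, Pi.smul_apply, smul_eq_mul]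
  rw [mul_max_of_nonneg _ _ ht, mul_zero]

lemma dot_relu_nonneg {p : ℕ} (u v : Fin p → ℝ) : 0 ≤ dot (relu u) (relu v) :=
  Finset.sum_nonneg fun _ _ => mul_nonneg (le_max_right _ _) (le_max_right _ _)

/-- `Sep a p r`: the distance from `p` to the line spanned by `r` is at least `a` (as a Gram
determinant inequality, which is meaningful for `r ≠ 0`). -/
def Sep {q : ℕ} (a : ℝ) (p r : Fin q → ℝ) : Prop :=
  a ^ 2 * l2 r ^ 2 ≤ l2 p ^ 2 * l2 r ^ 2 - dot p r ^ 2

lemma Sep.dist {q : ℕ} {a : ℝ} {p r : Fin q → ℝ} (h : Sep a p r) (ha : 0 ≤ a) (hr : 0 < l2 r)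
    (t : ℝ) : a ≤ l2 (p - t • r) := by
  refine (sq_le_sq₀ ha (l2_nonneg _)).1 ?_
  rw [l2_sub_sq, dot_smul, l2_smul, mul_pow, sq_abs]
  have hr2 : 0 < l2 r ^ 2 := by positivity
  refine le_of_mul_le_mul_right ?_ hr2
  unfold Sep at h
  nlinarith [sq_nonneg (t * l2 r ^ 2 - dot p r)]

lemma Sep.of_dist {q : ℕ} {a : ℝ} {p r : Fin q → ℝ} (ha : 0 ≤ a) (hr : 0 < l2 r)
    (hpr : 0 ≤ dot p r) (h : ∀ t : ℝ, 0 ≤ t → a ≤ l2 (p - t • r)) : Sep a p r := by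
  have hr2 : 0 < l2 r ^ 2 := by positivity
  have h1 := h (dot p r / l2 r ^ 2) (by positivity)
  have h2 := pow_le_pow_left₀ ha h1 2
  rw [l2_sub_sq, dot_smul, l2_smul, mul_pow, sq_abs] at h2
  unfold Sep
  have h3 : (l2 p ^ 2 - 2 * (dot p r / l2 r ^ 2 * dot p r) + (dot p r / l2 r ^ 2) ^ 2 * l2 r ^ 2)
      * l2 r ^ 2 = l2 p ^ 2 * l2 r ^ 2 - dot p r ^ 2 := by field_simp; ring
  rw [← h3]
  exact mul_le_mul_of_nonneg_right h2 hr2.le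

lemma sep_poly {a D ε : ℝ} (ha : 0 < a) (haD : a ≤ D) (hD : D ≤ 1 / 4000) (hε : ε ≤ 1 / 10)
    (h : 1440 * a ≤ ε) : (1 - 2 * ε) * a ^ 2 ≤ (1 - ε) * D ^ 2 - 1440 * D ^ 3 := by
  have h1 : 1440 * (D ^ 2 + D * a + a ^ 2) ≤ (3 / 4) * (D + a) := by nlinarith
  have h2 : 1440 * (D ^ 3 - a ^ 3) ≤ (3 / 4) * (D ^ 2 - a ^ 2) := by
    have := mul_le_mul_of_nonneg_left h1 (sub_nonneg.2 haD)
    nlinarith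
  have h3 : 0 ≤ D ^ 2 - a ^ 2 := by nlinarith
  have h4 : 1440 * a ^ 3 ≤ ε * a ^ 2 := by nlinarith [sq_nonneg a]
  nlinarith

/-- One layer hardly decreases the distance between `p` and a fixed multiple of `r`. -/
lemma layer_sep_one {m q : ℕ} (hm : 0 < m) (p r : Fin q → ℝ) {a ε t : ℝ} (ha : 0 < a)
    (hε0 : 0 < ε) (hε : ε ≤ 1 / 10 ^ 10) (haε : 1440 * a ≤ ε) (ht : 0 < t) (ht8 : t ≤ 8)
    (hp1 : 1 / 2 ≤ l2 p) (hp2 : l2 p ≤ 2) (hr1 : 1 / 2 ≤ l2 r) (hr2 : l2 r ≤ 2)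
    (hdot : 0 ≤ dot p r) (hsep : Sep a p r) :
    gaussMat m q (2 / m)
        {G | l2 (relu (mulVec G p) - t • relu (mulVec G r)) < (1 - 2 * ε) * a}
      ≤ ENNReal.ofReal (Real.exp (-(m * ε ^ 2 / 560))) := by
  have hr0 : 0 < l2 r := by linarith
  set r' := t • r with hr'
  have hr'l : l2 r' = t * l2 r := by rw [hr', l2_smul, abs_of_pos ht]
  have hr'0 : 0 < l2 r' := by rw [hr'l]; positivity
  have hr'16 : l2 r' ≤ 16 := by rw [hr'l]; nlinarith
  set b := dot p r' / l2 r' ^ 2 with hb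
  set w' := p - b • r' with hw'
  have hpeq : p = b • r' + w' := by rw [hw']; abel
  have hort : dot r' w' = 0 := by
    rw [hw', dot_sub, dot_smul, dot_self, hb, dot_comm]; field_simp; ring
  have hdot' : 0 ≤ dot p r' := by rw [hr', dot_smul]; positivity
  have hb0 : 0 ≤ b := by positivity
  set D := l2 w' with hD
  have haD : a ≤ D := by
    have := hsep.dist ha.le hr0 (b * t)
    rwa [← smul_smul] at this
  have hpyth : l2 p ^ 2 = b ^ 2 * l2 r' ^ 2 + D ^ 2 := by
    have h1 : l2 w' ^ 2 = l2 p ^ 2 - b ^ 2 * l2 r' ^ 2 := by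
      rw [hw', l2_sub_sq, dot_smul, l2_smul, mul_pow, sq_abs, hb]; field_simp; ring
    rw [hD, h1]; ring
  have hpr : D ≤ l2 (p - r') := by
    have h1 : l2 (p - r') ^ 2 = (b - 1) ^ 2 * l2 r' ^ 2 + D ^ 2 := by
      rw [l2_sub_sq, hpyth, hb]; field_simp; ring
    refine (sq_le_sq₀ (l2_nonneg _) (l2_nonneg _)).1 ?_
    rw [h1]; nlinarith [sq_nonneg ((b - 1) * l2 r')]
  have hpr18 : l2 (p - r') ≤ 18 := (l2_sub_le _ _).trans (by linarith)
  have hrel : ∀ G : Fin m → Fin q → ℝ, relu (mulVec G r') = t • relu (mulVec G r) := by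
    intro G; rw [hr', mulVec_smul, relu_smul ht.le]
  have hmain : ∃ K, K * ((2 / m : NNReal) : ℝ) ≤ ∫ w, reluGap (dot w p) (dot w r') ∂rowG q (2 / m)
      ∧ (1 - 2 * ε) * a ^ 2 ≤ K - ε * l2 (p - r') ^ 2 := by
    have hpr2 : l2 (p - r') ^ 2 ≤ 324 := by nlinarith [l2_nonneg (p - r')]
    rcases le_total D (1 / 4000) with hsmall | hbig
    · have hbp : 1 / 5 ≤ b ^ 2 * l2 r' ^ 2 := by nlinarith
      have hb1 : 0 < b := by
        rcases hb0.eq_or_lt with h | h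
        · rw [← h] at hbp; norm_num at hbp
        · exact h
      refine ⟨l2 (p - r') ^ 2 - 18 * D ^ 3 / (b ^ 2 * l2 r'), ?_, ?_⟩
      · have := reluGap_integral_fine q (2 / m) r' w' hb1 hr'0 hort
        rwa [← hpeq, ← hD] at this
      · have h1 : 18 * D ^ 3 / (b ^ 2 * l2 r') ≤ 1440 * D ^ 3 := by
          rw [div_le_iff₀ (by positivity)]
          have h2 : 1 / 80 ≤ b ^ 2 * l2 r' := by
            have : b ^ 2 * l2 r' ^ 2 ≤ (b ^ 2 * l2 r') * 16 := by
              have h0 : 0 ≤ b ^ 2 * l2 r' := by positivity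
              calc b ^ 2 * l2 r' ^ 2 = (b ^ 2 * l2 r') * l2 r' := by ring
                _ ≤ _ := mul_le_mul_of_nonneg_left hr'16 h0
            linarith
          have hD3 : 0 ≤ D ^ 3 := by have := ha.trans_le haD; positivity
          nlinarith
        have h2 := sep_poly ha haD hsmall (by linarith [hε, (by norm_num : (1 : ℝ) / 10 ^ 10 ≤ 1 / 10)]) haε
        have h3 : D ^ 2 ≤ l2 (p - r') ^ 2 := pow_le_pow_left₀ (ha.le.trans haD) hpr 2
        have h4 : (1 - ε) * D ^ 2 ≤ (1 - ε) * l2 (p - r') ^ 2 :=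
          mul_le_mul_of_nonneg_left h3 (by linarith [hε, (by norm_num : (1 : ℝ) / 10 ^ 10 ≤ 1)])
        nlinarith
    · refine ⟨2 / 3 * D ^ 2, ?_, ?_⟩
      · have := reluGap_integral_coarse q (2 / m) r' w' b hort
        rwa [← hpeq] at this
      · have h1 : (1 / 4000 : ℝ) ^ 2 ≤ D ^ 2 := pow_le_pow_left₀ (by norm_num) hbig 2
        have h2 : ε * l2 (p - r') ^ 2 ≤ 1 / 10 ^ 10 * 324 :=
          mul_le_mul hε hpr2 (by positivity) (by norm_num)
        have h3 : a ≤ 1 / 10 ^ 13 := by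
          have : 1440 * a ≤ 1 / 10 ^ 10 := haε.trans hε
          norm_num at this ⊢; linarith
        have h4 : a ^ 2 ≤ (1 / 10 ^ 13) ^ 2 := pow_le_pow_left₀ ha.le h3 2
        have h5 : (1 - 2 * ε) * a ^ 2 ≤ a ^ 2 := by nlinarith [sq_nonneg a]
        norm_num at h1 h2 h4 ⊢
        linarith
  obtain ⟨K, hK1, hK2⟩ := hmain
  refine (measure_mono ?_).trans (layer_lower hm p r' hε0.le hK1)
  intro G hG
  simp only [Set.mem_ofPred_eq] at hG ⊢
  rw [hrel]
  have hε2 : ε ≤ 1 / 4 := hε.trans (by norm_num)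
  refine lt_of_lt_of_le ?_ hK2
  have h1 := pow_lt_pow_left₀ hG (l2_nonneg _) (by norm_num : (2 : ℕ) ≠ 0)
  refine h1.trans_le ?_
  rw [mul_pow]
  have : (1 - 2 * ε) ^ 2 ≤ 1 - 2 * ε := by nlinarith
  exact mul_le_mul_of_nonneg_right this (sq_nonneg _)

/-- Distances to finitely many multiples of `r` control the distance to the whole line. -/
lemma sep_of_grid {q : ℕ} (p r : Fin q → ℝ) {a ε : ℝ} {N : ℕ} (ha : 0 < a) (ha1 : a ≤ 1)
    (hε0 : 0 < ε) (hε : ε ≤ 1 / 10) (hN : 16 / (ε * a) ≤ N) (hp2 : l2 p ≤ 2)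
    (hr1 : 1 / 2 ≤ l2 r) (hr2 : l2 r ≤ 2) (hdot : 0 ≤ dot p r)
    (hgrid : ∀ k ∈ Finset.Icc 1 N, (1 - 2 * ε) * a ≤ l2 (p - (8 * k / N : ℝ) • r)) :
    Sep ((1 - 3 * ε) * a) p r := by
  have hN0 : (0 : ℝ) < N := lt_of_lt_of_le (by positivity) hN
  have hN0' : 0 < N := by exact_mod_cast hN0
  have hNa : 16 / (N : ℝ) ≤ ε * a := by
    rw [div_le_iff₀ (by positivity)] at hN ⊢; linarith
  apply Sep.of_dist (mul_nonneg (by linarith) ha.le) (by linarith) hdot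
  intro t ht
  have hr0 : 0 ≤ l2 r := l2_nonneg _
  rcases le_total t 8 with ht8 | ht8
  · obtain ⟨k, hk, hkt⟩ : ∃ k ∈ Finset.Icc 1 N, |t - 8 * k / N| ≤ 8 / N := by
      refine ⟨max 1 ⌈t * N / 8⌉₊, ?_, ?_⟩
      · rw [Finset.mem_Icc]
        refine ⟨le_max_left _ _, max_le hN0' (Nat.ceil_le.2 ?_)⟩
        nlinarith
      · have h1 : t * N / 8 ≤ ⌈t * N / 8⌉₊ := Nat.le_ceil _
        have h2 : (⌈t * N / 8⌉₊ : ℝ) < t * N / 8 + 1 := Nat.ceil_lt_add_one (by positivity)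
        push_cast
        have h3 : (8 : ℝ) * max 1 (⌈t * N / 8⌉₊ : ℝ) / N * N = 8 * max 1 (⌈t * N / 8⌉₊ : ℝ) := by
          field_simp
        have h4 : (8 : ℝ) / N * N = 8 := by field_simp
        have h5 : max 1 (⌈t * N / 8⌉₊ : ℝ) ≤ t * N / 8 + 1 :=
          max_le (by nlinarith) h2.le
        have h6 : t * N / 8 ≤ max 1 (⌈t * N / 8⌉₊ : ℝ) := h1.trans (le_max_right _ _)
        rw [abs_le]
        constructor
        · refine le_of_mul_le_mul_right ?_ hN0
          rw [sub_mul, h3, neg_mul, h4]; linarith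
        · refine le_of_mul_le_mul_right ?_ hN0
          rw [sub_mul, h3, h4]; linarith
    have h1 := hgrid k hk
    have h2 : l2 (p - (8 * k / N : ℝ) • r) ≤ l2 (p - t • r) + |t - 8 * k / N| * l2 r := by
      rw [← l2_smul]
      refine le_trans (le_of_eq ?_) (l2_add_le _ _)
      congr 1
      rw [sub_smul]; abel
    have h3 : |t - 8 * k / N| * l2 r ≤ 8 / N * 2 := mul_le_mul hkt hr2 hr0 (by positivity)
    have h4 : (8 : ℝ) / N * 2 = 16 / N := by ring
    nlinarith
  · have h1 : l2 (t • r) ≤ l2 (p - t • r) + l2 p := by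
      rw [l2_sub_comm]
      refine le_trans (le_of_eq ?_) (l2_add_le _ _)
      congr 1; abel
    rw [l2_smul, abs_of_nonneg ht] at h1
    have h2 : (8 : ℝ) * (1 / 2) ≤ t * l2 r := mul_le_mul ht8 hr1 (by norm_num) ht
    nlinarith

/-- Unit inputs with last coordinate `1/√2` have nonnegative inner products. -/
lemma input_dot_nonneg {q : ℕ} (hq : 0 < q) (p r : Fin q → ℝ) (hp : l2 p = 1) (hr : l2 r = 1)
    (hp' : p ⟨q - 1, by omega⟩ = 1 / Real.sqrt 2) (hr' : r ⟨q - 1, by omega⟩ = 1 / Real.sqrt 2) :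
    0 ≤ dot p r := by
  set e : Fin q := ⟨q - 1, by omega⟩
  have hsq : (1 / Real.sqrt 2) ^ 2 = 1 / 2 := by rw [div_pow, Real.sq_sqrt (by norm_num)]; norm_num
  have h1 : ∑ k ∈ Finset.univ.erase e, p k ^ 2 = 1 / 2 := by
    have := l2_sq p
    rw [hp, ← Finset.add_sum_erase _ _ (Finset.mem_univ e), hp', hsq] at this
    linarith
  have h2 : ∑ k ∈ Finset.univ.erase e, r k ^ 2 = 1 / 2 := by
    have := l2_sq r
    rw [hr, ← Finset.add_sum_erase _ _ (Finset.mem_univ e), hr', hsq] at this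
    linarith
  have h3 : -(1 / 2) ≤ ∑ k ∈ Finset.univ.erase e, p k * r k := by
    have : ∑ k ∈ Finset.univ.erase e, (-(1 / 2 * p k ^ 2) - 1 / 2 * r k ^ 2)
        ≤ ∑ k ∈ Finset.univ.erase e, p k * r k :=
      Finset.sum_le_sum fun k _ => by nlinarith [sq_nonneg (p k + r k)]
    rw [Finset.sum_sub_distrib, Finset.sum_neg_distrib, ← Finset.mul_sum, ← Finset.mul_sum, h1,
      h2] at this
    linarith
  rw [dot, ← Finset.add_sum_erase _ _ (Finset.mem_univ e), hp', hr', ← sq, hsq]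
  linarith

lemma input_sep {q : ℕ} (p r : Fin q → ℝ) (hp : l2 p = 1) (hr : l2 r = 1) (hdot : 0 ≤ dot p r)
    {δ : ℝ} (hδ : 0 ≤ δ) (h : δ ≤ l2 (p - r)) : Sep (δ / 2) p r := by
  have h1 := pow_le_pow_left₀ hδ h 2
  rw [l2_sub_sq, hp, hr] at h1
  have h2 := (abs_le.1 (abs_dot_le p r)).2
  rw [hp, hr] at h2
  unfold Sep
  rw [hp, hr]
  nlinarith

/-! ### Conditioning on all but one block of the initialization -/

section Conditioning
variable {𝔡 m d L : ℕ}

/-- The space of initializations `(A, W, B)`. -/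
abbrev Init (𝔡 m d L : ℕ) : Type :=
  (Fin m → Fin 𝔡 → ℝ) × (Fin L → Fin m → Fin m → ℝ) × (Fin d → Fin m → ℝ)

instance : IsProbabilityMeasure (initMeasure 𝔡 m d L) := by unfold initMeasure; infer_instance

lemma cond_A {E : Set (Init 𝔡 m d L)} (hE : MeasurableSet E) {p : ENNReal}
    (h : ∀ W B, gaussMat m 𝔡 (2 / m) {A | (A, W, B) ∈ E} ≤ p) : initMeasure 𝔡 m d L E ≤ p := by
  unfold initMeasure
  rw [Measure.prod_apply_symm hE]
  calc _ ≤ ∫⁻ _ : (Fin L → Fin m → Fin m → ℝ) × (Fin d → Fin m → ℝ), p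
        ∂((Measure.pi fun _ : Fin L => gaussMat m m (2 / m)).prod (gaussMat d m (1 / d))) :=
        lintegral_mono fun y => h y.1 y.2
    _ = p := by simp

lemma cond_WB {E : Set (Init 𝔡 m d L)} (hE : MeasurableSet E) {p : ENNReal} (j : Fin L)
    (h : ∀ A W, ((gaussMat m m (2 / m)).prod (gaussMat d m (1 / d)))
      {z | (A, Function.update W j z.1, z.2) ∈ E} ≤ p) : initMeasure 𝔡 m d L E ≤ p := by
  unfold initMeasure
  rw [Measure.prod_apply hE]
  have key : ∀ A : Fin m → Fin 𝔡 → ℝ,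
      ((Measure.pi fun _ : Fin L => gaussMat m m (2 / m)).prod (gaussMat d m (1 / d)))
        (Prod.mk A ⁻¹' E) ≤ p := by
    intro A
    have hEA : MeasurableSet (Prod.mk A ⁻¹' E) := measurable_prodMk_left hE
    rw [Measure.prod_apply hEA]
    have hf : Measurable fun W : Fin L → Fin m → Fin m → ℝ =>
        gaussMat d m (1 / d) (Prod.mk W ⁻¹' (Prod.mk A ⁻¹' E)) := measurable_measure_prodMk_left hEA
    have := lintegral_le_of_lmarginal_le (μ := fun _ : Fin L => gaussMat m m (2 / m)) {j} hf
      (measurable_const (a := p)) (by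
        intro W
        rw [lmarginal_singleton, lmarginal_singleton]
        have h2 := h A W
        have hmeas : MeasurableSet {z : (Fin m → Fin m → ℝ) × (Fin d → Fin m → ℝ) |
            (A, Function.update W j z.1, z.2) ∈ E} := by
          refine (show Measurable fun z : (Fin m → Fin m → ℝ) × (Fin d → Fin m → ℝ) =>
            (A, Function.update W j z.1, z.2) from ?_) hE
          exact measurable_const.prodMk
            (((measurable_update W).comp measurable_fst).prodMk measurable_snd)
        rw [Measure.prod_apply hmeas] at h2
        refine le_trans (le_of_eq ?_) (h2.trans (le_of_eq ?_))
        · rfl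
        · simp)
    refine this.trans (le_of_eq ?_)
    simp
  calc _ ≤ ∫⁻ _ : Fin m → Fin 𝔡 → ℝ, p ∂(gaussMat m 𝔡 (2 / m)) := lintegral_mono key
    _ = p := by simp

lemma cond_W {E : Set (Init 𝔡 m d L)} (hE : MeasurableSet E) {p : ENNReal} (j : Fin L)
    (h : ∀ A W B, gaussMat m m (2 / m) {G | (A, Function.update W j G, B) ∈ E} ≤ p) :
    initMeasure 𝔡 m d L E ≤ p := by
  refine cond_WB hE j fun A W => ?_
  have hmeas : MeasurableSet {z : (Fin m → Fin m → ℝ) × (Fin d → Fin m → ℝ) |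
      (A, Function.update W j z.1, z.2) ∈ E} := by
    refine (show Measurable fun z : (Fin m → Fin m → ℝ) × (Fin d → Fin m → ℝ) =>
      (A, Function.update W j z.1, z.2) from ?_) hE
    exact measurable_const.prodMk
      (((measurable_update W).comp measurable_fst).prodMk measurable_snd)
  rw [Measure.prod_apply_symm hmeas]
  calc _ ≤ ∫⁻ _ : Fin d → Fin m → ℝ, p ∂(gaussMat d m (1 / d)) :=
        lintegral_mono fun B => h A W B
    _ = p := by simp

lemma cond_B {E : Set (Init 𝔡 m d L)} (hE : MeasurableSet E) {p : ENNReal}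
    (h : ∀ A W, gaussMat d m (1 / d) {B | (A, W, B) ∈ E} ≤ p) :
    initMeasure 𝔡 m d L E ≤ p := by
  unfold initMeasure
  rw [Measure.prod_apply hE]
  have key : ∀ A : Fin m → Fin 𝔡 → ℝ,
      ((Measure.pi fun _ : Fin L => gaussMat m m (2 / m)).prod (gaussMat d m (1 / d)))
        (Prod.mk A ⁻¹' E) ≤ p := by
    intro A
    rw [Measure.prod_apply (measurable_prodMk_left hE)]
    calc _ ≤ ∫⁻ _ : Fin L → Fin m → Fin m → ℝ, p ∂(Measure.pi fun _ => gaussMat m m (2 / m)) :=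
          lintegral_mono fun W => h A W
      _ = p := by simp
  calc _ ≤ ∫⁻ _ : Fin m → Fin 𝔡 → ℝ, p ∂(gaussMat m 𝔡 (2 / m)) := lintegral_mono key
    _ = p := by simp

/-! ### Measurability and locality of the forward pass -/

lemma Wat_succ (W : Fin L → Fin m → Fin m → ℝ) (j : Fin L) : Wat W (j + 1) = W j := by
  unfold Wat
  rw [dif_pos ⟨by omega, by omega⟩]
  congr 1

lemma Wat_update_self (W : Fin L → Fin m → Fin m → ℝ) (j : Fin L) (G : Fin m → Fin m → ℝ) :
    Wat (Function.update W j G) (j + 1) = G := by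
  rw [Wat_succ, Function.update_self]

lemma Wat_update_of_le (W : Fin L → Fin m → Fin m → ℝ) (j : Fin L) (G : Fin m → Fin m → ℝ)
    {ℓ : ℕ} (h : ℓ ≤ j) : Wat (Function.update W j G) ℓ = Wat W ℓ := by
  unfold Wat
  split_ifs with h1
  · rw [Function.update_of_ne]
    intro h2
    have := congrArg Fin.val h2
    simp only at this
    omega
  · rfl

lemma hseq_succ (A : Fin m → Fin 𝔡 → ℝ) (W : Fin L → Fin m → Fin m → ℝ) (x : Fin 𝔡 → ℝ) (j : Fin L) :
    hseq A W x (j + 1) = relu (mulVec (W j) (hseq A W x j)) := by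
  rw [hseq, if_pos (by omega), Wat_succ]

lemma gseq_succ (A : Fin m → Fin 𝔡 → ℝ) (W : Fin L → Fin m → Fin m → ℝ) (x : Fin 𝔡 → ℝ) (j : Fin L) :
    gseq A W x (j + 1) = mulVec (W j) (hseq A W x j) := by
  rw [gseq, Wat_succ]

lemma hseq_update (A : Fin m → Fin 𝔡 → ℝ) (W : Fin L → Fin m → Fin m → ℝ) (x : Fin 𝔡 → ℝ)
    (j : Fin L) (G : Fin m → Fin m → ℝ) {ℓ : ℕ} (h : ℓ ≤ j) :
    hseq A (Function.update W j G) x ℓ = hseq A W x ℓ := by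
  induction ℓ with
  | zero => rfl
  | succ k ih => rw [hseq, hseq, ih (by omega), Wat_update_of_le W j G h]

lemma gseq_update (A : Fin m → Fin 𝔡 → ℝ) (W : Fin L → Fin m → Fin m → ℝ) (x : Fin 𝔡 → ℝ)
    (j : Fin L) (G : Fin m → Fin m → ℝ) {ℓ : ℕ} (h : ℓ ≤ j) :
    gseq A (Function.update W j G) x ℓ = gseq A W x ℓ := by
  cases ℓ with
  | zero => rfl
  | succ k => rw [gseq, gseq, hseq_update _ _ _ _ _ (by omega), Wat_update_of_le W j G h]

/-- The vector `D_b W_b ⋯ D_a W_a v` (equal to `v` for `b < a`). -/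
def pvec (A : Fin m → Fin 𝔡 → ℝ) (W : Fin L → Fin m → Fin m → ℝ) (x : Fin 𝔡 → ℝ)
    (a b : ℕ) (v : Fin m → ℝ) : Fin m → ℝ := mulVec (prodDW A W x a b) v

lemma pvec_zero (A : Fin m → Fin 𝔡 → ℝ) (W : Fin L → Fin m → Fin m → ℝ) (x : Fin 𝔡 → ℝ)
    (a : ℕ) (v : Fin m → ℝ) : pvec A W x a 0 v = v := by
  unfold pvec prodDW; rw [chainProd, mulVec_idMat]

lemma pvec_succ (A : Fin m → Fin 𝔡 → ℝ) (W : Fin L → Fin m → Fin m → ℝ) (x : Fin 𝔡 → ℝ)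
    {a : ℕ} (j : Fin L) (h : a ≤ j + 1) (v : Fin m → ℝ) :
    pvec A W x a (j + 1) v
      = signOf (gseq A W x (j + 1)) * mulVec (W j) (pvec A W x a j v) := by
  unfold pvec prodDW
  rw [chainProd, if_pos ⟨h, by omega⟩, mulVec_mmul, mulVec_mmul, mulVec_diagMat, Wat_succ]

lemma pvec_of_lt (A : Fin m → Fin 𝔡 → ℝ) (W : Fin L → Fin m → Fin m → ℝ) (x : Fin 𝔡 → ℝ)
    {a b : ℕ} (h : b < a) (v : Fin m → ℝ) : pvec A W x a b v = v := by
  induction b with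
  | zero => exact pvec_zero ..
  | succ b ih =>
    unfold pvec prodDW at *
    rw [chainProd, if_neg (by omega), ih (by omega)]

lemma pvec_update (A : Fin m → Fin 𝔡 → ℝ) (W : Fin L → Fin m → Fin m → ℝ) (x : Fin 𝔡 → ℝ)
    (j : Fin L) (G : Fin m → Fin m → ℝ) {a b : ℕ} (h : b ≤ j) (v : Fin m → ℝ) :
    pvec A (Function.update W j G) x a b v = pvec A W x a b v := by
  induction b with
  | zero => rw [pvec_zero, pvec_zero]
  | succ b ih =>
    unfold pvec prodDW at *
    rw [chainProd, chainProd]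
    split_ifs with h1
    · rw [mulVec_mmul, mulVec_mmul, mulVec_mmul, mulVec_mmul, ih (by omega),
        Wat_update_of_le _ _ _ h, gseq_update _ _ _ _ _ h]
    · exact ih (by omega)

@[fun_prop]
lemma measurable_signOf {p : ℕ} : Measurable (signOf : (Fin p → ℝ) → Fin p → ℝ) := by
  refine measurable_pi_lambda _ fun k => ?_
  exact Measurable.ite (measurableSet_le measurable_const (measurable_pi_apply k))
    measurable_const measurable_const

@[fun_prop]
lemma measurable_relu {p : ℕ} : Measurable (relu : (Fin p → ℝ) → Fin p → ℝ) := by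
  refine measurable_pi_lambda _ fun k => ?_
  exact (measurable_pi_apply k).max measurable_const

@[fun_prop]
lemma measurable_Wat (ℓ : ℕ) : Measurable fun z : Init 𝔡 m d L => Wat z.2.1 ℓ := by
  unfold Wat
  split_ifs <;> fun_prop

@[fun_prop]
lemma measurable_hseq (x : Fin 𝔡 → ℝ) (ℓ : ℕ) :
    Measurable fun z : Init 𝔡 m d L => hseq z.1 z.2.1 x ℓ := by
  induction ℓ with
  | zero => unfold hseq; fun_prop
  | succ k ih => unfold hseq; split_ifs <;> fun_prop

@[fun_prop]
lemma measurable_gseq (x : Fin 𝔡 → ℝ) (ℓ : ℕ) :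
    Measurable fun z : Init 𝔡 m d L => gseq z.1 z.2.1 x ℓ := by
  cases ℓ with
  | zero => unfold gseq; fun_prop
  | succ k => unfold gseq; fun_prop

@[fun_prop]
lemma measurable_pvec (x : Fin 𝔡 → ℝ) (a b : ℕ) (v : Fin m → ℝ) :
    Measurable fun z : Init 𝔡 m d L => pvec z.1 z.2.1 x a b v := by
  induction b with
  | zero => simp only [pvec_zero]; fun_prop
  | succ b ih =>
    have : ∀ z : Init 𝔡 m d L, pvec z.1 z.2.1 x a (b + 1) v =
        if a ≤ b + 1 ∧ b + 1 ≤ L then signOf (gseq z.1 z.2.1 x (b + 1)) *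
          mulVec (Wat z.2.1 (b + 1)) (pvec z.1 z.2.1 x a b v) else pvec z.1 z.2.1 x a b v := by
      intro z
      unfold pvec prodDW
      rw [chainProd]
      split_ifs
      · rw [mulVec_mmul, mulVec_mmul, mulVec_diagMat]
      · rfl
    simp only [this]
    split_ifs
    · fun_prop
    · exact ih

end Conditioning

/-! ### Nets, block decompositions and union bounds -/

/-- A maximal `1`-separated subset of the ball of radius `2`; its size is bounded by comparing
volumes of balls. -/
lemma exists_net (E : Type*) [NormedAddCommGroup E] [NormedSpace ℝ E] [FiniteDimensional ℝ E] :
    ∃ N : Finset E, N.card ≤ 5 ^ Module.finrank ℝ E ∧ (∀ c ∈ N, ‖c‖ ≤ 2) ∧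
      ∀ v : E, ‖v‖ ≤ 2 → ∃ c ∈ N, ‖v - c‖ < 1 := by
  classical
  let P : Finset E → Prop := fun s => (∀ c ∈ s, ‖c‖ ≤ 2) ∧ ∀ c ∈ s, ∀ d ∈ s, c ≠ d → 1 ≤ ‖c - d‖
  have hP : ∀ s, P s → s.card ≤ 5 ^ Module.finrank ℝ E := fun s hs =>
    Besicovitch.card_le_of_separated s hs.1 hs.2
  -- a separated set of maximal cardinality is a net
  obtain ⟨k, ⟨N, hN, rfl⟩, hmax⟩ : ∃ k, (∃ s, P s ∧ s.card = k) ∧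
      ∀ k', (∃ s, P s ∧ s.card = k') → k' ≤ k := by
    have hex : ∃ k, ∃ s, P s ∧ s.card = k := ⟨0, ∅, ⟨by simp, by simp⟩, rfl⟩
    have hb : ∀ k, (∃ s, P s ∧ s.card = k) → k ≤ 5 ^ Module.finrank ℝ E := by
      rintro k ⟨s, hs, rfl⟩; exact hP s hs
    refine ⟨Nat.findGreatest (fun k => ∃ s, P s ∧ s.card = k) (5 ^ Module.finrank ℝ E), ?_, ?_⟩
    · obtain ⟨k, hk⟩ := hex
      exact Nat.findGreatest_spec (P := fun k => ∃ s, P s ∧ s.card = k) (hb k hk) hk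
    · intro k' hk'
      exact Nat.le_findGreatest (hb k' hk') hk'
  refine ⟨N, hP N hN, hN.1, fun v hv => ?_⟩
  by_contra hcon
  push Not at hcon
  have hvN : v ∉ N := fun h => by
    have := hcon v h; simp at this; linarith
  have hins : P (insert v N) := by
    refine ⟨?_, ?_⟩
    · intro c hc
      rcases Finset.mem_insert.1 hc with rfl | hc
      · exact hv
      · exact hN.1 c hc
    · intro c hc e he hne
      rw [Finset.mem_insert] at hc he
      rcases hc with rfl | hc <;> rcases he with rfl | he
      · exact absurd rfl hne
      · exact hcon e he
      · rw [norm_sub_rev]; exact hcon c hc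
      · exact hN.2 c hc e he hne
  have := hmax _ ⟨_, hins, rfl⟩
  rw [Finset.card_insert_of_notMem hvN] at this
  omega

/-- A linear map that is bounded on a net of the ball of radius `2` is bounded, at the cost of a
factor `2`. -/
lemma net_clm {E F : Type*} [NormedAddCommGroup E] [NormedSpace ℝ E] [NormedAddCommGroup F]
    [NormedSpace ℝ F] {N : Finset E} (hN : ∀ v : E, ‖v‖ ≤ 2 → ∃ c ∈ N, ‖v - c‖ < 1)
    (f : E →L[ℝ] F) {M : ℝ} (hM : 0 ≤ M) (h : ∀ c ∈ N, ‖f c‖ ≤ M * ‖c‖)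
    (hN2 : ∀ c ∈ N, ‖c‖ ≤ 2) (v : E) : ‖f v‖ ≤ 2 * M * ‖v‖ := by
  have h1 : ‖f‖ ≤ M + ‖f‖ / 2 := by
    refine f.opNorm_le_bound (by positivity) fun w => ?_
    rcases (norm_nonneg w).eq_or_lt with h0 | h0
    · rw [norm_eq_zero.1 h0.symm]; simp
    · set u : E := (2 / ‖w‖) • w with hu
      have hun : ‖u‖ = 2 := by
        rw [hu, norm_smul, Real.norm_of_nonneg (by positivity)]; field_simp
      obtain ⟨c, hc, hcv⟩ := hN u hun.le
      have h2 : ‖f u‖ ≤ 2 * M + ‖f‖ := by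
        have : f u = f c + f (u - c) := by rw [← map_add]; congr 1; abel
        rw [this]
        refine (norm_add_le _ _).trans (add_le_add ?_ ?_)
        · refine (h c hc).trans ?_
          nlinarith [hN2 c hc]
        · refine (f.le_opNorm _).trans ?_
          nlinarith [norm_nonneg f]
      have h3 : ‖f u‖ = 2 / ‖w‖ * ‖f w‖ := by
        rw [hu, map_smul, norm_smul, Real.norm_of_nonneg (by positivity)]
      rw [h3, div_mul_eq_mul_div, div_le_iff₀ h0] at h2
      linarith
  have h2 : ‖f‖ ≤ 2 * M := by linarith
  exact (f.le_opNorm v).trans (mul_le_mul_of_nonneg_right h2 (norm_nonneg v))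

/-- Extension by zero of a vector indexed by a coordinate set. -/
def extZ {m : ℕ} (T : Finset (Fin m)) : EuclideanSpace ℝ T →ₗ[ℝ] (Fin m → ℝ) where
  toFun u := fun k => if h : k ∈ T then u ⟨k, h⟩ else 0
  map_add' u v := by ext k; simp only [Pi.add_apply]; split_ifs <;> simp
  map_smul' c u := by ext k; simp only [Pi.smul_apply]; split_ifs <;> simp

lemma l2_extZ {m : ℕ} (T : Finset (Fin m)) (u : EuclideanSpace ℝ T) : l2 (extZ T u) = ‖u‖ := by
  rw [EuclideanSpace.norm_eq]
  unfold l2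
  congr 1
  rw [← Finset.sum_subset (Finset.subset_univ T), ← Finset.sum_coe_sort T]
  · refine Finset.sum_congr rfl fun k _ => ?_
    simp [extZ]
  · intro k _ hk
    simp [extZ, hk]

/-- For every coordinate set `T` there is a net of `5 ^ #T` vectors controlling the operator norm
of every matrix on vectors supported in `T`. -/
lemma exists_support_net {m : ℕ} (T : Finset (Fin m)) :
    ∃ N : Finset (Fin m → ℝ), N.card ≤ 5 ^ T.card ∧
      ∀ (p : ℕ) (Mx : Fin p → Fin m → ℝ) (M : ℝ), 0 ≤ M → (∀ c ∈ N, l2 (mulVec Mx c) ≤ M * l2 c) →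
        ∀ v : Fin m → ℝ, (∀ k ∉ T, v k = 0) → l2 (mulVec Mx v) ≤ 2 * M * l2 v := by
  classical
  obtain ⟨N, hN1, hN2, hN3⟩ := exists_net (EuclideanSpace ℝ T)
  refine ⟨N.image (extZ T), Finset.card_image_le.trans (by simpa using hN1), ?_⟩
  intro p Mx M hM hc v hv
  let f : EuclideanSpace ℝ T →ₗ[ℝ] EuclideanSpace ℝ (Fin p) :=
    { toFun := fun u => WithLp.toLp 2 (mulVec Mx (extZ T u))
      map_add' := fun u w => by rw [map_add, mulVec_add, WithLp.toLp_add]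
      map_smul' := fun c u => by rw [map_smul, mulVec_smul, WithLp.toLp_smul]; rfl }
  have hf : ∀ u, ‖f.toContinuousLinearMap u‖ = l2 (mulVec Mx (extZ T u)) := fun u => by
    rw [l2_eq_norm]; rfl
  have hvext : v = extZ T (WithLp.toLp 2 fun k => v k) := by
    ext k
    by_cases hk : k ∈ T
    · simp [extZ, hk]
    · simp [extZ, hk, hv k hk]
  have h := net_clm hN3 f.toContinuousLinearMap hM (fun c hcN => by
    rw [hf, ← l2_extZ]; exact hc _ (Finset.mem_image_of_mem _ hcN)) hN2
    (WithLp.toLp 2 fun k => v k)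
  rwa [hf, ← l2_extZ, ← hvext] at h

lemma union_bound {Ω ι : Type*} [MeasurableSpace Ω] (μ : Measure Ω) (I : Finset ι) (E : ι → Set Ω)
    {r y : ℝ} (hcard : (I.card : ℝ) ≤ Real.exp r)
    (h : ∀ i ∈ I, μ (E i) ≤ ENNReal.ofReal (Real.exp (-y))) :
    μ (⋃ i ∈ I, E i) ≤ ENNReal.ofReal (Real.exp (-(y - r))) := by
  refine (measure_biUnion_finset_le I E).trans ?_
  refine (Finset.sum_le_sum h).trans ?_
  rw [Finset.sum_const, nsmul_eq_mul, ← ENNReal.ofReal_natCast,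
    ← ENNReal.ofReal_mul (Nat.cast_nonneg _)]
  refine ENNReal.ofReal_le_ofReal ?_
  refine (mul_le_mul_of_nonneg_right hcard (Real.exp_nonneg _)).trans (le_of_eq ?_)
  rw [← Real.exp_add]; congr 1; ring

/-- The restriction of a vector to a coordinate set. -/
def restr {m : ℕ} (S : Finset (Fin m)) (v : Fin m → ℝ) : Fin m → ℝ := fun k => if k ∈ S then v k else 0

lemma l2_restr_sq {m : ℕ} (S : Finset (Fin m)) (v : Fin m → ℝ) :
    l2 (restr S v) ^ 2 = ∑ k ∈ S, v k ^ 2 := by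
  rw [l2_sq, ← Finset.sum_subset (Finset.subset_univ S)]
  · exact Finset.sum_congr rfl fun k hk => by simp [restr, hk]
  · intro k _ hk; simp [restr, hk]

lemma restr_eq_mulVec {m : ℕ} (S : Finset (Fin m)) (v : Fin m → ℝ) :
    restr S v = mulVec (diagMat fun k => if k ∈ S then 1 else 0) v := by
  rw [mulVec_diagMat]; ext k; simp [restr]

lemma l2_restr_le {m : ℕ} (S : Finset (Fin m)) (v : Fin m → ℝ) : l2 (restr S v) ≤ l2 v := by
  apply l2_mono
  intro k; unfold restr; split_ifs <;> simp

/-- The block `{k : k / q = b}` of `q` consecutive coordinates. -/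
def block (m q b : ℕ) : Finset (Fin m) := Finset.univ.filter fun k => (k : ℕ) / q = b

lemma card_block {m q : ℕ} (hq : 0 < q) (b : ℕ) : (block m q b).card ≤ q := by
  have : (block m q b).card ≤ (Finset.range q).card := by
    refine Finset.card_le_card_of_injOn (fun k => (k : ℕ) % q) ?_ ?_
    · intro k _; simpa using Nat.mod_lt _ hq
    · intro k hk k' hk' h
      simp only [block, Finset.coe_filter, Finset.mem_univ, true_and, Set.mem_ofPred_eq] at hk hk'
      ext
      rw [← Nat.div_add_mod (k : ℕ) q, ← Nat.div_add_mod (k' : ℕ) q, hk, hk']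
      simp only at h
      rw [h]
  simpa using this

/-- An operator bound on each of the coordinate blocks of length `q` gives a bound on the whole
space, with the square root of the number of blocks lost to Cauchy–Schwarz. -/
lemma block_bound {m p q : ℕ} (Mx : Fin p → Fin m → ℝ) {M : ℝ} (hM : 0 ≤ M)
    (h : ∀ b ∈ Finset.range (m / q + 1), ∀ v : Fin m → ℝ, (∀ k ∉ block m q b, v k = 0) →
      l2 (mulVec Mx v) ≤ M * l2 v) (v : Fin m → ℝ) :
    l2 (mulVec Mx v) ≤ M * Real.sqrt ((m / q + 1 : ℕ) : ℝ) * l2 v := by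
  set nb := m / q + 1
  have hdec : v = ∑ b ∈ Finset.range nb, restr (block m q b) v := by
    ext k
    simp only [Finset.sum_apply, restr, block, Finset.mem_filter, Finset.mem_univ, true_and]
    rw [Finset.sum_ite_eq, if_pos]
    simp only [Finset.mem_range, nb]
    exact Nat.lt_succ_of_le (Nat.div_le_div_right k.2.le)
  have hsq : ∑ b ∈ Finset.range nb, l2 (restr (block m q b) v) ^ 2 = l2 v ^ 2 := by
    simp only [l2_restr_sq]
    rw [l2_sq]
    have := Finset.sum_fiberwise_of_maps_to (s := (Finset.univ : Finset (Fin m)))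
      (t := Finset.range nb) (g := fun k => (k : ℕ) / q) (fun k _ => by
        simp only [Finset.mem_range, nb]
        exact Nat.lt_succ_of_le (Nat.div_le_div_right k.2.le)) (fun k => v k ^ 2)
    exact this
  calc l2 (mulVec Mx v) = l2 (∑ b ∈ Finset.range nb, mulVec Mx (restr (block m q b) v)) := by
        conv_lhs => rw [hdec]
        rw [mulVec_sum]
    _ ≤ ∑ b ∈ Finset.range nb, l2 (mulVec Mx (restr (block m q b) v)) := l2_sum_le _ _
    _ ≤ ∑ b ∈ Finset.range nb, M * l2 (restr (block m q b) v) := by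
        refine Finset.sum_le_sum fun b hb => h b hb _ fun k hk => ?_
        simp [restr, hk]
    _ = M * ∑ b ∈ Finset.range nb, l2 (restr (block m q b) v) := by rw [Finset.mul_sum]
    _ ≤ M * (Real.sqrt nb * l2 v) := by
        refine mul_le_mul_of_nonneg_left ?_ hM
        have h1 := sq_sum_le_card_mul_sum_sq (s := Finset.range nb)
          (f := fun b => l2 (restr (block m q b) v))
        rw [hsq, Finset.card_range] at h1
        refine (Real.le_sqrt_of_sq_le h1).trans (le_of_eq ?_)
        rw [Real.sqrt_mul (Nat.cast_nonneg _), Real.sqrt_sq (l2_nonneg _)]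
    _ = _ := by ring

/-! ### Operator norms of the layer chains at initialization -/

section Chains
variable {𝔡 m d L : ℕ}

/-- The bad event that layer `j + 1` inflates the chain applied to `v`. -/
def evP (d : ℕ) (x : Fin 𝔡 → ℝ) (a : ℕ) (j : Fin L) (v : Fin m → ℝ) : Set (Init 𝔡 m d L) :=
  {z | a ≤ (j : ℕ) + 1 ∧ hseq z.1 z.2.1 x j ≠ 0 ∧
    (1 + 1 / L) * l2 (pvec z.1 z.2.1 x a j v) ^ 2 < l2 (pvec z.1 z.2.1 x a (j + 1) v) ^ 2}

/-- The bad event that the rows `S` of `W_{j+1}` are large on the chain applied to `v`. -/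
def evR (d : ℕ) (x : Fin 𝔡 → ℝ) (t : ℝ) (a : ℕ) (j : Fin L) (S : Finset (Fin m)) (v : Fin m → ℝ) :
    Set (Init 𝔡 m d L) :=
  {z | t * (((2 / m : NNReal) : ℝ) * l2 (pvec z.1 z.2.1 x a j v) ^ 2)
    < ∑ k ∈ S, mulVec (z.2.1 j) (pvec z.1 z.2.1 x a j v) k ^ 2}

/-- The bad event that `B` is large on the full chain applied to `v`. -/
def evB (d L : ℕ) (x : Fin 𝔡 → ℝ) (t : ℝ) (a : ℕ) (v : Fin m → ℝ) :
    Set (Init 𝔡 m d L) :=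
  {z | t * (((1 / d : NNReal) : ℝ) * l2 (pvec z.1 z.2.1 x a L v) ^ 2)
    < ∑ k, mulVec z.2.2 (pvec z.1 z.2.1 x a L v) k ^ 2}

lemma measure_evP (hm : 0 < m) (hL : 0 < L) (x : Fin 𝔡 → ℝ) (a : ℕ) (j : Fin L) (v : Fin m → ℝ) :
    initMeasure 𝔡 m d L (evP d x a j v)
      ≤ ENNReal.ofReal (Real.exp (-(m / (30 * (L : ℝ) ^ 2)))) := by
  by_cases ha : a ≤ (j : ℕ) + 1
  swap
  · have : evP d x a j v = (∅ : Set (Init 𝔡 m d L)) := by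
      ext z; simp [evP, ha]
    rw [this]; simp
  have hL1 : (1 : ℝ) ≤ L := by exact_mod_cast hL
  have hmeas : MeasurableSet (evP d x a j v : Set (Init 𝔡 m d L)) := by
    unfold evP
    refine MeasurableSet.inter (s₁ := {z | a ≤ (j : ℕ) + 1}) (MeasurableSet.const _) ?_
    refine MeasurableSet.inter (s₁ := {z : Init 𝔡 m d L | hseq z.1 z.2.1 x j ≠ 0})
      (s₂ := {z : Init 𝔡 m d L | (1 + 1 / (L : ℝ)) * l2 (pvec z.1 z.2.1 x a j v) ^ 2
        < l2 (pvec z.1 z.2.1 x a (j + 1) v) ^ 2}) ?_ ?_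
    · exact (measurable_hseq x j) (measurableSet_singleton (0 : Fin m → ℝ)).compl
    · exact measurableSet_lt (by fun_prop) (by fun_prop)
  refine cond_W hmeas j fun A W B => ?_
  by_cases hh : hseq A W x j = 0
  · refine (measure_mono (t := ∅) ?_).trans (by simp)
    rintro G ⟨-, h2, -⟩
    simp only [hseq_update _ _ _ _ _ le_rfl] at h2
    exact h2 hh
  refine (measure_mono ?_).trans ((layer_upper hm (hseq A W x j) (pvec A W x a j v) hh
    (ε := 1 / L) (by positivity) (by rw [div_le_one (by positivity)]; exact hL1)).trans
      (le_of_eq ?_))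
  · rintro G ⟨-, -, h3⟩
    simp only [pvec_succ _ _ _ j ha, pvec_update _ _ _ _ _ le_rfl, gseq_succ,
      hseq_update _ _ _ _ _ le_rfl, Function.update_self] at h3
    exact h3
  · congr 3; field_simp

lemma measure_evR (hm : 0 < m) (x : Fin 𝔡 → ℝ) {t : ℝ} (a : ℕ) (j : Fin L) (S : Finset (Fin m))
    (v : Fin m → ℝ) (ht : 4 * (S.card : ℝ) ≤ t) :
    initMeasure 𝔡 m d L (evR d x t a j S v) ≤ ENNReal.ofReal (Real.exp (-(t / 8))) := by
  have hmeas : MeasurableSet (evR d x t a j S v : Set (Init 𝔡 m d L)) := by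
    unfold evR
    exact measurableSet_lt (by fun_prop) (by fun_prop)
  refine cond_W hmeas j fun A W B => ?_
  have hv : (2 / m : NNReal) ≠ 0 := by
    have : (m : NNReal) ≠ 0 := by exact_mod_cast hm.ne'
    positivity
  refine (measure_mono ?_).trans (layer_rows (2 / m) hv S (pvec A W x a j v) ht)
  intro G hG
  simp only [evR, Set.mem_ofPred_eq, pvec_update _ _ _ _ _ le_rfl, Function.update_self] at hG
  exact hG

lemma measure_evB (hd : 0 < d) (x : Fin 𝔡 → ℝ) {t : ℝ} (a : ℕ)
    (v : Fin m → ℝ) (ht : 4 * (d : ℝ) ≤ t) :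
    initMeasure 𝔡 m d L (evB d L x t a v) ≤ ENNReal.ofReal (Real.exp (-(t / 8))) := by
  have hmeas : MeasurableSet (evB d L x t a v : Set (Init 𝔡 m d L)) := by
    unfold evB
    exact measurableSet_lt (by fun_prop) (by fun_prop)
  refine cond_B hmeas fun A W => ?_
  have hv : (1 / d : NNReal) ≠ 0 := by
    have : (d : NNReal) ≠ 0 := by exact_mod_cast hd.ne'
    positivity
  refine (measure_mono ?_).trans (layer_rows (1 / d) hv Finset.univ (pvec A W x a L v) (by simpa using ht))
  intro G hG
  exact hG

lemma pvec_bound (hL : 0 < L) (x : Fin 𝔡 → ℝ) (a : ℕ) (v : Fin m → ℝ) (z : Init 𝔡 m d L)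
    (hh : ∀ j : Fin L, hseq z.1 z.2.1 x j ≠ 0) (hz : ∀ j : Fin L, z ∉ evP d x a j v) {b : ℕ}
    (hb : b ≤ L) : l2 (pvec z.1 z.2.1 x a b v) ^ 2 ≤ 3 * l2 v ^ 2 := by
  have hL0 : (0 : ℝ) < L := by exact_mod_cast hL
  have key : ∀ b ≤ L, l2 (pvec z.1 z.2.1 x a b v) ^ 2 ≤ (1 + 1 / (L : ℝ)) ^ b * l2 v ^ 2 := by
    intro b
    induction b with
    | zero => intro _; rw [pvec_zero]; simp
    | succ b ih =>
      intro hb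
      by_cases hab : b + 1 < a
      · rw [pvec_of_lt _ _ _ hab]
        exact le_mul_of_one_le_left (by positivity) (one_le_pow₀ (by simp))
      · have h1 := hz ⟨b, by omega⟩
        have h2 := hh ⟨b, by omega⟩
        simp only [evP, Set.mem_ofPred_eq] at h1 h2
        push Not at h1
        have h3 := h1 (by omega) h2
        refine h3.trans ?_
        rw [pow_succ' (1 + 1 / (L : ℝ)) b, mul_assoc]
        exact mul_le_mul_of_nonneg_left (ih (by omega)) (by positivity)
  refine (key b hb).trans (mul_le_mul_of_nonneg_right ?_ (by positivity))
  calc (1 + 1 / (L : ℝ)) ^ b ≤ (1 + 1 / (L : ℝ)) ^ L := pow_le_pow_right₀ (by simp) hb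
    _ ≤ Real.exp (1 / L) ^ L := by
        refine pow_le_pow_left₀ (by positivity) ?_ _
        rw [add_comm]; exact Real.add_one_le_exp _
    _ = Real.exp 1 := by rw [← Real.exp_nat_mul]; congr 1; field_simp
    _ ≤ 3 := by linarith [Real.exp_one_lt_d9]

/-- A finite set of test vectors controlling all vectors supported in a set of the family. -/
def netOf (𝒯 : Finset (Finset (Fin m))) : Finset (Fin m → ℝ) :=
  open Classical in 𝒯.biUnion fun T => (exists_support_net T).choose

lemma card_netOf (𝒯 : Finset (Finset (Fin m))) {q : ℕ} (h : ∀ T ∈ 𝒯, T.card ≤ q) :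
    (netOf 𝒯).card ≤ 𝒯.card * 5 ^ q := by
  classical
  unfold netOf
  refine Finset.card_biUnion_le_card_mul _ _ _ fun T hT => ?_
  refine (exists_support_net T).choose_spec.1.trans ?_
  exact Nat.pow_le_pow_right (by norm_num) (h T hT)

lemma netOf_spec (𝒯 : Finset (Finset (Fin m))) {T : Finset (Fin m)} (hT : T ∈ 𝒯) {p : ℕ}
    (Mx : Fin p → Fin m → ℝ) {M : ℝ} (hM : 0 ≤ M)
    (h : ∀ c ∈ netOf 𝒯, l2 (mulVec Mx c) ≤ M * l2 c) (v : Fin m → ℝ) (hv : ∀ k ∉ T, v k = 0) :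
    l2 (mulVec Mx v) ≤ 2 * M * l2 v := by
  classical
  refine (exists_support_net T).choose_spec.2 p Mx M hM (fun c hc => h c ?_) v hv
  unfold netOf
  exact Finset.mem_biUnion.2 ⟨T, hT, hc⟩

lemma chain_event_P (hm : 0 < m) (hL : 0 < L) (x : Fin 𝔡 → ℝ) (V : Finset (Fin m → ℝ))
    {rV rJ : ℝ} (hV : (V.card : ℝ) ≤ Real.exp rV) (hJ : ((L : ℝ) + 2) * L ≤ Real.exp rJ) :
    ∃ E : Set (Init 𝔡 m d L),
      initMeasure 𝔡 m d L E ≤ ENNReal.ofReal (Real.exp (-(m / (30 * (L : ℝ) ^ 2) - (rV + rJ)))) ∧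
      ∀ z ∉ E, (∀ j : Fin L, hseq z.1 z.2.1 x j ≠ 0) → ∀ v ∈ V, ∀ a ≤ L + 1, ∀ b ≤ L,
        l2 (pvec z.1 z.2.1 x a b v) ^ 2 ≤ 3 * l2 v ^ 2 := by
  classical
  refine ⟨⋃ i ∈ V ×ˢ (Finset.range (L + 2) ×ˢ (Finset.univ : Finset (Fin L))),
    evP d x i.2.1 i.2.2 i.1, ?_, ?_⟩
  · refine union_bound _ _ _ ?_ fun i _ => measure_evP hm hL x _ _ _
    rw [Finset.card_product, Finset.card_product, Finset.card_range, Finset.card_univ,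
      Fintype.card_fin, Real.exp_add]
    push_cast
    exact mul_le_mul hV hJ (by positivity) (Real.exp_nonneg _)
  · intro z hz hh v hv a ha b hb
    refine pvec_bound hL x a v z hh (fun j hj => hz ?_) hb
    simp only [Set.mem_iUnion]
    exact ⟨(v, a, j), by simp [hv]; omega, hj⟩

/-- Chains from coordinates in `T` to coordinates in `S`: the input side is handled by a net on each
`T`, the output side by a chi-square tail over the rows in `S`. -/
lemma chain_event_R (hm : 0 < m) (hL : 0 < L) (x : Fin 𝔡 → ℝ) (𝒯 𝒮 : Finset (Finset (Fin m)))
    {q : ℕ} (hT : ∀ T ∈ 𝒯, T.card ≤ q) {t rV rJ rS : ℝ} (ht0 : 0 ≤ t)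
    (ht : ∀ S ∈ 𝒮, 4 * (S.card : ℝ) ≤ t)
    (hV : (𝒯.card : ℝ) * 5 ^ q ≤ Real.exp rV) (hJ : ((L : ℝ) + 2) * L ≤ Real.exp rJ)
    (hS : (𝒮.card : ℝ) ≤ Real.exp rS) :
    ∃ E : Set (Init 𝔡 m d L),
      initMeasure 𝔡 m d L E ≤ ENNReal.ofReal (Real.exp (-(m / (30 * (L : ℝ) ^ 2) - (rV + rJ))))
        + ENNReal.ofReal (Real.exp (-(t / 8 - (rV + rJ + rS)))) ∧
      ∀ z ∉ E, (∀ j : Fin L, hseq z.1 z.2.1 x j ≠ 0) → ∀ T ∈ 𝒯, ∀ S ∈ 𝒮, ∀ v : Fin m → ℝ,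
        (∀ k ∉ T, v k = 0) → ∀ j : Fin L, ∀ a ≤ L + 1,
        l2 (restr S (mulVec (z.2.1 j) (pvec z.1 z.2.1 x a j v)))
          ≤ 2 * Real.sqrt (6 * t / m) * l2 v := by
  classical
  have hV' : ((netOf 𝒯).card : ℝ) ≤ Real.exp rV :=
    le_trans (by exact_mod_cast card_netOf 𝒯 hT) hV
  obtain ⟨E1, hE1, hE1'⟩ := chain_event_P (d := d) hm hL x (netOf 𝒯) hV' hJ
  refine ⟨E1 ∪ ⋃ i ∈ netOf 𝒯 ×ˢ (Finset.range (L + 2) ×ˢ (Finset.univ : Finset (Fin L))) ×ˢ 𝒮,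
    evR d x t i.2.1.1 i.2.1.2 i.2.2 i.1, ?_, ?_⟩
  · refine (measure_union_le _ _).trans (add_le_add hE1 ?_)
    refine union_bound _ _ _ ?_ fun i hi => measure_evR hm x _ _ _ _ (ht _ ?_)
    · rw [Finset.card_product, Finset.card_product, Finset.card_product, Finset.card_range,
        Finset.card_univ, Fintype.card_fin, add_assoc, Real.exp_add, Real.exp_add]
      push_cast
      exact mul_le_mul hV' (mul_le_mul hJ hS (by positivity) (Real.exp_nonneg _)) (by positivity)
        (Real.exp_nonneg _)
    · simp only [Finset.mem_product] at hi; exact hi.2.2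
  · intro z hz hh T hT' S hS' v hv j a ha
    rw [Set.mem_union, not_or] at hz
    have hmat : ∀ c, restr S (mulVec (z.2.1 j) (pvec z.1 z.2.1 x a j c))
        = mulVec (mmul (diagMat fun k => if k ∈ S then 1 else 0)
          (mmul (z.2.1 j) (prodDW z.1 z.2.1 x a j))) c := fun c => by
      rw [mulVec_mmul, mulVec_mmul, restr_eq_mulVec]; rfl
    rw [hmat]
    refine netOf_spec 𝒯 hT' _ (Real.sqrt_nonneg _) (fun c hc => ?_) v hv
    rw [← hmat]
    have h1 := hE1' z hz.1 hh c hc a ha j j.2.le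
    have h2 : z ∉ evR d x t a j S c := fun h => hz.2 (by
      simp only [Set.mem_iUnion]
      exact ⟨(c, (a, j), S), by simp [hc, hS']; omega, h⟩)
    simp only [evR, Set.mem_ofPred_eq, not_lt] at h2
    rw [← l2_restr_sq] at h2
    have hm0 : (0 : ℝ) < m := by exact_mod_cast hm
    refine (sq_le_sq₀ (l2_nonneg _) (mul_nonneg (Real.sqrt_nonneg _) (l2_nonneg _))).1 ?_
    rw [mul_pow, Real.sq_sqrt (by positivity)]
    refine h2.trans ?_
    push_cast
    calc t * (2 / (m : ℝ) * l2 (pvec z.1 z.2.1 x a j c) ^ 2) ≤ t * (2 / (m : ℝ) * (3 * l2 c ^ 2)) := by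
          gcongr
      _ = _ := by ring

lemma chain_event_B (hm : 0 < m) (hd : 0 < d) (hL : 0 < L) (x : Fin 𝔡 → ℝ)
    (𝒯 : Finset (Finset (Fin m)))
    {q : ℕ} (hT : ∀ T ∈ 𝒯, T.card ≤ q) {t rV rJ : ℝ} (ht0 : 0 ≤ t) (ht : 4 * (d : ℝ) ≤ t)
    (hV : (𝒯.card : ℝ) * 5 ^ q ≤ Real.exp rV) (hJ : ((L : ℝ) + 2) * L ≤ Real.exp rJ) :
    ∃ E : Set (Init 𝔡 m d L),
      initMeasure 𝔡 m d L E ≤ ENNReal.ofReal (Real.exp (-(m / (30 * (L : ℝ) ^ 2) - (rV + rJ))))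
        + ENNReal.ofReal (Real.exp (-(t / 8 - (rV + rJ)))) ∧
      ∀ z ∉ E, (∀ j : Fin L, hseq z.1 z.2.1 x j ≠ 0) → ∀ T ∈ 𝒯, ∀ v : Fin m → ℝ,
        (∀ k ∉ T, v k = 0) → ∀ a ≤ L + 1,
        l2 (mulVec z.2.2 (pvec z.1 z.2.1 x a L v)) ≤ 2 * Real.sqrt (3 * t / d) * l2 v := by
  classical
  have hV' : ((netOf 𝒯).card : ℝ) ≤ Real.exp rV :=
    le_trans (by exact_mod_cast card_netOf 𝒯 hT) hV
  have hL1 : (1 : ℝ) ≤ L := by exact_mod_cast hL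
  obtain ⟨E1, hE1, hE1'⟩ := chain_event_P (d := d) hm hL x (netOf 𝒯) hV' hJ
  refine ⟨E1 ∪ ⋃ i ∈ netOf 𝒯 ×ˢ (Finset.range (L + 2)), evB d L x t i.2 i.1, ?_, ?_⟩
  · refine (measure_union_le _ _).trans (add_le_add hE1 ?_)
    refine union_bound _ _ _ ?_ fun i hi => measure_evB hd x _ _ ht
    rw [Finset.card_product, Finset.card_range, Real.exp_add]
    push_cast
    refine mul_le_mul hV' (le_trans ?_ hJ) (by positivity) (Real.exp_nonneg _)
    nlinarith
  · intro z hz hh T hT' v hv a ha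
    rw [Set.mem_union, not_or] at hz
    have hmat : ∀ c, mulVec z.2.2 (pvec z.1 z.2.1 x a L c)
        = mulVec (mmul z.2.2 (prodDW z.1 z.2.1 x a L)) c := fun c => by
      rw [mulVec_mmul]; rfl
    rw [hmat]
    refine netOf_spec 𝒯 hT' _ (Real.sqrt_nonneg _) (fun c hc => ?_) v hv
    rw [← hmat]
    have h1 := hE1' z hz.1 hh c hc a ha L le_rfl
    have h2 : z ∉ evB d L x t a c := fun h => hz.2 (by
      simp only [Set.mem_iUnion]
      exact ⟨(c, a), by simp [hc]; omega, h⟩)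
    simp only [evB, Set.mem_ofPred_eq, not_lt] at h2
    rw [← l2_sq] at h2
    have hd0 : (0 : ℝ) < d := by exact_mod_cast hd
    refine (sq_le_sq₀ (l2_nonneg _) (mul_nonneg (Real.sqrt_nonneg _) (l2_nonneg _))).1 ?_
    rw [mul_pow, Real.sq_sqrt (by positivity)]
    refine h2.trans ?_
    push_cast
    calc t * (1 / (d : ℝ) * l2 (pvec z.1 z.2.1 x a L c) ^ 2) ≤ t * (1 / (d : ℝ) * (3 * l2 c ^ 2)) := by
          gcongr
      _ = _ := by ring

end Chains

/-- Operator-norm control of the chains of one sample: `K` for full chains, `κ` for `s` rows, `η` for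
`s` rows and `s`-sparse inputs, `β` and `ηB` for chains ending with `B`, on arbitrary and on
`s`-sparse inputs. -/
structure ChainGood {𝔡 m d L : ℕ} (z : Init 𝔡 m d L) (x : Fin 𝔡 → ℝ) (s : ℕ)
    (K κ η β ηB : ℝ) : Prop where
  full : ∀ (j : Fin L), ∀ a ≤ L + 1, ∀ v : Fin m → ℝ,
    l2 (mulVec (z.2.1 j) (pvec z.1 z.2.1 x a j v)) ≤ K * l2 v
  rows : ∀ (j : Fin L), ∀ a ≤ L + 1, ∀ S : Finset (Fin m), S.card ≤ s → ∀ v : Fin m → ℝ,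
    l2 (restr S (mulVec (z.2.1 j) (pvec z.1 z.2.1 x a j v))) ≤ κ * l2 v
  sparse : ∀ (j : Fin L), ∀ a ≤ L + 1, ∀ S T : Finset (Fin m), S.card ≤ s → T.card ≤ s →
    ∀ v : Fin m → ℝ, (∀ k ∉ T, v k = 0) →
    l2 (restr S (mulVec (z.2.1 j) (pvec z.1 z.2.1 x a j v))) ≤ η * l2 v
  out : ∀ a ≤ L + 1, ∀ v : Fin m → ℝ,
    l2 (mulVec z.2.2 (pvec z.1 z.2.1 x a L v)) ≤ β * l2 v
  out_sparse : ∀ a ≤ L + 1, ∀ T : Finset (Fin m), T.card ≤ s →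
    ∀ v : Fin m → ℝ, (∀ k ∉ T, v k = 0) →
    l2 (mulVec z.2.2 (pvec z.1 z.2.1 x a L v)) ≤ ηB * l2 v

lemma l2_restr_mono {m : ℕ} {S S' : Finset (Fin m)} (h : S ⊆ S') (v : Fin m → ℝ) :
    l2 (restr S v) ≤ l2 (restr S' v) := by
  refine l2_mono fun k => ?_
  unfold restr
  by_cases hk : k ∈ S
  · simp [hk, h hk]
  · simp [hk]

lemma five_pow_le (q : ℕ) : (5 : ℝ) ^ q ≤ Real.exp (2 * q) := by
  have h5 : (5 : ℝ) ≤ Real.exp 2 := by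
    have h1 := Real.exp_one_gt_d9
    have : Real.exp 2 = Real.exp 1 * Real.exp 1 := by rw [← Real.exp_add]; norm_num
    nlinarith
  calc (5 : ℝ) ^ q ≤ Real.exp 2 ^ q := pow_le_pow_left₀ (by norm_num) h5 q
    _ = _ := by rw [← Real.exp_nat_mul]; congr 1; ring

lemma card_powersetCard_le {m : ℕ} (hm : 0 < m) (s : ℕ) :
    ((Finset.powersetCard s (Finset.univ : Finset (Fin m))).card : ℝ)
      ≤ Real.exp (s * Real.log m) := by
  have hm0 : (0 : ℝ) < m := by exact_mod_cast hm
  rw [Finset.card_powersetCard, Finset.card_univ, Fintype.card_fin, Real.exp_nat_mul,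
    Real.exp_log hm0]
  exact_mod_cast Nat.choose_le_pow m s

lemma exists_ENN_two {a b y : ℝ} (ha : y ≤ a) (hb : y ≤ b) :
    ENNReal.ofReal (Real.exp (-a)) + ENNReal.ofReal (Real.exp (-b))
      ≤ ENNReal.ofReal (2 * Real.exp (-y)) := by
  rw [← ENNReal.ofReal_add (Real.exp_nonneg _) (Real.exp_nonneg _)]
  refine ENNReal.ofReal_le_ofReal ?_
  have h1 : Real.exp (-a) ≤ Real.exp (-y) := Real.exp_le_exp.2 (by linarith)
  have h2 : Real.exp (-b) ≤ Real.exp (-y) := Real.exp_le_exp.2 (by linarith)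
  linarith

set_option maxHeartbeats 2000000 in
/-- With overwhelming probability the chains of a sample satisfy `ChainGood`, as long as its
forward vectors do not vanish. -/
lemma chain_good {𝔡 m d L : ℕ} (hm : 0 < m) (hd : 0 < d) (hL : 2 ≤ L) (x : Fin 𝔡 → ℝ) {s : ℕ}
    (hs : 1 ≤ s) (hds : d ≤ s) (hsm : s ≤ m) (hlog : 1 ≤ Real.log m)
    (hbig : 3000 * s * Real.log m * (L : ℝ) ^ 2 ≤ m) :
    ∃ E : Set (Init 𝔡 m d L),
      initMeasure 𝔡 m d L E ≤ ENNReal.ofReal (10 * Real.exp (-(19 * s * Real.log m))) ∧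
      ∀ z ∉ E, (∀ j : Fin L, hseq z.1 z.2.1 x j ≠ 0) →
        ChainGood z x s (700 * L) 50 (2 * Real.sqrt (1200 * s * Real.log m / m))
          (50 * Real.sqrt (m / d)) (2 * Real.sqrt (600 * s * Real.log m / d)) := by
  classical
  have hm0 : (0 : ℝ) < m := by exact_mod_cast hm
  have hd0 : (0 : ℝ) < d := by exact_mod_cast hd
  have hL2 : (2 : ℝ) ≤ L := by exact_mod_cast hL
  have hs1 : (1 : ℝ) ≤ s := by exact_mod_cast hs
  have hdsR : (d : ℝ) ≤ s := by exact_mod_cast hds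
  set Λ := Real.log m with hΛ
  have hsΛ : (s : ℝ) ≤ s * Λ := le_mul_of_one_le_right (by positivity) hlog
  have hΛs : Λ ≤ s * Λ := le_mul_of_one_le_left (by linarith) hs1
  set U := (s : ℝ) * Λ with hU
  have hU1 : 1 ≤ U := hs1.trans hsΛ
  have hLsq : (4 : ℝ) ≤ (L : ℝ) ^ 2 := by nlinarith
  have hbig' : 3000 * U * (L : ℝ) ^ 2 ≤ m := by rw [hU, ← mul_assoc]; exact hbig
  have hm100 : 100 * U ≤ m / (30 * (L : ℝ) ^ 2) := by
    rw [le_div_iff₀ (by positivity)]; linarith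
  have hexpΛ : Real.exp Λ = m := Real.exp_log hm0
  have hL' : ((L : ℝ) + 2) * L ≤ Real.exp (2 * Λ) := by
    have : Real.exp (2 * Λ) = (m : ℝ) ^ 2 := by
      rw [two_mul, Real.exp_add, hexpΛ, sq]
    rw [this]
    have h1 : (L : ℝ) ^ 2 ≤ m := by nlinarith
    nlinarith
  set PS := Finset.powersetCard s (Finset.univ : Finset (Fin m)) with hPS
  have hPSc : ∀ T ∈ PS, T.card = s := fun T hT => (Finset.mem_powersetCard.1 hT).2
  have hP1 : (PS.card : ℝ) ≤ Real.exp U := card_powersetCard_le hm s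
  have hP2 : (PS.card : ℝ) * 5 ^ s ≤ Real.exp (3 * U) := by
    have h5 := five_pow_le s
    have : Real.exp (3 * U) = Real.exp U * Real.exp (2 * U) := by rw [← Real.exp_add]; ring_nf
    rw [this]
    refine mul_le_mul hP1 (h5.trans (Real.exp_le_exp.2 (by linarith))) (by positivity)
      (Real.exp_nonneg _)
  have hext : ∀ T : Finset (Fin m), T.card ≤ s → ∃ T' ∈ PS, T ⊆ T' := by
    intro T hT
    obtain ⟨T', h1, h2⟩ := Finset.exists_superset_card_eq hT (by simpa using hsm)
    exact ⟨T', Finset.mem_powersetCard.2 ⟨Finset.subset_univ _, h2⟩, h1⟩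
  -- `q` is small enough for a net on a block to survive the union bound with `m / (30 L²)`
  set q := ⌊(m : ℝ) / (240 * (L : ℝ) ^ 2)⌋₊ with hq
  have hq1 : (q : ℝ) ≤ m / (240 * (L : ℝ) ^ 2) := Nat.floor_le (by positivity)
  have hq2 : (m : ℝ) / (240 * (L : ℝ) ^ 2) < q + 1 := Nat.lt_floor_add_one _
  have hq3 : 12.5 * U ≤ m / (240 * (L : ℝ) ^ 2) := by
    rw [le_div_iff₀ (by positivity)]; linarith
  have hqU : 11 * U ≤ q := by linarith
  have hq0' : (0 : ℝ) < q := by linarith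
  have hq0 : 0 < q := by exact_mod_cast hq0'
  have hqm : (q : ℝ) * (240 * (L : ℝ) ^ 2) ≤ m := by
    rwa [le_div_iff₀ (by positivity)] at hq1
  have h8q : 8 * (q : ℝ) ≤ m / (30 * (L : ℝ) ^ 2) := by
    rw [le_div_iff₀ (by positivity)]; linarith
  set nb := m / q + 1 with hnb
  have hnbR : (nb : ℝ) ≤ 529 * (L : ℝ) ^ 2 := by
    have h1 : ((m / q : ℕ) : ℝ) ≤ m / q := Nat.cast_div_le
    have h2 : (m : ℝ) / q ≤ 528 * (L : ℝ) ^ 2 := by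
      rw [div_le_iff₀ hq0']
      rw [div_lt_iff₀ (by positivity)] at hq2
      nlinarith
    rw [hnb]; push_cast; linarith
  have hsqnb : Real.sqrt nb ≤ 23 * L := by
    rw [Real.sqrt_le_left (by positivity)]; nlinarith
  set QS := (Finset.range nb).image (block m q) with hQS
  have hQSc : ∀ T ∈ QS, T.card ≤ q := by
    intro T hT
    obtain ⟨b, -, rfl⟩ := Finset.mem_image.1 hT
    exact card_block hq0 b
  have hQ : (QS.card : ℝ) * 5 ^ q ≤ Real.exp (Λ + 2 * q) := by
    rw [Real.exp_add, hexpΛ]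
    refine mul_le_mul ?_ (five_pow_le q) (by positivity) (by positivity)
    have h1 : (QS.card : ℝ) ≤ nb := by
      exact_mod_cast Finset.card_image_le.trans (by simp)
    have h2 : (529 : ℝ) * (L : ℝ) ^ 2 ≤ m := by nlinarith
    linarith
  have hQSm : ∀ b ∈ Finset.range nb, block m q b ∈ QS := fun b hb =>
    Finset.mem_image_of_mem _ hb
  obtain ⟨E1, hE1, hE1'⟩ := chain_event_R (d := d) hm (by omega) x QS {Finset.univ} hQSc
    (t := 8 * m) (rS := 0) (by positivity) (by simp; linarith) hQ hL' (by simp)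
  obtain ⟨E2, hE2, hE2'⟩ := chain_event_R (d := d) hm (by omega) x QS PS hQSc
    (t := 40 * q) (by positivity) (fun S hS => by rw [hPSc S hS]; linarith) hQ hL' hP1
  obtain ⟨E3, hE3, hE3'⟩ := chain_event_R (d := d) hm (by omega) x PS PS (fun T hT => (hPSc T hT).le)
    (t := 200 * U) (by positivity) (fun S hS => by rw [hPSc S hS]; linarith) hP2 hL' hP1
  obtain ⟨E4, hE4, hE4'⟩ := chain_event_B hm hd (by omega) x QS hQSc
    (t := 40 * q) (by positivity) (by linarith) hQ hL'
  obtain ⟨E5, hE5, hE5'⟩ := chain_event_B hm hd (by omega) x PS (fun T hT => (hPSc T hT).le)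
    (t := 200 * U) (by positivity) (by linarith) hP2 hL'
  refine ⟨E1 ∪ E2 ∪ E3 ∪ E4 ∪ E5, ?_, ?_⟩
  · have hqm' : 8 * (q : ℝ) ≤ m := by nlinarith
    have e1 := hE1.trans (exists_ENN_two (y := 19 * U) (by linarith) (by linarith))
    have e2 := hE2.trans (exists_ENN_two (y := 19 * U) (by linarith) (by linarith))
    have e3 := hE3.trans (exists_ENN_two (y := 19 * U) (by linarith) (by linarith))
    have e4 := hE4.trans (exists_ENN_two (y := 19 * U) (by linarith) (by linarith))
    have e5 := hE5.trans (exists_ENN_two (y := 19 * U) (by linarith) (by linarith))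
    have hsum : ENNReal.ofReal (10 * Real.exp (-(19 * s * Λ)))
        = ENNReal.ofReal (2 * Real.exp (-(19 * U))) + ENNReal.ofReal (2 * Real.exp (-(19 * U)))
          + ENNReal.ofReal (2 * Real.exp (-(19 * U))) + ENNReal.ofReal (2 * Real.exp (-(19 * U)))
          + ENNReal.ofReal (2 * Real.exp (-(19 * U))) := by
      rw [← ENNReal.ofReal_add (by positivity) (by positivity),
        ← ENNReal.ofReal_add (by positivity) (by positivity),
        ← ENNReal.ofReal_add (by positivity) (by positivity),
        ← ENNReal.ofReal_add (by positivity) (by positivity), hU, ← mul_assoc]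
      congr 1; ring
    rw [hsum]
    refine (measure_union_le _ _).trans (add_le_add ?_ e5)
    refine (measure_union_le _ _).trans (add_le_add ?_ e4)
    refine (measure_union_le _ _).trans (add_le_add ?_ e3)
    exact (measure_union_le _ _).trans (add_le_add e1 e2)
  · intro z hz hh
    simp only [Set.mem_union, not_or] at hz
    obtain ⟨⟨⟨⟨hz1, hz2⟩, hz3⟩, hz4⟩, hz5⟩ := hz
    constructor
    · intro j a ha v
      have hmat : ∀ c, mulVec (z.2.1 j) (pvec z.1 z.2.1 x a j c)
          = mulVec (mmul (z.2.1 j) (prodDW z.1 z.2.1 x a j)) c := fun c => by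
        rw [mulVec_mmul]; rfl
      rw [hmat]
      refine (block_bound (q := q) _ (M := 2 * Real.sqrt (6 * (8 * m) / m)) (by positivity)
        (fun b hb w hw => ?_) v).trans ?_
      · rw [← hmat]
        have := hE1' z hz1 hh _ (hQSm b hb) Finset.univ (by simp) w hw j a ha
        rwa [show ∀ u : Fin m → ℝ, restr Finset.univ u = u from fun u => by ext k; simp [restr]] at this
      · refine mul_le_mul_of_nonneg_right ?_ (l2_nonneg _)
        have h1 : Real.sqrt (6 * (8 * m) / m) ≤ 7 := by
          rw [Real.sqrt_le_left (by norm_num), div_le_iff₀ hm0]; nlinarith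
        calc _ ≤ 2 * 7 * (23 * (L : ℝ)) := by gcongr
          _ ≤ _ := by nlinarith
    · intro j a ha S hS v
      obtain ⟨S', hS', hSS⟩ := hext S hS
      refine (l2_restr_mono hSS _).trans ?_
      have hmat : ∀ c, restr S' (mulVec (z.2.1 j) (pvec z.1 z.2.1 x a j c))
          = mulVec (mmul (diagMat fun k => if k ∈ S' then 1 else 0)
            (mmul (z.2.1 j) (prodDW z.1 z.2.1 x a j))) c := fun c => by
        rw [mulVec_mmul, mulVec_mmul, restr_eq_mulVec]; rfl
      rw [hmat]
      refine (block_bound (q := q) _ (M := 2 * Real.sqrt (6 * (40 * q) / m)) (by positivity)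
        (fun b hb w hw => ?_) v).trans ?_
      · rw [← hmat]
        exact hE2' z hz2 hh _ (hQSm b hb) S' hS' w hw j a ha
      · refine mul_le_mul_of_nonneg_right ?_ (l2_nonneg _)
        have h1 : Real.sqrt (6 * (40 * q) / m) ≤ 1 / L := by
          rw [Real.sqrt_le_left (by positivity), div_le_iff₀ hm0, div_pow, one_pow, div_mul_eq_mul_div,
            le_div_iff₀ (by positivity)]
          linarith
        calc _ ≤ 2 * (1 / (L : ℝ)) * (23 * (L : ℝ)) := by gcongr
          _ = 46 := by field_simp; norm_num
          _ ≤ _ := by norm_num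
    · intro j a ha S T hS hT v hv
      obtain ⟨S', hS', hSS⟩ := hext S hS
      obtain ⟨T', hT', hTT⟩ := hext T hT
      refine (l2_restr_mono hSS _).trans ?_
      refine (hE3' z hz3 hh T' hT' S' hS' v (fun k hk => hv k fun h => hk (hTT h)) j a ha).trans
        (le_of_eq ?_)
      congr 3; rw [hU]; ring
    · intro a ha v
      have hmat : ∀ c, mulVec z.2.2 (pvec z.1 z.2.1 x a L c)
          = mulVec (mmul z.2.2 (prodDW z.1 z.2.1 x a L)) c := fun c => by
        rw [mulVec_mmul]; rfl
      rw [hmat]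
      refine (block_bound (q := q) _ (M := 2 * Real.sqrt (3 * (40 * q) / d)) (by positivity)
        (fun b hb w hw => ?_) v).trans ?_
      · rw [← hmat]
        exact hE4' z hz4 hh _ (hQSm b hb) w hw a ha
      · refine mul_le_mul_of_nonneg_right ?_ (l2_nonneg _)
        have h1 : Real.sqrt (3 * (40 * q) / d) ≤ 1 / L * Real.sqrt (m / d) := by
          rw [Real.sqrt_le_left (by positivity), mul_pow, Real.sq_sqrt (by positivity), div_pow,
            one_pow, div_mul_div_comm, one_mul, div_le_div_iff₀ hd0 (by positivity)]
          have : 3 * (40 * q) * (L : ℝ) ^ 2 ≤ m := by nlinarith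
          nlinarith
        calc _ ≤ 2 * (1 / (L : ℝ) * Real.sqrt (m / d)) * (23 * (L : ℝ)) := by gcongr
          _ = 46 * Real.sqrt (m / d) := by field_simp; norm_num
          _ ≤ _ := by gcongr; norm_num
    · intro a ha T hT v hv
      obtain ⟨T', hT', hTT⟩ := hext T hT
      refine (hE5' z hz5 hh T' hT' v (fun k hk => hv k fun h => hk (hTT h)) a ha).trans
        (le_of_eq ?_)
      congr 3; rw [hU]; ring

/-! ### The forward pass at initialization -/

section Forward
variable {𝔡 m d L : ℕ}

/-- The hidden vectors entering a layer do not depend on its weight matrix; a bound that is uniform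
in those vectors therefore holds for the joint law. -/
lemma layer_event {n : ℕ} (x : Fin n → Fin 𝔡 → ℝ) (j : Fin L)
    {Bad : Set ((Fin n → Fin m → ℝ) × (Fin m → Fin m → ℝ))} (hBad : MeasurableSet Bad)
    {p : ENNReal} (h : ∀ H, gaussMat m m (2 / m) {G | (H, G) ∈ Bad} ≤ p) :
    initMeasure 𝔡 m d L {z | (fun i => hseq z.1 z.2.1 (x i) j, z.2.1 j) ∈ Bad} ≤ p := by
  refine cond_W ?_ j fun A W B => ?_
  · refine (show Measurable fun z : Init 𝔡 m d L =>
      (fun i => hseq z.1 z.2.1 (x i) j, z.2.1 j) from ?_) hBad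
    refine Measurable.prodMk ?_ (by fun_prop)
    exact measurable_pi_lambda _ fun i => by fun_prop
  · simp only [Set.mem_ofPred_eq, hseq_update _ _ _ _ _ le_rfl, Function.update_self]
    exact h _

lemma layer_event0 (S : Set (Fin m → Fin 𝔡 → ℝ)) :
    initMeasure 𝔡 m d L {z | z.1 ∈ S} ≤ gaussMat m 𝔡 (2 / m) S := by
  have : {z : Init 𝔡 m d L | z.1 ∈ S} = S ×ˢ Set.univ := by ext z; simp
  rw [this, initMeasure, Measure.prod_prod]
  simp

lemma layer_norm_upper {q : ℕ} (hm : 0 < m) (h : Fin q → ℝ) {ε : ℝ} (h0 : 0 ≤ ε) (h1 : ε ≤ 1) :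
    gaussMat m q (2 / m) {G | (1 + ε) * l2 h ^ 2 < l2 (relu (mulVec G h)) ^ 2}
      ≤ ENNReal.ofReal (Real.exp (-(m * ε ^ 2 / 560))) := by
  by_cases hh : h = 0
  · subst hh
    have : {G : Fin m → Fin q → ℝ | (1 + ε) * l2 (0 : Fin q → ℝ) ^ 2
        < l2 (relu (mulVec G 0)) ^ 2} = ∅ := by
      ext G
      rw [Set.mem_ofPred_eq, relu_eq, mulVec_zero, mul_zero, l2_zero, l2_zero]
      simp
    rw [this]; simp
  · have := layer_upper hm h h hh h0 h1
    refine le_trans (le_of_eq ?_) (this.trans ?_)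
    · congr 1; ext G; rw [Set.mem_ofPred_eq, Set.mem_ofPred_eq, relu_eq]
    · apply ENNReal.ofReal_le_ofReal
      apply Real.exp_le_exp.2
      have : 0 ≤ (m : ℝ) * ε ^ 2 := by positivity
      linarith

lemma layer_norm_lower {q : ℕ} (hm : 0 < m) (h : Fin q → ℝ) {ε : ℝ} (h0 : 0 ≤ ε) :
    gaussMat m q (2 / m) {G | l2 (relu (mulVec G h)) ^ 2 < (1 - ε) * l2 h ^ 2}
      ≤ ENNReal.ofReal (Real.exp (-(m * ε ^ 2 / 560))) := by
  have := layer_lower hm h (0 : Fin q → ℝ) h0 (K := l2 h ^ 2) (reluGap_integral_zero q _ h)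
  refine le_trans (le_of_eq ?_) this
  congr 1; ext G
  have h3 : relu (mulVec G (0 : Fin q → ℝ)) = 0 := by rw [relu_eq, mulVec_zero, mul_zero]
  rw [Set.mem_ofPred_eq, Set.mem_ofPred_eq, h3, sub_zero, sub_zero, one_sub_mul]

/-- Multiplying at most `L + 1` factors in `[1 - 1/(8L), 1 + 1/(8L)]` stays in `[1/4, 4]`. -/
lemma norm_drift (hL : 2 ≤ L) {a : ℕ → ℝ} (h0 : 1 - 1 / (8 * (L : ℝ)) ≤ a 0)
    (h0' : a 0 ≤ 1 + 1 / (8 * (L : ℝ)))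
    (hl : ∀ j < L, (1 - 1 / (8 * (L : ℝ))) * a j ≤ a (j + 1))
    (hu : ∀ j < L, a (j + 1) ≤ (1 + 1 / (8 * (L : ℝ))) * a j) {ℓ : ℕ} (hℓ : ℓ ≤ L) :
    1 / 4 ≤ a ℓ ∧ a ℓ ≤ 4 := by
  have hLr : (2 : ℝ) ≤ L := by exact_mod_cast hL
  set ε : ℝ := 1 / (8 * (L : ℝ)) with hε
  have hε0 : 0 < ε := by positivity
  have hεL : ε * L = 1 / 8 := by rw [hε]; field_simp
  have hε1 : ε ≤ 1 / 16 := by nlinarith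
  have key : ∀ ℓ ≤ L, (1 - ε) ^ (ℓ + 1) ≤ a ℓ ∧ a ℓ ≤ (1 + ε) ^ (ℓ + 1) := by
    intro ℓ
    induction ℓ with
    | zero => intro _; rw [zero_add, pow_one, pow_one]; exact ⟨h0, h0'⟩
    | succ k ih =>
      intro hk
      obtain ⟨i1, i2⟩ := ih (by omega)
      constructor
      · calc (1 - ε) ^ (k + 1 + 1) = (1 - ε) * (1 - ε) ^ (k + 1) := by ring
          _ ≤ (1 - ε) * a k := by apply mul_le_mul_of_nonneg_left i1; linarith
          _ ≤ _ := hl k (by omega)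
      · calc a (k + 1) ≤ (1 + ε) * a k := hu k (by omega)
          _ ≤ (1 + ε) * (1 + ε) ^ (k + 1) := by apply mul_le_mul_of_nonneg_left i2; linarith
          _ = _ := by ring
  obtain ⟨k1, k2⟩ := key ℓ hℓ
  have hℓr : (ℓ : ℝ) ≤ L := by exact_mod_cast hℓ
  have hb : (ℓ + 1 : ℝ) * ε ≤ 1 / 4 := by nlinarith
  constructor
  · have := one_add_mul_le_pow (a := -ε) (by linarith) (ℓ + 1)
    rw [← sub_eq_add_neg] at this
    push_cast at this
    nlinarith
  · refine k2.trans ?_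
    have h1 : (1 + ε) ^ (ℓ + 1) ≤ Real.exp ((ℓ + 1 : ℕ) * ε) := by
      rw [Real.exp_nat_mul]
      apply pow_le_pow_left₀ (by linarith)
      linarith [Real.add_one_le_exp ε]
    have h2 : Real.exp ((ℓ + 1 : ℕ) * ε) ≤ Real.exp 1 := by
      apply Real.exp_le_exp.2; push_cast; linarith
    linarith [Real.exp_one_lt_d9]

/-- All hidden vectors have norm in `[1/2, 2]` with overwhelming probability. -/
lemma norm_good (hm : 0 < m) (hL : 2 ≤ L) (x : Fin 𝔡 → ℝ) (hx : l2 x = 1) {r : ℝ}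
    (hr : 2 * ((L : ℝ) + 1) ≤ Real.exp r) :
    ∃ E : Set (Init 𝔡 m d L),
      initMeasure 𝔡 m d L E ≤ ENNReal.ofReal (Real.exp (-(m * (1 / (8 * (L : ℝ))) ^ 2 / 560 - r))) ∧
      ∀ z ∉ E, ∀ ℓ ≤ L, 1 / 2 ≤ l2 (hseq z.1 z.2.1 x ℓ) ∧ l2 (hseq z.1 z.2.1 x ℓ) ≤ 2 := by
  have hLr : (2 : ℝ) ≤ L := by exact_mod_cast hL
  set ε : ℝ := 1 / (8 * (L : ℝ)) with hε
  have hε0 : 0 < ε := by positivity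
  have hε1 : ε ≤ 1 := by
    rw [hε, div_le_one (by positivity)]; linarith
  let Ev : Option (Fin L) × Bool → Set (Init 𝔡 m d L) := fun t =>
    match t with
    | (none, true) => {z | z.1 ∈ {G | (1 + ε) * l2 x ^ 2 < l2 (relu (mulVec G x)) ^ 2}}
    | (none, false) => {z | z.1 ∈ {G | l2 (relu (mulVec G x)) ^ 2 < (1 - ε) * l2 x ^ 2}}
    | (some j, true) => {z | ((fun _ : Fin 1 => hseq z.1 z.2.1 x j), z.2.1 j) ∈
        {p : (Fin 1 → Fin m → ℝ) × (Fin m → Fin m → ℝ) |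
          (1 + ε) * l2 (p.1 0) ^ 2 < l2 (relu (mulVec p.2 (p.1 0))) ^ 2}}
    | (some j, false) => {z | ((fun _ : Fin 1 => hseq z.1 z.2.1 x j), z.2.1 j) ∈
        {p : (Fin 1 → Fin m → ℝ) × (Fin m → Fin m → ℝ) |
          l2 (relu (mulVec p.2 (p.1 0))) ^ 2 < (1 - ε) * l2 (p.1 0) ^ 2}}
  have hEv : ∀ t ∈ Finset.univ, initMeasure 𝔡 m d L (Ev t)
      ≤ ENNReal.ofReal (Real.exp (-(m * ε ^ 2 / 560))) := by
    rintro ⟨_ | j, _ | _⟩ -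
    · exact (layer_event0 _).trans (layer_norm_lower hm x hε0.le)
    · exact (layer_event0 _).trans (layer_norm_upper hm x hε0.le hε1)
    · refine layer_event (fun _ => x) j ?_ fun H => layer_norm_lower hm (H 0) hε0.le
      exact measurableSet_lt (by fun_prop) (by fun_prop)
    · refine layer_event (fun _ => x) j ?_ fun H => layer_norm_upper hm (H 0) hε0.le hε1
      exact measurableSet_lt (by fun_prop) (by fun_prop)
  refine ⟨⋃ t ∈ Finset.univ, Ev t, union_bound _ _ _ ?_ hEv, ?_⟩
  · refine le_trans (le_of_eq ?_) hr
    simp [Finset.card_univ]; ring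
  · intro z hz ℓ hℓ
    simp only [Set.mem_iUnion, not_exists] at hz
    have hz' : ∀ t, z ∉ Ev t := fun t => hz t (Finset.mem_univ _)
    have h1 := hz' (none, true)
    have h2 := hz' (none, false)
    have h3 := fun j => hz' (some j, true)
    have h4 := fun j => hz' (some j, false)
    simp only [Ev, Set.mem_ofPred_eq, not_lt, hx, one_pow, mul_one] at h1 h2 h3 h4
    have := norm_drift hL (a := fun ℓ => l2 (hseq z.1 z.2.1 x ℓ) ^ 2) h2 h1
      (fun j hj => by
        have := h4 ⟨j, hj⟩
        rw [← hseq_succ] at this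
        exact this)
      (fun j hj => by
        have := h3 ⟨j, hj⟩
        rw [← hseq_succ] at this
        exact this) hℓ
    have h0 := l2_nonneg (hseq z.1 z.2.1 x ℓ)
    constructor <;> nlinarith [this.1, this.2]

/-- Few pre-activations are close to zero at initialization. -/
lemma count_good (hm : 0 < m) (x : Fin 𝔡 → ℝ) {τ r : ℝ} (hτ : 0 ≤ τ)
    (hr : (L : ℝ) ≤ Real.exp r) :
    ∃ E : Set (Init 𝔡 m d L),
      initMeasure 𝔡 m d L E ≤ ENNReal.ofReal (Real.exp (-(2 * τ * m - r))) ∧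
      ∀ z ∉ E, ∀ j : Fin L, 0 < l2 (hseq z.1 z.2.1 x j) →
        ((Finset.univ.filter fun k => |gseq z.1 z.2.1 x (j + 1) k| ≤
          τ * l2 (hseq z.1 z.2.1 x j) * √(2 / m)).card : ℝ) < 4 * τ * m := by
  let Ev : Fin L → Set (Init 𝔡 m d L) := fun j =>
    {z | ((fun _ : Fin 1 => hseq z.1 z.2.1 x j), z.2.1 j) ∈
        {p : (Fin 1 → Fin m → ℝ) × (Fin m → Fin m → ℝ) | 0 < l2 (p.1 0) ∧
          4 * τ * m ≤ ((Finset.univ.filter fun k => |mulVec p.2 (p.1 0) k| ≤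
            τ * l2 (p.1 0) * √(2 / m)).card : ℝ)}}
  have hEv : ∀ t ∈ Finset.univ, initMeasure 𝔡 m d L (Ev t)
      ≤ ENNReal.ofReal (Real.exp (-(2 * τ * m))) := by
    intro j _
    refine layer_event (fun _ => x) j ?_ fun H => ?_
    · refine MeasurableSet.inter
        (s₁ := {p : (Fin 1 → Fin m → ℝ) × (Fin m → Fin m → ℝ) | 0 < l2 (p.1 0)})
        (s₂ := {p : (Fin 1 → Fin m → ℝ) × (Fin m → Fin m → ℝ) |
          4 * τ * m ≤ ((Finset.univ.filter fun k => |mulVec p.2 (p.1 0) k| ≤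
            τ * l2 (p.1 0) * √(2 / m)).card : ℝ)}) ?_ ?_
      · exact measurableSet_lt (by fun_prop) (by fun_prop)
      · refine measurableSet_le (by fun_prop) ?_
        simp only [Finset.card_filter, Nat.cast_sum]
        refine Finset.measurable_fun_sum _ fun k _ => ?_
        refine (measurable_of_countable (fun n : ℕ => (n : ℝ))).comp ?_
        refine Measurable.ite (measurableSet_le ?_ (by fun_prop)) measurable_const measurable_const
        have : Measurable fun p : (Fin 1 → Fin m → ℝ) × (Fin m → Fin m → ℝ) =>
          mulVec p.2 (p.1 0) := by fun_prop
        exact ((measurable_pi_apply k).comp this).abs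
    · by_cases hh : 0 < l2 (H 0)
      · refine le_trans (measure_mono ?_) (layer_small_count hm (H 0) hh hτ)
        intro G hG
        exact hG.2
      · refine le_trans (le_of_eq ?_) (zero_le)
        convert measure_empty (μ := gaussMat m m (2 / m))
        ext G
        simp only [Set.mem_ofPred_eq, Set.mem_empty_iff_false, iff_false]
        exact fun h => hh h.1
  refine ⟨⋃ t ∈ Finset.univ, Ev t, union_bound _ _ _ (by simpa using hr) hEv, ?_⟩
  intro z hz j hj
  simp only [Set.mem_iUnion, not_exists] at hz
  have := hz j (Finset.mem_univ _)
  simp only [Ev, Set.mem_ofPred_eq, not_and, not_le] at this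
  rw [gseq_succ]
  exact this hj

end Forward

/-! ### Separation of the hidden vectors at initialization -/

section SepGood
variable {𝔡 m d L : ℕ}

/-- Side conditions on two vectors under which one random layer preserves their separation. -/
def SepPre {q : ℕ} (a : ℝ) (p r : Fin q → ℝ) : Prop :=
  ((1 / 2 ≤ l2 p ∧ l2 p ≤ 2) ∧ (1 / 2 ≤ l2 r ∧ l2 r ≤ 2)) ∧ (0 ≤ dot p r ∧ Sep a p r)

lemma Sep.mono {q : ℕ} {a b : ℝ} {p r : Fin q → ℝ} (h : Sep b p r) (ha : 0 ≤ a) (hab : a ≤ b) :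
    Sep a p r := by
  unfold Sep at *
  refine le_trans ?_ h
  gcongr

lemma sep_bad {q : ℕ} (hm : 0 < m) (p r : Fin q → ℝ) {a ε t : ℝ} (ha : 0 < a)
    (hε0 : 0 < ε) (hε : ε ≤ 1 / 10 ^ 10) (haε : 1440 * a ≤ ε) (ht : 0 < t) (ht8 : t ≤ 8) :
    gaussMat m q (2 / m) {G | SepPre a p r ∧
        l2 (relu (mulVec G p) - t • relu (mulVec G r)) < (1 - 2 * ε) * a}
      ≤ ENNReal.ofReal (Real.exp (-(m * ε ^ 2 / 560))) := by
  by_cases h : SepPre a p r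
  · obtain ⟨⟨⟨h1, h2⟩, h3, h4⟩, h5, h6⟩ := h
    refine le_trans (measure_mono ?_) (layer_sep_one hm p r ha hε0 hε haε ht ht8 h1 h2 h3 h4 h5 h6)
    exact fun G hG => hG.2
  · refine le_trans (le_of_eq ?_) (zero_le)
    convert measure_empty (μ := gaussMat m q (2 / m))
    ext G
    simp only [Set.mem_ofPred_eq, Set.mem_empty_iff_false, iff_false]
    exact fun h' => h h'.1

lemma measurableSet_sep_bad (a c t : ℝ) :
    MeasurableSet {P : (Fin 2 → Fin m → ℝ) × (Fin m → Fin m → ℝ) | SepPre a (P.1 0) (P.1 1) ∧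
      l2 (relu (mulVec P.2 (P.1 0)) - t • relu (mulVec P.2 (P.1 1))) < c} := by
  have h0 : Measurable fun P : (Fin 2 → Fin m → ℝ) × (Fin m → Fin m → ℝ) => l2 (P.1 0) := by
    fun_prop
  have h1 : Measurable fun P : (Fin 2 → Fin m → ℝ) × (Fin m → Fin m → ℝ) => l2 (P.1 1) := by
    fun_prop
  have hd : Measurable fun P : (Fin 2 → Fin m → ℝ) × (Fin m → Fin m → ℝ) =>
      dot (P.1 0) (P.1 1) := by fun_prop
  have hS : MeasurableSet {P : (Fin 2 → Fin m → ℝ) × (Fin m → Fin m → ℝ) |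
      a ^ 2 * l2 (P.1 1) ^ 2 ≤ l2 (P.1 0) ^ 2 * l2 (P.1 1) ^ 2 - dot (P.1 0) (P.1 1) ^ 2} :=
    measurableSet_le (by fun_prop) (by fun_prop)
  refine MeasurableSet.inter
    (s₁ := {P : (Fin 2 → Fin m → ℝ) × (Fin m → Fin m → ℝ) | SepPre a (P.1 0) (P.1 1)})
    (s₂ := {P : (Fin 2 → Fin m → ℝ) × (Fin m → Fin m → ℝ) |
      l2 (relu (mulVec P.2 (P.1 0)) - t • relu (mulVec P.2 (P.1 1))) < c}) ?_
    (measurableSet_lt (by fun_prop) (by fun_prop))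
  exact (((measurableSet_le measurable_const h0).inter (measurableSet_le h0 measurable_const)).inter
    ((measurableSet_le measurable_const h1).inter (measurableSet_le h1 measurable_const))).inter
    ((measurableSet_le measurable_const hd).inter hS)

/-- Separation of two inputs survives through all layers, losing at most a constant factor. -/
lemma sep_good (hm : 0 < m) (hL : 2 ≤ L) (x x' : Fin 𝔡 → ℝ) (hx : l2 x = 1) (hx' : l2 x' = 1)
    (hdot : 0 ≤ dot x x') {δ : ℝ} (hδ : 0 < δ) (hδL : δ ≤ 1 / (10 ^ 14 * (L : ℝ)))
    (hsep : δ ≤ l2 (x - x')) {N : ℕ} (hN : 64 * 10 ^ 10 * L / δ ≤ N) {r : ℝ}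
    (hr : N * ((L : ℝ) + 1) ≤ Real.exp r) :
    ∃ E : Set (Init 𝔡 m d L),
      initMeasure 𝔡 m d L E ≤ ENNReal.ofReal
        (Real.exp (-(m * (1 / (10 ^ 10 * (L : ℝ))) ^ 2 / 560 - r))) ∧
      ∀ z ∉ E, (∀ ℓ ≤ L, 1 / 2 ≤ l2 (hseq z.1 z.2.1 x ℓ) ∧ l2 (hseq z.1 z.2.1 x ℓ) ≤ 2) →
        (∀ ℓ ≤ L, 1 / 2 ≤ l2 (hseq z.1 z.2.1 x' ℓ) ∧ l2 (hseq z.1 z.2.1 x' ℓ) ≤ 2) →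
        ∀ ℓ ≤ L, Sep (δ / 4) (hseq z.1 z.2.1 x ℓ) (hseq z.1 z.2.1 x' ℓ) := by
  have hLr : (2 : ℝ) ≤ L := by exact_mod_cast hL
  set ε : ℝ := 1 / (10 ^ 10 * (L : ℝ)) with hε
  have hε0 : 0 < ε := by positivity
  have hεL : ε * L = 1 / 10 ^ 10 := by rw [hε]; field_simp
  have hε1 : ε ≤ 1 / 10 ^ 10 := by nlinarith
  have hδε : δ * 10 ^ 4 ≤ ε := by
    refine (mul_le_mul_of_nonneg_right hδL (by norm_num)).trans (le_of_eq ?_)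
    rw [hε]; field_simp
  set a : ℕ → ℝ := fun k => (1 - 3 * ε) ^ k * (δ / 2) with ha
  have ha0 : ∀ k, 0 < a k := fun k => by
    rw [ha]; have : 0 < 1 - 3 * ε := by linarith
    positivity
  have haup : ∀ k, a k ≤ δ / 2 := fun k => by
    rw [ha]
    have : (1 - 3 * ε) ^ k ≤ 1 := pow_le_one₀ (by linarith) (by linarith)
    exact mul_le_of_le_one_left (by positivity) this
  have halo : ∀ k ≤ L + 1, δ / 4 ≤ a k := fun k hk => by
    have := one_add_mul_le_pow (a := -(3 * ε)) (by linarith) k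
    rw [← sub_eq_add_neg] at this
    have hk' : (k : ℝ) ≤ L + 1 := by exact_mod_cast hk
    have h2 : 1 / 2 ≤ (1 - 3 * ε) ^ k := by nlinarith
    rw [ha]; nlinarith
  have hasucc : ∀ k, a (k + 1) = (1 - 3 * ε) * a k := fun k => by rw [ha]; ring
  have haε : ∀ k, 1440 * a k ≤ ε := fun k => by linarith [haup k]
  have hN0 : (0 : ℝ) < N := lt_of_lt_of_le (by positivity) hN
  have hNa : ∀ k ≤ L + 1, 16 / (ε * a k) ≤ N := fun k hk => by
    refine le_trans ?_ hN
    rw [div_le_div_iff₀ (mul_pos hε0 (ha0 k)) hδ]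
    have := halo k hk
    have h3 : 64 * 10 ^ 10 * (L : ℝ) * (ε * a k) = 64 * 10 ^ 10 * (ε * L) * a k := by ring
    rw [h3, hεL]
    linarith
  have hgridpos : ∀ k ∈ Finset.Icc 1 N, 0 < (8 * k / N : ℝ) ∧ (8 * k / N : ℝ) ≤ 8 := by
    intro k hk
    obtain ⟨h1, h2⟩ := Finset.mem_Icc.1 hk
    have h1' : (1 : ℝ) ≤ k := by exact_mod_cast h1
    have h2' : (k : ℝ) ≤ N := by exact_mod_cast h2
    constructor
    · positivity
    · rw [div_le_iff₀ hN0]; linarith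
  let Ev : Option (Fin L) × ℕ → Set (Init 𝔡 m d L) := fun t =>
    match t with
    | (none, k) => {z | z.1 ∈ {G | SepPre (a 0) x x' ∧
        l2 (relu (mulVec G x) - (8 * k / N : ℝ) • relu (mulVec G x')) < (1 - 2 * ε) * a 0}}
    | (some j, k) => {z | ((fun i : Fin 2 => hseq z.1 z.2.1 (if i = 0 then x else x') j), z.2.1 j) ∈
        {P : (Fin 2 → Fin m → ℝ) × (Fin m → Fin m → ℝ) | SepPre (a (j + 1)) (P.1 0) (P.1 1) ∧
          l2 (relu (mulVec P.2 (P.1 0)) - (8 * k / N : ℝ) • relu (mulVec P.2 (P.1 1)))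
            < (1 - 2 * ε) * a (j + 1)}}
  have hEv : ∀ t ∈ (Finset.univ : Finset (Option (Fin L))) ×ˢ Finset.Icc 1 N,
      initMeasure 𝔡 m d L (Ev t) ≤ ENNReal.ofReal (Real.exp (-(m * ε ^ 2 / 560))) := by
    rintro ⟨_ | j, k⟩ hk
    · obtain ⟨h1, h2⟩ := hgridpos k (Finset.mem_product.1 hk).2
      exact (layer_event0 _).trans (sep_bad hm x x' (ha0 _) hε0 hε1 (haε _) h1 h2)
    · obtain ⟨h1, h2⟩ := hgridpos k (Finset.mem_product.1 hk).2
      exact layer_event (fun i : Fin 2 => if i = 0 then x else x') j (measurableSet_sep_bad _ _ _)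
        fun H => sep_bad hm (H 0) (H 1) (ha0 _) hε0 hε1 (haε _) h1 h2
  refine ⟨⋃ t ∈ (Finset.univ : Finset (Option (Fin L))) ×ˢ Finset.Icc 1 N, Ev t,
    union_bound _ _ _ ?_ hEv, ?_⟩
  · refine le_trans (le_of_eq ?_) hr
    rw [Finset.card_product]; simp [Finset.card_univ]; ring
  · intro z hz hn hn'
    simp only [Set.mem_iUnion, not_exists] at hz
    have key : ∀ ℓ ≤ L, Sep (a (ℓ + 1)) (hseq z.1 z.2.1 x ℓ) (hseq z.1 z.2.1 x' ℓ) := by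
      intro ℓ
      induction ℓ with
      | zero =>
        intro h0
        rw [hasucc]
        refine sep_of_grid _ _ (ha0 0) (by linarith [haε 0]) hε0 (by linarith) (hNa 0 (by omega))
          (hn 0 h0).2 (hn' 0 h0).1 (hn' 0 h0).2 (dot_relu_nonneg _ _) ?_
        intro k hk
        have := hz (none, k) (Finset.mem_product.2 ⟨Finset.mem_univ _, hk⟩)
        simp only [Ev, Set.mem_ofPred_eq, not_and, not_lt] at this
        refine this ⟨⟨by rw [hx]; norm_num, by rw [hx']; norm_num⟩, hdot, ?_⟩
        have h := input_sep x x' hx hx' hdot hδ.le hsep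
        simpa [ha] using h
      | succ k ih =>
        intro hk
        have ih' := ih (by omega)
        let j : Fin L := ⟨k, by omega⟩
        have e1 := hseq_succ z.1 z.2.1 x j
        have e2 := hseq_succ z.1 z.2.1 x' j
        have hd1 : 0 ≤ dot (hseq z.1 z.2.1 x k) (hseq z.1 z.2.1 x' k) := by
          cases k with
          | zero => exact dot_relu_nonneg _ _
          | succ k' =>
            have f1 := hseq_succ z.1 z.2.1 x ⟨k', by omega⟩
            have f2 := hseq_succ z.1 z.2.1 x' ⟨k', by omega⟩
            simp only at f1 f2
            rw [f1, f2]
            exact dot_relu_nonneg _ _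
        rw [hasucc]
        refine sep_of_grid _ _ (ha0 _) (by linarith [haε (k + 1)]) hε0 (by linarith)
          (hNa (k + 1) (by omega)) (hn _ hk).2 (hn' _ hk).1 (hn' _ hk).2 ?_ ?_
        · rw [show k + 1 = (j : ℕ) + 1 from rfl, e1, e2]; exact dot_relu_nonneg _ _
        intro t ht
        have := hz (some j, t) (Finset.mem_product.2 ⟨Finset.mem_univ _, ht⟩)
        simp only [Ev, Set.mem_ofPred_eq, not_and, not_lt, if_true, one_ne_zero, if_false] at this
        rw [← e1, ← e2] at this
        exact this ⟨⟨hn k (by omega), hn' k (by omega)⟩, hd1, ih'⟩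
    intro ℓ hℓ
    exact (key ℓ hℓ).mono (by positivity) (halo _ (by omega))

end SepGood

/-! ### Rows of the last-layer gradient, uniformly in the loss vectors -/

section LastLayer
variable {𝔡 m d L : ℕ}

lemma rowR_smul {n q d : ℕ} (h : Fin n → Fin q → ℝ) (v : Fin n → Fin d → ℝ) (w : Fin q → ℝ)
    (b : Fin d → ℝ) (c : ℝ) : rowR h (fun i => c • v i) w b = c • rowR h v w b := by
  unfold rowR
  rw [Finset.smul_sum]
  refine Finset.sum_congr rfl fun i _ => ?_
  rw [dot_smul, smul_smul, mul_assoc]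

lemma rowR_sub {n q d : ℕ} (h : Fin n → Fin q → ℝ) (v v' : Fin n → Fin d → ℝ) (w : Fin q → ℝ)
    (b : Fin d → ℝ) : rowR h v w b - rowR h v' w b = rowR h (fun i => v i - v' i) w b := by
  unfold rowR
  rw [← Finset.sum_sub_distrib]
  refine Finset.sum_congr rfl fun i _ => ?_
  rw [dot_sub, ← sub_smul, sub_mul]

lemma l2_rowR_le {n q d : ℕ} (h : Fin n → Fin q → ℝ) (v : Fin n → Fin d → ℝ) (w : Fin q → ℝ)
    (b : Fin d → ℝ) {M H : ℝ} (hM : ∀ i, l2 (v i) ≤ M) (hH : ∀ i, l2 (h i) ≤ H) :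
    l2 (rowR h v w b) ≤ n * (l2 b * M * H) := by
  unfold rowR
  refine (l2_sum_le _ _).trans ?_
  refine (Finset.sum_le_sum (g := fun _ => l2 b * M * H) fun i _ => ?_).trans ?_
  · rw [l2_smul]
    have h1 : |dot b (v i) * (if 0 ≤ dot w (h i) then 1 else 0)| ≤ l2 b * M := by
      rw [abs_mul]
      refine (mul_le_of_le_one_right (abs_nonneg _) ?_).trans ?_
      · split_ifs <;> simp
      · exact (abs_dot_le _ _).trans (mul_le_mul_of_nonneg_left (hM i) (l2_nonneg _))
    exact mul_le_mul h1 (hH i) (l2_nonneg _) ((abs_nonneg _).trans h1)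
  · simp

lemma l2_le_sqrt_mul {p : ℕ} (v : Fin p → ℝ) {a : ℝ} (ha : 0 ≤ a) (h : ∀ k, |v k| ≤ a) :
    l2 v ≤ √p * a := by
  have : l2 v ^ 2 ≤ (√p * a) ^ 2 := by
    rw [l2_sq, mul_pow, Real.sq_sqrt (by positivity)]
    refine (Finset.sum_le_sum (g := fun _ => a ^ 2) fun k _ => ?_).trans (by simp)
    exact sq_le_sq' (neg_le_of_abs_le (h k)) (le_of_abs_le (h k))
  exact (sq_le_sq₀ (l2_nonneg _) (by positivity)).1 this

lemma transpose_row_le {p q : ℕ} (B : Fin p → Fin q → ℝ) {K : ℝ}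
    (hB : ∀ u, l2 (mulVec B u) ≤ K * l2 u) (k : Fin q) : l2 (transpose B k) ≤ K := by
  have h1 : mulVec B (Pi.single k 1) = transpose B k := by
    funext i; unfold mulVec transpose; simp [Pi.single_apply]
  have h2 : l2 (Pi.single k 1 : Fin q → ℝ) = 1 := by
    unfold l2; simp [Pi.single_apply, ite_pow]
  have := hB (Pi.single k 1)
  rwa [h1, h2, mul_one] at this

/-- A grid of mesh `1/m` on the cube `[-1, 1]^{n × d}`. -/
lemma exists_grid (n d : ℕ) (hm : 0 < m) : ∃ N : Finset (Fin n → Fin d → ℝ),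
    N.card ≤ (2 * m + 1) ^ (n * d) ∧
    ∀ v : Fin n → Fin d → ℝ, (∀ i j, |v i j| ≤ 1) → ∃ c ∈ N, ∀ i j, |v i j - c i j| ≤ 1 / m := by
  have hm' : (0 : ℝ) < m := by exact_mod_cast hm
  let G : Finset ℝ := (Finset.Icc (-(m : ℤ)) m).image fun t : ℤ => (t : ℝ) / m
  have hG : G.card ≤ 2 * m + 1 := by
    refine Finset.card_image_le.trans ?_
    rw [Int.card_Icc]; omega
  refine ⟨Fintype.piFinset fun _ => Fintype.piFinset fun _ => G, ?_, ?_⟩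
  · rw [Fintype.card_piFinset_const, Fintype.card_piFinset_const, ← pow_mul, mul_comm d n]
    exact Nat.pow_le_pow_left hG _
  · intro v hv
    refine ⟨fun i j => (⌊m * v i j⌋ : ℝ) / m, ?_, fun i j => ?_⟩
    · simp only [Fintype.mem_piFinset]
      intro i j
      refine Finset.mem_image.2 ⟨⌊m * v i j⌋, Finset.mem_Icc.2 ⟨?_, ?_⟩, rfl⟩
      · rw [Int.le_floor]; push_cast
        nlinarith [(abs_le.1 (hv i j)).1]
      · rw [← Int.lt_add_one_iff, Int.floor_lt]; push_cast
        nlinarith [(abs_le.1 (hv i j)).2]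
    · have h1 := Int.floor_le ((m : ℝ) * v i j)
      have h2 := Int.lt_floor_add_one ((m : ℝ) * v i j)
      have h3 : v i j - (⌊m * v i j⌋ : ℝ) / m = (m * v i j - ⌊m * v i j⌋) / m := by
        field_simp
      rw [h3, abs_div, abs_of_pos hm']
      gcongr
      rw [abs_le]; constructor <;> linarith

/-- The event that the hidden vectors `H` are normalized and separated from the `i₀`-th one. -/
def HGood {n q : ℕ} (δ : ℝ) (i₀ : Fin n) (H : Fin n → Fin q → ℝ) : Prop :=
  (∀ j, 1 / 2 ≤ l2 (H j)) ∧ (∀ j, l2 (H j) ≤ 2) ∧ ∀ j, j ≠ i₀ → Sep (δ / 4) (H j) (H i₀)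

lemma measurableSet_HGood {n q : ℕ} (δ : ℝ) (i₀ : Fin n) :
    MeasurableSet {H : Fin n → Fin q → ℝ | HGood δ i₀ H} := by
  have h0 : ∀ j, Measurable fun H : Fin n → Fin q → ℝ => l2 (H j) := fun j => by fun_prop
  refine MeasurableSet.inter (s₁ := {H : Fin n → Fin q → ℝ | ∀ j, 1 / 2 ≤ l2 (H j)})
    (s₂ := {H : Fin n → Fin q → ℝ |
      (∀ j, l2 (H j) ≤ 2) ∧ ∀ j, j ≠ i₀ → Sep (δ / 4) (H j) (H i₀)}) ?_ ?_
  · rw [Set.ofPred_forall]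
    exact MeasurableSet.iInter fun j => measurableSet_le measurable_const (h0 j)
  · refine MeasurableSet.inter (s₁ := {H : Fin n → Fin q → ℝ | ∀ j, l2 (H j) ≤ 2})
      (s₂ := {H : Fin n → Fin q → ℝ | ∀ j, j ≠ i₀ → Sep (δ / 4) (H j) (H i₀)}) ?_ ?_
    · rw [Set.ofPred_forall]
      exact MeasurableSet.iInter fun j => measurableSet_le (h0 j) measurable_const
    · rw [Set.ofPred_forall]
      refine MeasurableSet.iInter fun j => ?_
      rw [Set.ofPred_forall]
      refine MeasurableSet.iInter fun _ => ?_
      unfold Sep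
      exact measurableSet_le (by fun_prop) (by fun_prop)

/-- Given the hidden vectors entering layer `j`, the pairs (row `k` of `W_j`, column `k` of `B`) are
independent, so the count of large gradient rows is binomial for a fixed tuple `v`. -/
lemma last_event (hm : 0 < m) (hd : 0 < d) {n : ℕ} (x : Fin n → Fin 𝔡 → ℝ) (j : Fin L) {δ : ℝ}
    (hδ : 0 < δ) (hδ1 : δ ≤ 1) (v : Fin n → Fin d → ℝ) (i₀ : Fin n) :
    initMeasure 𝔡 m d L {z | HGood δ i₀ (fun i => hseq z.1 z.2.1 (x i) j) ∧
      ((Finset.univ.filter fun k => l2 (v i₀) / (8 * √d)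
        ≤ l2 (rowR (fun i => hseq z.1 z.2.1 (x i) j) v (z.2.1 j k)
          (transpose z.2.2 k))).card : ℝ) ≤ δ * m / (2048 * n)}
      ≤ ENNReal.ofReal (Real.exp (-(δ * m / (2048 * n)))) := by
  have hn : 0 < n := i₀.pos
  have hH : Measurable fun z : Init 𝔡 m d L => fun i => hseq z.1 z.2.1 (x i) j :=
    measurable_pi_lambda _ fun i => by fun_prop
  have hT : Measurable (transpose : (Fin d → Fin m → ℝ) → Fin m → Fin d → ℝ) := by
    unfold transpose; fun_prop
  refine cond_WB ?_ j fun A W => ?_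
  · refine MeasurableSet.inter
      (s₁ := {z : Init 𝔡 m d L | HGood δ i₀ (fun i => hseq z.1 z.2.1 (x i) j)})
      (s₂ := {z : Init 𝔡 m d L | ((Finset.univ.filter fun k => l2 (v i₀) / (8 * √d)
        ≤ l2 (rowR (fun i => hseq z.1 z.2.1 (x i) j) v (z.2.1 j k)
          (transpose z.2.2 k))).card : ℝ) ≤ δ * m / (2048 * n)})
      (hH (measurableSet_HGood δ i₀)) ?_
    refine measurableSet_le ?_ (by fun_prop)
    simp only [Finset.card_filter, Nat.cast_sum]
    refine Finset.measurable_fun_sum _ fun k _ => ?_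
    refine (measurable_of_countable (fun n : ℕ => (n : ℝ))).comp ?_
    refine Measurable.ite (measurableSet_le measurable_const ?_) measurable_const measurable_const
    refine measurable_l2 (measurable_rowR hH (by fun_prop) ?_)
    exact (measurable_pi_apply k).comp (hT.comp (measurable_snd.comp measurable_snd))
  · simp only [Set.mem_ofPred_eq, hseq_update _ _ _ _ _ le_rfl, Function.update_self]
    by_cases hg : HGood δ i₀ (fun i => hseq A W (x i) j)
    · refine le_trans (measure_mono ?_) (last_layer_count m m n d hn hd (2 / m) ?_
        (fun i => hseq A W (x i) j) v i₀ hδ hδ1 hg.1 hg.2.1 fun j' hj t => ?_)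
      · exact fun z hz => hz.2
      · have : (m : NNReal) ≠ 0 := by exact_mod_cast hm.ne'
        positivity
      · exact (hg.2.2 j' hj).dist (by positivity) (by linarith [hg.1 i₀]) t
    · refine le_trans (le_of_eq ?_) (zero_le)
      convert measure_empty (μ := (gaussMat m m (2 / m)).prod (gaussMat d m (1 / d)))
      ext G
      simp only [Set.mem_ofPred_eq, Set.mem_empty_iff_false, iff_false]
      exact fun h' => hg h'.1

/-- Uniformly in the loss vectors `v`, many rows of the last-layer gradient are large. -/
lemma last_good (hm : 0 < m) (hd : 0 < d) {n : ℕ} (hn : 0 < n) (x : Fin n → Fin 𝔡 → ℝ) (j : Fin L)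
    {δ : ℝ} (hδ : 0 < δ) (hδ1 : δ ≤ 1) (hbig : 2 * 10 ^ 7 * (n : ℝ) ^ 2 * d ≤ m) {r : ℝ}
    (hr : (2 * (m : ℝ) + 1) ^ (n * d) * n ≤ Real.exp r) :
    ∃ E : Set (Init 𝔡 m d L),
      initMeasure 𝔡 m d L E ≤ ENNReal.ofReal (Real.exp (-(δ * m / (2048 * n) - r))) ∧
      ∀ z ∉ E, (∀ u, l2 (mulVec z.2.2 u) ≤ 50 * √(m / d) * l2 u) →
        ∀ (v : Fin n → Fin d → ℝ) (i₀ : Fin n), HGood δ i₀ (fun i => hseq z.1 z.2.1 (x i) j) →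
        (∀ i, l2 (v i) ≤ l2 (v i₀)) →
        δ * m / (2048 * n) ≤ ((Finset.univ.filter fun k => l2 (v i₀) / (16 * √d)
          ≤ l2 (rowR (fun i => hseq z.1 z.2.1 (x i) j) v (z.2.1 j k)
            (transpose z.2.2 k))).card : ℝ) := by
  obtain ⟨N, hN, hcov⟩ := exists_grid n d hm
  have hm' : (0 : ℝ) < m := by exact_mod_cast hm
  have hd' : (1 : ℝ) ≤ d := by exact_mod_cast hd
  have hn' : (1 : ℝ) ≤ n := by exact_mod_cast hn
  let Ev : (Fin n → Fin d → ℝ) × Fin n → Set (Init 𝔡 m d L) := fun t =>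
    {z | HGood δ t.2 (fun i => hseq z.1 z.2.1 (x i) j) ∧
      ((Finset.univ.filter fun k => l2 (t.1 t.2) / (8 * √d)
        ≤ l2 (rowR (fun i => hseq z.1 z.2.1 (x i) j) t.1 (z.2.1 j k)
          (transpose z.2.2 k))).card : ℝ) ≤ δ * m / (2048 * n)}
  refine ⟨⋃ t ∈ N ×ˢ Finset.univ, Ev t, union_bound _ _ _ ?_
    fun t _ => last_event hm hd x j hδ hδ1 t.1 t.2, ?_⟩
  · refine le_trans ?_ hr
    rw [Finset.card_product, Finset.card_univ, Fintype.card_fin]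
    push_cast
    gcongr
    exact_mod_cast hN
  intro z hz hB v i₀ hg hmax
  simp only [Set.mem_iUnion, not_exists] at hz
  set h := fun i => hseq z.1 z.2.1 (x i) j with hh
  rcases (l2_nonneg (v i₀)).eq_or_lt with h0 | h0
  · have : (Finset.univ.filter fun k => l2 (v i₀) / (16 * √d)
          ≤ l2 (rowR h v (z.2.1 j k) (transpose z.2.2 k))) = Finset.univ := by
      refine Finset.filter_true_of_mem fun k _ => ?_
      rw [← h0, zero_div]; exact l2_nonneg _
    rw [this, Finset.card_univ, Fintype.card_fin, div_le_iff₀ (by positivity)]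
    nlinarith
  set M := l2 (v i₀) with hM
  let v' : Fin n → Fin d → ℝ := fun i => M⁻¹ • v i
  have hv' : ∀ i, l2 (v' i) ≤ 1 := fun i => by
    rw [l2_smul, abs_of_pos (by positivity), inv_mul_le_iff₀ h0, mul_one]; exact hmax i
  have hv'0 : l2 (v' i₀) = 1 := by
    rw [l2_smul, abs_of_pos (by positivity), ← hM, inv_mul_cancel₀ h0.ne']
  obtain ⟨c, hcN, hc⟩ := hcov v' fun i j => (abs_coord_le_l2 _ _).trans (hv' i)
  have hdist : ∀ i, l2 (v' i - c i) ≤ √d * (1 / m) := fun i =>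
    l2_le_sqrt_mul _ (by positivity) (hc i)
  have hev := hz (c, i₀) (Finset.mem_product.2 ⟨hcN, Finset.mem_univ _⟩)
  simp only [Ev, Set.mem_ofPred_eq, not_and, not_le] at hev
  refine (hev hg).le.trans ?_
  norm_cast
  refine Finset.card_le_card fun k hk => ?_
  rw [Finset.mem_filter] at hk ⊢
  refine ⟨Finset.mem_univ _, ?_⟩
  have hk2 := hk.2
  -- replacing `v` by its grid point costs at most half of the row norm
  have hsd : (1 : ℝ) ≤ √d := by rw [Real.one_le_sqrt]; exact hd'
  have hsd2 : √(d : ℝ) ^ 2 = d := Real.sq_sqrt (by positivity)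
  have hsm2 : √(m : ℝ) ^ 2 = m := Real.sq_sqrt (by positivity)
  have hsm0 : 0 < √(m : ℝ) := Real.sqrt_pos.2 hm'
  have hsm : 3200 * n * √d ≤ √(m : ℝ) := by
    refine (sq_le_sq₀ (by positivity) hsm0.le).1 ?_
    rw [hsm2, mul_pow, hsd2, mul_pow]
    refine le_trans ?_ hbig
    have : 0 ≤ (n : ℝ) ^ 2 * d := by positivity
    nlinarith
  have herr : l2 (rowR h v' (z.2.1 j k) (transpose z.2.2 k)
      - rowR h c (z.2.1 j k) (transpose z.2.2 k)) ≤ 1 / (32 * √d) := by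
    rw [rowR_sub]
    refine (l2_rowR_le h _ _ _ hdist hg.2.1).trans ?_
    have hb := transpose_row_le z.2.2 hB k
    calc (n : ℝ) * (l2 (transpose z.2.2 k) * (√d * (1 / m)) * 2)
        ≤ n * (50 * √(m / d) * (√d * (1 / m)) * 2) := by gcongr
      _ = 100 * n / √m := by
        rw [Real.sqrt_div (by positivity)]
        field_simp
        rw [hsm2]; ring
      _ ≤ 1 / (32 * √d) := by
        rw [div_le_div_iff₀ hsm0 (by positivity)]
        linarith
  have hc0 : 1 - √d * (1 / m) ≤ l2 (c i₀) := by
    have h3 : l2 (v' i₀) ≤ l2 (v' i₀ - c i₀) + l2 (c i₀) := by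
      have := l2_add_le (v' i₀ - c i₀) (c i₀)
      rwa [sub_add_cancel] at this
    linarith [hdist i₀]
  have hsmall : √(d : ℝ) * (1 / m) ≤ 1 / 4 := by
    have : √(d : ℝ) ≤ d := by nlinarith
    rw [mul_one_div, div_le_iff₀ hm']
    nlinarith [sq_nonneg ((n : ℝ) - 1)]
  have hrow : 1 / (16 * √d) ≤ l2 (rowR h v' (z.2.1 j k) (transpose z.2.2 k)) := by
    have h3 := l2_add_le (rowR h v' (z.2.1 j k) (transpose z.2.2 k))
      (-(rowR h v' (z.2.1 j k) (transpose z.2.2 k) - rowR h c (z.2.1 j k) (transpose z.2.2 k)))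
    have e : l2 (-(rowR h v' (z.2.1 j k) (transpose z.2.2 k)
        - rowR h c (z.2.1 j k) (transpose z.2.2 k)))
        = l2 (rowR h v' (z.2.1 j k) (transpose z.2.2 k)
        - rowR h c (z.2.1 j k) (transpose z.2.2 k)) := by
      rw [neg_sub, l2_sub_comm]
    rw [e] at h3
    rw [← sub_eq_add_neg, sub_sub_cancel] at h3
    have h4 : (3 / 4) / (8 * √d) ≤ l2 (c i₀) / (8 * √d) := by gcongr; linarith
    have h5 : (3 / 4) / (8 * √d) = 1 / (16 * √d) + 1 / (32 * √d) := by field_simp; norm_num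
    linarith
  have e := rowR_smul h v (z.2.1 j k) (transpose z.2.2 k) M⁻¹
  change rowR h v' _ _ = _ at e
  rw [e, l2_smul, abs_of_pos (by positivity)] at hrow
  calc M / (16 * √d) = M * (1 / (16 * √d)) := by ring
    _ ≤ M * (M⁻¹ * l2 (rowR h v (z.2.1 j k) (transpose z.2.2 k))) := by gcongr
    _ = _ := by field_simp

end LastLayer

/-! ### Perturbed chains -/

section Chains
variable {𝔡 m d L : ℕ}

/-- `y a, …, y N` follows the linearized network at initialization, up to an additive perturbation
in each layer which consists of an `s`-sparse part, dominated by the corresponding coordinates of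
`W_j y_j`, and a part of norm at most `Q`. -/
def Pert (z : Init 𝔡 m d L) (x : Fin 𝔡 → ℝ) (s a N : ℕ) (Q : ℝ) (y : ℕ → Fin m → ℝ) : Prop :=
  ∀ j : Fin L, a ≤ j → j < N → ∃ (f₁ f₂ : Fin m → ℝ) (T : Finset (Fin m)),
    y (j + 1) = signOf (gseq z.1 z.2.1 x (j + 1)) * mulVec (z.2.1 j) (y j) + (f₁ + f₂) ∧
    T.card ≤ s ∧ (∀ k ∉ T, f₁ k = 0) ∧ l2 f₁ ≤ l2 (restr T (mulVec (z.2.1 j) (y j))) ∧ l2 f₂ ≤ Q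

lemma Pert.of_diag {z : Init 𝔡 m d L} {x : Fin 𝔡 → ℝ} {s a N : ℕ} {Q : ℝ} {y : ℕ → Fin m → ℝ}
    (h : ∀ j : Fin L, a ≤ j → j < N → ∃ (D p : Fin m → ℝ) (T : Finset (Fin m)),
      y (j + 1) = D * (mulVec (z.2.1 j) (y j) + p) ∧ T.card ≤ s ∧
      (∀ k ∉ T, D k = signOf (gseq z.1 z.2.1 x (j + 1)) k) ∧ (∀ k, 0 ≤ D k ∧ D k ≤ 1) ∧
      l2 p ≤ Q) : Pert z x s a N Q y := by
  intro j h1 h2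
  obtain ⟨D, p, T, hy, hT, hD, hD1, hp⟩ := h j h1 h2
  refine ⟨(D - signOf (gseq z.1 z.2.1 x (j + 1))) * mulVec (z.2.1 j) (y j), D * p, T, ?_, hT, ?_,
    ?_, (l2_had_le D p fun k => abs_le.2 ⟨by linarith [(hD1 k).1], (hD1 k).2⟩).trans hp⟩
  · rw [hy]; ring
  · intro k hk; simp [hD k hk]
  · refine l2_mono fun k => ?_
    unfold restr
    by_cases hk : k ∈ T
    · rw [if_pos hk, Pi.mul_apply, Pi.sub_apply, abs_mul]
      refine mul_le_of_le_one_left (abs_nonneg _) ?_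
      have := hD1 k
      unfold signOf
      rw [abs_le]
      split_ifs <;> constructor <;> linarith
    · rw [if_neg hk, Pi.mul_apply, Pi.sub_apply, hD k hk]; simp

lemma pvec_add (A : Fin m → Fin 𝔡 → ℝ) (W : Fin L → Fin m → Fin m → ℝ) (x : Fin 𝔡 → ℝ)
    (a b : ℕ) (u v : Fin m → ℝ) :
    pvec A W x a b (u + v) = pvec A W x a b u + pvec A W x a b v := mulVec_add _ _ _

/-- Duhamel formula: the perturbations propagate through the unperturbed chain. -/
lemma chain_repr {z : Init 𝔡 m d L} {x : Fin 𝔡 → ℝ} {a N : ℕ} (hN : N ≤ L) {y f : ℕ → Fin m → ℝ}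
    (h : ∀ j : Fin L, a ≤ j → j < N →
      y (j + 1) = signOf (gseq z.1 z.2.1 x (j + 1)) * mulVec (z.2.1 j) (y j) + f j)
    {b : ℕ} (hab : a ≤ b) (hb : b ≤ N) :
    y b = pvec z.1 z.2.1 x (a + 1) b (y a)
      + ∑ c ∈ Finset.Ico a b, pvec z.1 z.2.1 x (c + 2) b (f c) := by
  induction b, hab using Nat.le_induction with
  | base => rw [pvec_of_lt _ _ _ (by omega)]; simp
  | succ b hab ih =>
    let j : Fin L := ⟨b, by omega⟩
    have h1 := h j hab (by simp only [j]; omega)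
    have h2 : ∀ c ∈ Finset.Ico a b, pvec z.1 z.2.1 x (c + 2) (b + 1) (f c)
        = signOf (gseq z.1 z.2.1 x (b + 1)) *
          mulVec (z.2.1 j) (pvec z.1 z.2.1 x (c + 2) b (f c)) := by
      intro c hc
      have := (Finset.mem_Ico.1 hc).2
      exact pvec_succ z.1 z.2.1 x j (by simp only [j]; omega) (f c)
    have h3 := pvec_succ z.1 z.2.1 x (a := a + 1) j (by simp only [j]; omega) (y a)
    rw [Finset.sum_Ico_succ_top hab, Finset.sum_congr rfl h2,
      pvec_of_lt z.1 z.2.1 x (show b + 1 < b + 2 by omega)]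
    change y (b + 1) = _ * _ + f b at h1
    change pvec z.1 z.2.1 x (a + 1) (b + 1) (y a) = signOf (gseq z.1 z.2.1 x (b + 1)) *
      mulVec (z.2.1 j) (pvec z.1 z.2.1 x (a + 1) b (y a)) at h3
    rw [h3, h1, ← Finset.mul_sum, ← mulVec_sum]
    have h4 : mulVec (z.2.1 j) (y (j : ℕ)) = mulVec (z.2.1 j) (pvec z.1 z.2.1 x (a + 1) b (y a))
        + mulVec (z.2.1 j) (∑ c ∈ Finset.Ico a b, pvec z.1 z.2.1 x (c + 2) b (f c)) := by
      rw [← mulVec_add, ← ih (by omega)]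
    rw [h4, mul_add, add_assoc]

lemma chain_apply {p : ℕ} {z : Init 𝔡 m d L} {x : Fin 𝔡 → ℝ} {s a N : ℕ} (hN : N ≤ L) {Q : ℝ}
    {y : ℕ → Fin m → ℝ} (h : Pert z x s a N Q y) {b : ℕ} (hab : a ≤ b) (hb : b ≤ N)
    (M : Fin p → Fin m → ℝ) {k e R : ℝ} (hk : 0 ≤ k) (he : 0 ≤ e) (hR0 : 0 ≤ R) (hQ : 0 ≤ Q)
    (hM : ∀ a ≤ L + 1, ∀ v, l2 (mulVec M (pvec z.1 z.2.1 x a b v)) ≤ k * l2 v)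
    (hMs : ∀ a ≤ L + 1, ∀ T : Finset (Fin m), T.card ≤ s → ∀ v : Fin m → ℝ, (∀ k ∉ T, v k = 0) →
      l2 (mulVec M (pvec z.1 z.2.1 x a b v)) ≤ e * l2 v)
    (hR : ∀ j : Fin L, a ≤ j → j < b → ∀ T : Finset (Fin m), T.card ≤ s →
      l2 (restr T (mulVec (z.2.1 j) (y j))) ≤ R) :
    l2 (mulVec M (y b)) ≤ k * l2 (y a) + L * (e * R + k * Q) := by
  have h' : ∀ j : ℕ, ∃ f₁ f₂ : Fin m → ℝ, a ≤ j → j < b →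
      (∀ hj : j < L, y (j + 1) = signOf (gseq z.1 z.2.1 x (j + 1)) * mulVec (z.2.1 ⟨j, hj⟩) (y j)
        + (f₁ + f₂)) ∧ (∃ T : Finset (Fin m), T.card ≤ s ∧ ∀ k ∉ T, f₁ k = 0) ∧
      l2 f₁ ≤ R ∧ l2 f₂ ≤ Q := by
    intro j
    by_cases hj : a ≤ j ∧ j < b
    · obtain ⟨f₁, f₂, T, h1, h2, h3, h4, h5⟩ := h ⟨j, by omega⟩ hj.1 (by simp only; omega)
      exact ⟨f₁, f₂, fun _ _ => ⟨fun _ => h1, ⟨T, h2, h3⟩,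
        h4.trans (hR ⟨j, by omega⟩ hj.1 hj.2 T h2), h5⟩⟩
    · exact ⟨0, 0, fun h1 h2 => absurd ⟨h1, h2⟩ hj⟩
  choose f₁ f₂ hf using h'
  rw [chain_repr (f := fun j => f₁ j + f₂ j) (N := b) (hb.trans hN)
    (fun j h1 h2 => (hf j h1 h2).1 j.2) hab le_rfl, mulVec_add, mulVec_sum]
  refine (l2_add_le _ _).trans (add_le_add (hM _ (by omega) _) ((l2_sum_le _ _).trans ?_))
  refine (Finset.sum_le_card_nsmul _ _ (e * R + k * Q) fun c hc => ?_).trans ?_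
  · obtain ⟨h1, h2⟩ := Finset.mem_Ico.1 hc
    obtain ⟨_, ⟨T, hT, hT'⟩, h3, h4⟩ := hf c h1 h2
    rw [pvec_add, mulVec_add]
    refine (l2_add_le _ _).trans (add_le_add ?_ ?_)
    · exact (hMs _ (by omega) T hT _ hT').trans (mul_le_mul_of_nonneg_left h3 he)
    · exact (hM _ (by omega) _).trans (mul_le_mul_of_nonneg_left h4 hk)
  · rw [nsmul_eq_mul, Nat.card_Ico]
    have : ((b - a : ℕ) : ℝ) ≤ L := by exact_mod_cast (by omega : b - a ≤ L)
    gcongr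

variable {z : Init 𝔡 m d L} {x : Fin 𝔡 → ℝ} {s : ℕ} {K κ η β ηB : ℝ}

/-- Since `η L ≤ 1/2`, the contributions of all earlier flips are absorbed by half of the bound in
a strong induction over the layer. -/
lemma chain_rows (cg : ChainGood z x s K κ η β ηB) (hκ : 0 ≤ κ) (hη : 0 ≤ η)
    (hηL : η * L ≤ 1 / 2) {a N : ℕ} (hN : N ≤ L) {Q : ℝ} (hQ : 0 ≤ Q) {y : ℕ → Fin m → ℝ}
    (h : Pert z x s a N Q y) (b : Fin L) (hab : a ≤ b) (hb : b ≤ N) (S : Finset (Fin m))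
    (hS : S.card ≤ s) :
    l2 (restr S (mulVec (z.2.1 b) (y b))) ≤ 2 * κ * (l2 (y a) + L * Q) := by
  obtain ⟨b, hbL⟩ := b
  simp only at hab hb ⊢
  induction b using Nat.strong_induction_on generalizing S with
  | _ b ih =>
    have hya := l2_nonneg (y a)
    have hR0 : 0 ≤ 2 * κ * (l2 (y a) + L * Q) := by positivity
    have := chain_apply hN h hab hb
      (mmul (diagMat fun k => if k ∈ S then 1 else 0) (z.2.1 ⟨b, hbL⟩)) (k := κ) (e := η) hκ hη
      hR0 hQ
      (fun a' ha' v => by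
        rw [mulVec_mmul, ← restr_eq_mulVec]; exact cg.rows ⟨b, hbL⟩ a' ha' S hS v)
      (fun a' ha' T hT v hv => by
        rw [mulVec_mmul, ← restr_eq_mulVec]; exact cg.sparse ⟨b, hbL⟩ a' ha' S T hS hT v hv)
      (fun j h1 h2 T hT => ih j h2 T hT j.2 h1 (by omega))
    rw [mulVec_mmul, ← restr_eq_mulVec] at this
    refine this.trans ?_
    nlinarith [mul_le_mul_of_nonneg_right hηL hR0]

lemma chain_full (cg : ChainGood z x s K κ η β ηB) (hK : 0 ≤ K) (hκ : 0 ≤ κ) (hη : 0 ≤ η)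
    (hηL : η * L ≤ 1 / 2) {a N : ℕ} (hN : N ≤ L) {Q : ℝ} (hQ : 0 ≤ Q) {y : ℕ → Fin m → ℝ}
    (h : Pert z x s a N Q y) (b : Fin L) (hab : a ≤ b) (hb : b ≤ N) :
    l2 (mulVec (z.2.1 b) (y b)) ≤
      K * (l2 (y a) + L * (2 * κ * (l2 (y a) + L * Q)) + L * Q) := by
  have hya := l2_nonneg (y a)
  have := chain_apply hN h hab hb (z.2.1 b) (k := K) (e := K)
    (R := 2 * κ * (l2 (y a) + L * Q)) hK hK (by positivity) hQ
    (fun a' ha' v => cg.full b a' ha' v) (fun a' ha' T hT v hv => cg.full b a' ha' v)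
    (fun j h1 h2 T hT => chain_rows cg hκ hη hηL hN hQ h j h1 (by omega) T hT)
  linarith

lemma chain_out (cg : ChainGood z x s K κ η β ηB) (hκ : 0 ≤ κ) (hη : 0 ≤ η)
    (hηL : η * L ≤ 1 / 2) (hβ : 0 ≤ β) (hηB : 0 ≤ ηB) {a : ℕ} (ha : a ≤ L) {Q : ℝ} (hQ : 0 ≤ Q)
    {y : ℕ → Fin m → ℝ} (h : Pert z x s a L Q y) :
    l2 (mulVec z.2.2 (y L)) ≤
      β * l2 (y a) + L * (ηB * (2 * κ * (l2 (y a) + L * Q)) + β * Q) := by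
  have hya := l2_nonneg (y a)
  exact chain_apply le_rfl h ha le_rfl z.2.2 (k := β) (e := ηB)
    (R := 2 * κ * (l2 (y a) + L * Q)) hβ hηB (by positivity) hQ cg.out cg.out_sparse
    (fun j h1 h2 T hT => chain_rows cg hκ hη hηL le_rfl hQ h j h1 h2.le T hT)

end Chains

/-! ### Stability of the forward and backward passes -/

section Stability
variable {𝔡 m d L : ℕ}

/-- ReLU differences are a diagonal matrix with entries in `[0, 1]` applied to the difference of
the arguments; this matrix is the sign matrix at coordinates where the signs agree. -/
lemma exists_relu_diag {p : ℕ} (g g₀ : Fin p → ℝ) : ∃ D : Fin p → ℝ,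
    relu g - relu g₀ = D * (g - g₀) ∧ (∀ k, signOf g k = signOf g₀ k → D k = signOf g₀ k) ∧
    ∀ k, 0 ≤ D k ∧ D k ≤ 1 := by
  have : ∀ k, ∃ D : ℝ, relu g k - relu g₀ k = D * (g k - g₀ k) ∧
      (signOf g k = signOf g₀ k → D = signOf g₀ k) ∧ 0 ≤ D ∧ D ≤ 1 := by
    intro k
    unfold relu signOf
    by_cases h1 : 0 ≤ g k <;> by_cases h2 : 0 ≤ g₀ k
    · exact ⟨1, by rw [max_eq_left h1, max_eq_left h2]; ring, by simp [h2], by norm_num, le_rfl⟩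
    · push Not at h2
      have h3 : 0 < g k - g₀ k := by linarith
      refine ⟨g k / (g k - g₀ k), ?_, by simp [h1, h2.not_ge], by positivity, ?_⟩
      · rw [max_eq_left h1, max_eq_right h2.le]; field_simp; ring
      · rw [div_le_one h3]; linarith
    · push Not at h1
      have h3 : 0 < g₀ k - g k := by linarith
      refine ⟨g₀ k / (g₀ k - g k), ?_, by simp [h2, h1.not_ge], by positivity, ?_⟩
      · rw [max_eq_right h1.le, max_eq_left h2]; field_simp; ring
      · rw [div_le_one h3]; linarith
    · push Not at h1 h2
      exact ⟨0, by rw [max_eq_right h1.le, max_eq_right h2.le]; ring, by simp [h2.not_ge], le_rfl,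
        by norm_num⟩
  choose D h1 h2 h3 using this
  exact ⟨D, by ext k; simpa using h1 k, h2, h3⟩

/-- The coordinates whose activation differs between weights `W` and `W₀` in layer `j + 1`. -/
def flips (A : Fin m → Fin 𝔡 → ℝ) (W W₀ : Fin L → Fin m → Fin m → ℝ) (x : Fin 𝔡 → ℝ) (j : Fin L) :
    Finset (Fin m) :=
  Finset.univ.filter fun k => signOf (gseq A W x (j + 1)) k ≠ signOf (gseq A W₀ x (j + 1)) k

/-- Few coordinates can change sign under a small perturbation. -/
lemma card_flip_le {g g₀ : Fin m → ℝ} (hm : 0 < m) {τ t G : ℝ} (hτ : 0 < τ) (ht : 1 / 2 ≤ t)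
    (hG : l2 (g - g₀) ≤ G) (hG2 : 2 * G ^ 2 ≤ τ ^ 3)
    (hcount : ((Finset.univ.filter fun k => |g₀ k| ≤ τ * t * √(2 / m)).card : ℝ) < 4 * τ * m) :
    ((Finset.univ.filter fun k => signOf g k ≠ signOf g₀ k).card : ℝ) ≤ 5 * τ * m := by
  have hm' : (0 : ℝ) < m := by exact_mod_cast hm
  set θ := τ * t * √(2 / m) with hθ
  have hθ0 : 0 ≤ θ := by positivity
  have hsub : (Finset.univ.filter fun k => signOf g k ≠ signOf g₀ k) ⊆
      (Finset.univ.filter fun k => |g₀ k| ≤ θ) ∪ (Finset.univ.filter fun k => θ ≤ |(g - g₀) k|) := by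
    intro k hk
    rw [Finset.mem_filter] at hk
    rw [Finset.mem_union, Finset.mem_filter, Finset.mem_filter]
    by_contra hcon
    push Not at hcon
    have h1 := hcon.1 (Finset.mem_univ _)
    have h2 := hcon.2 (Finset.mem_univ _)
    apply hk.2
    rw [Pi.sub_apply] at h2
    have h3 : |g k - g₀ k| < |g₀ k| := h2.trans h1
    unfold signOf
    rcases le_total 0 (g₀ k) with h4 | h4
    · rw [abs_of_nonneg h4, abs_lt] at h3
      rw [if_pos h4, if_pos (by linarith)]
    · rw [abs_of_nonpos h4, abs_lt] at h3
      rw [if_neg (by linarith), if_neg (by linarith)]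
  have h1 : ((Finset.univ.filter fun k => θ ≤ |(g - g₀) k|).card : ℝ) * θ ^ 2 ≤ G ^ 2 := by
    calc _ = ∑ _k ∈ Finset.univ.filter fun k => θ ≤ |(g - g₀) k|, θ ^ 2 := by simp
      _ ≤ ∑ k ∈ Finset.univ.filter fun k => θ ≤ |(g - g₀) k|, (g - g₀) k ^ 2 := by
        refine Finset.sum_le_sum fun k hk => ?_
        rw [← sq_abs ((g - g₀) k)]
        exact pow_le_pow_left₀ hθ0 (Finset.mem_filter.1 hk).2 2
      _ ≤ ∑ k, (g - g₀) k ^ 2 :=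
        Finset.sum_le_sum_of_subset_of_nonneg (Finset.filter_subset _ _) fun _ _ _ => sq_nonneg _
      _ = l2 (g - g₀) ^ 2 := (l2_sq _).symm
      _ ≤ G ^ 2 := pow_le_pow_left₀ (l2_nonneg _) hG 2
  have h2 : τ ^ 2 / (2 * m) ≤ θ ^ 2 := by
    rw [hθ, mul_pow, mul_pow, Real.sq_sqrt (by positivity)]
    have : (1 / 2) ^ 2 ≤ t ^ 2 := pow_le_pow_left₀ (by norm_num) ht 2
    calc τ ^ 2 / (2 * m) = τ ^ 2 * (1 / 2) ^ 2 * (2 / m) := by field_simp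
      _ ≤ _ := by gcongr
  have h3 : ((Finset.univ.filter fun k => θ ≤ |(g - g₀) k|).card : ℝ) ≤ τ * m := by
    set c := ((Finset.univ.filter fun k => θ ≤ |(g - g₀) k|).card : ℝ) with hc
    have hc0 : 0 ≤ c := by positivity
    have h4 : c * (τ ^ 2 / (2 * m)) ≤ τ ^ 3 / 2 :=
      (mul_le_mul_of_nonneg_left h2 hc0).trans (h1.trans (by linarith))
    have h5 : c * (τ ^ 2 / (2 * m)) = (c / m) * (τ ^ 2 / 2) := by field_simp
    have h6 : τ ^ 3 / 2 = τ * (τ ^ 2 / 2) := by ring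
    rw [h5, h6] at h4
    have := le_of_mul_le_mul_right h4 (by positivity)
    rwa [div_le_iff₀ hm'] at this
  have h4 : ((Finset.univ.filter fun k => signOf g k ≠ signOf g₀ k).card : ℝ) ≤
      ((Finset.univ.filter fun k => |g₀ k| ≤ θ).card : ℝ) +
        ((Finset.univ.filter fun k => θ ≤ |(g - g₀) k|).card : ℝ) := by
    exact_mod_cast (Finset.card_le_card hsub).trans (Finset.card_union_le _ _)
  linarith

variable {z : Init 𝔡 m d L} {x : Fin 𝔡 → ℝ} {s : ℕ} {K κ η β ηB : ℝ}

/-- Induction over the layers, for two claims at once: few signs flip in layer `j`, and the hidden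
vectors move by at most `G`. The movement up to layer `j` bounds the flips in layer `j`
(few pre-activations are small, and large ones are expensive to flip), and few flips up to layer `j`
bound the movement of the next hidden vector through `chain_full`. -/
lemma forward_stable (cg : ChainGood z x s K κ η β ηB) (hm : 0 < m) (hK : 0 ≤ K) (hκ : 0 ≤ κ)
    (hη : 0 ≤ η) (hηL : η * L ≤ 1 / 2)
    (hnorm : ∀ ℓ ≤ L, 1 / 2 ≤ l2 (hseq z.1 z.2.1 x ℓ) ∧ l2 (hseq z.1 z.2.1 x ℓ) ≤ 2)
    {τ ω G : ℝ} (hτ : 0 < τ) (hω : 0 ≤ ω)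
    (hcount : ∀ j : Fin L, ((Finset.univ.filter fun k => |gseq z.1 z.2.1 x (j + 1) k| ≤
          τ * l2 (hseq z.1 z.2.1 x j) * √(2 / m)).card : ℝ) < 4 * τ * m)
    (hs : ∀ c : ℕ, (c : ℝ) ≤ 5 * τ * m → c ≤ s)
    (hG : 3 * ω * (K * L * (2 * κ * L + 1) + 1) ≤ G) (hG1 : G ≤ 1) (hG2 : 2 * G ^ 2 ≤ τ ^ 3)
    {W : Fin L → Fin m → Fin m → ℝ} (hW : ∀ ℓ, spec (W ℓ - z.2.1 ℓ) ≤ ω) :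
    (∀ j : Fin L, (flips z.1 W z.2.1 x j).card ≤ s) ∧
    ∀ ℓ ≤ L, l2 (hseq z.1 W x ℓ - hseq z.1 z.2.1 x ℓ) ≤ G := by
  have hG0 : 0 ≤ G := le_trans (by positivity) hG
  have key : ∀ N ≤ L, (∀ j : Fin L, j < N → (flips z.1 W z.2.1 x j).card ≤ s) ∧
      ∀ ℓ ≤ N, l2 (hseq z.1 W x ℓ - hseq z.1 z.2.1 x ℓ) ≤ G := by
    intro N
    induction N with
    | zero =>
      intro _
      refine ⟨fun j hj => by omega, fun ℓ hℓ => ?_⟩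
      obtain rfl : ℓ = 0 := by omega
      have : hseq z.1 W x 0 - hseq z.1 z.2.1 x 0 = 0 := by unfold hseq; simp
      rw [this, l2_zero]; exact hG0
    | succ N ih =>
      intro hN
      obtain ⟨ih1, ih2⟩ := ih (by omega)
      set y : ℕ → Fin m → ℝ := fun ℓ => hseq z.1 W x ℓ - hseq z.1 z.2.1 x ℓ with hy
      have hh3 : ∀ ℓ ≤ N, l2 (hseq z.1 W x ℓ) ≤ 3 := by
        intro ℓ hℓ
        have h1 := l2_add_le (y ℓ) (hseq z.1 z.2.1 x ℓ)
        rw [hy] at h1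
        simp only [sub_add_cancel] at h1
        linarith [ih2 ℓ hℓ, (hnorm ℓ (by omega)).2]
      have hp : ∀ j : Fin L, j ≤ N → l2 (mulVec (W j - z.2.1 j) (hseq z.1 W x j)) ≤ 3 * ω := by
        intro j hj
        refine (l2_mulVec_le_spec _ _).trans ?_
        have := mul_le_mul (hW j) (hh3 j hj) (l2_nonneg _) hω
        linarith
      have hdiff : ∀ j : Fin L, gseq z.1 W x (j + 1) - gseq z.1 z.2.1 x (j + 1) =
          mulVec (z.2.1 j) (y j) + mulVec (W j - z.2.1 j) (hseq z.1 W x j) := by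
        intro j
        rw [gseq_succ, gseq_succ, hy, mulVec_sub, sub_mulVec]; abel
      have hstep : ∀ j : Fin L, ∃ D : Fin m → ℝ, y (j + 1) =
          D * (mulVec (z.2.1 j) (y j) + mulVec (W j - z.2.1 j) (hseq z.1 W x j)) ∧
          (∀ k ∉ flips z.1 W z.2.1 x j, D k = signOf (gseq z.1 z.2.1 x (j + 1)) k) ∧
          ∀ k, 0 ≤ D k ∧ D k ≤ 1 := by
        intro j
        obtain ⟨D, h1, h2, h3⟩ := exists_relu_diag (gseq z.1 W x (j + 1)) (gseq z.1 z.2.1 x (j + 1))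
        refine ⟨D, ?_, fun k hk => h2 k ?_, h3⟩
        · rw [← hdiff, ← h1]
          simp only [hy]
          rw [hseq_succ, hseq_succ, gseq_succ, gseq_succ]
        · unfold flips at hk
          simpa using hk
      have hPert : Pert z x s 0 N (3 * ω) y := by
        refine Pert.of_diag fun j _ hj => ?_
        obtain ⟨D, h1, h2, h3⟩ := hstep j
        exact ⟨D, _, flips z.1 W z.2.1 x j, h1, ih1 j hj, h2, h3, hp j hj.le⟩
      have hy0 : l2 (y 0) = 0 := by
        have : y 0 = 0 := by simp only [hy]; unfold hseq; simp
        rw [this, l2_zero]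
      let j : Fin L := ⟨N, by omega⟩
      have hfull := chain_full cg hK hκ hη hηL (by omega) (by positivity) hPert j (Nat.zero_le _)
        (le_refl N)
      rw [hy0] at hfull
      have hgd : l2 (gseq z.1 W x (j + 1) - gseq z.1 z.2.1 x (j + 1)) ≤ G := by
        rw [hdiff]
        refine (l2_add_le _ _).trans (le_trans ?_ hG)
        have := hp j (le_refl N)
        nlinarith
      constructor
      · intro j' hj'
        rcases Nat.lt_succ_iff_lt_or_eq.1 hj' with h | h
        · exact ih1 j' h
        · have hjj : j' = j := Fin.ext h
          rw [hjj]
          exact hs _ (card_flip_le hm hτ (hnorm j (by omega)).1 hgd hG2 (hcount j))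
      · intro ℓ hℓ
        rcases Nat.le_succ_iff.1 hℓ with h | h
        · exact ih2 ℓ h
        · subst h
          obtain ⟨D, h1, -, h3⟩ := hstep j
          change l2 (y (j + 1)) ≤ G
          rw [h1, ← hdiff]
          exact (l2_had_le D _ fun k => abs_le.2 ⟨by linarith [(h3 k).1], (h3 k).2⟩).trans hgd
  exact ⟨fun j => (key L le_rfl).1 j j.2, (key L le_rfl).2⟩

/-- The backward operator `B D_L W_L ⋯ D_{a+1} W_{a+1}` stays bounded near initialization. -/
lemma backward_stable (cg : ChainGood z x s K κ η β ηB) (hK : 0 ≤ K) (hκ : 0 ≤ κ)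
    (hη : 0 ≤ η) (hηL : η * L ≤ 1 / 2) (hβ : 0 ≤ β) (hηB : 0 ≤ ηB) {ω Y : ℝ} (hω : 0 ≤ ω)
    (hY : 2 * K + 4 * κ * K * L + 1 ≤ Y) (hωY : L * (ω * Y) ≤ 1)
    {W : Fin L → Fin m → Fin m → ℝ} (hW : ∀ ℓ, spec (W ℓ - z.2.1 ℓ) ≤ ω)
    (hflip : ∀ j : Fin L, (flips z.1 W z.2.1 x j).card ≤ s) {a : ℕ} (ha : a ≤ L)
    (u : Fin m → ℝ) :
    l2 (mulVec z.2.2 (pvec z.1 W x (a + 1) L u)) ≤ (2 * β + 4 * κ * L * ηB) * l2 u := by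
  set y : ℕ → Fin m → ℝ := fun b => pvec z.1 W x (a + 1) b u with hy
  have hu := l2_nonneg u
  have hY1 : 1 ≤ Y := le_trans (by nlinarith [mul_nonneg (mul_nonneg hκ hK) (Nat.cast_nonneg (α := ℝ) L)]) hY
  have hYu : 0 ≤ ω * Y * l2 u := by positivity
  have hLQ : L * (ω * Y * l2 u) ≤ l2 u := by
    calc L * (ω * Y * l2 u) = L * (ω * Y) * l2 u := by ring
      _ ≤ 1 * l2 u := by gcongr
      _ = l2 u := one_mul _
  have hya : y a = u := by simp only [hy]; exact pvec_of_lt _ _ _ (by omega) _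
  have key : ∀ N ≤ L, a ≤ N → (∀ b, a ≤ b → b ≤ N → l2 (y b) ≤ Y * l2 u) →
      Pert z x s a N (ω * Y * l2 u) y := by
    intro N hN haN hb
    refine Pert.of_diag fun j h1 h2 => ⟨signOf (gseq z.1 W x (j + 1)),
      mulVec (W j - z.2.1 j) (y j), flips z.1 W z.2.1 x j, ?_, hflip j, ?_, ?_, ?_⟩
    · simp only [hy]
      rw [pvec_succ _ _ _ j (by omega), sub_mulVec]
      congr 1
      abel
    · intro k hk; unfold flips at hk; simpa using hk
    · intro k; unfold signOf; split_ifs <;> norm_num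
    · refine (l2_mulVec_le_spec _ _).trans ?_
      rw [mul_assoc]
      exact mul_le_mul (hW j) (hb j h1 h2.le) (l2_nonneg _) hω
  have hbd : ∀ N, a ≤ N → N ≤ L → ∀ b, a ≤ b → b ≤ N → l2 (y b) ≤ Y * l2 u := by
    intro N haN
    induction N, haN using Nat.le_induction with
    | base =>
      intro _ b h1 h2
      obtain rfl : b = a := by omega
      rw [hya]; nlinarith
    | succ N haN ih =>
      intro hN b h1 h2
      have ih' := ih (by omega)
      rcases Nat.le_succ_iff.1 h2 with h | h
      · exact ih' b h1 h
      · subst h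
        let j : Fin L := ⟨N, by omega⟩
        have hP := key N (by omega) haN ih'
        have hf := chain_full cg hK hκ hη hηL (by omega) hYu hP j haN (le_refl N)
        rw [hya] at hf
        have e : y (N + 1) = signOf (gseq z.1 W x (N + 1)) * (mulVec (z.2.1 j) (y N)
            + mulVec (W j - z.2.1 j) (y N)) := by
          simp only [hy]
          have := pvec_succ z.1 W x (a := a + 1) j (by simp only [j]; omega) u
          rw [sub_mulVec, add_sub_cancel]
          exact this
        rw [e]
        refine (l2_had_le _ _ (signOf_abs_le _)).trans ((l2_add_le _ _).trans ?_)
        have h3 : l2 (mulVec (W j - z.2.1 j) (y N)) ≤ ω * (Y * l2 u) :=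
          (l2_mulVec_le_spec _ _).trans
            (mul_le_mul (hW j) (ih' N haN le_rfl) (l2_nonneg _) hω)
        have hL1 : (1 : ℝ) ≤ L := by exact_mod_cast (by omega : 1 ≤ L)
        have h4 : ω * Y * l2 u ≤ l2 u := by nlinarith
        have h5 : K * (l2 u + L * (2 * κ * (l2 u + L * (ω * Y * l2 u))) + L * (ω * Y * l2 u))
            ≤ K * (l2 u + L * (2 * κ * (l2 u + l2 u)) + l2 u) := by gcongr
        have h6 : l2 (mulVec (z.2.1 j) (y N)) ≤ K * (l2 u + L * (2 * κ * (l2 u + l2 u)) + l2 u) :=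
          hf.trans h5
        have h7 := mul_le_mul_of_nonneg_right hY hu
        nlinarith
  have hP := key L le_rfl ha (hbd L ha le_rfl)
  have := chain_out cg hκ hη hηL hβ hηB ha hYu hP
  rw [hya] at this
  refine this.trans ?_
  have h5 : ηB * (2 * κ * (l2 u + L * (ω * Y * l2 u))) ≤ ηB * (2 * κ * (l2 u + l2 u)) := by gcongr
  have h6 := mul_le_mul_of_nonneg_left h5 (Nat.cast_nonneg (α := ℝ) L)
  have h7 := mul_le_mul_of_nonneg_left hLQ hβ
  nlinarith

end Stability

/-! ### Gradient bounds from forward and backward stability -/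

section GradientBounds
variable {𝔡 m d L : ℕ}

/-- The gradient is a rank-one matrix, so its Frobenius norm is the product of the norms of the
backward vector and the hidden vector. -/
lemma grad_upper (B : Fin d → Fin m → ℝ) (A : Fin m → Fin 𝔡 → ℝ) (W : Fin L → Fin m → Fin m → ℝ)
    (x : Fin 𝔡 → ℝ) (v : Fin d → ℝ) (ℓ : ℕ) {Γ : ℝ} (hΓ : 0 ≤ Γ)
    (hback : ∀ u, l2 (mulVec B (pvec A W x (ℓ + 1) L u)) ≤ Γ * l2 u)
    (hh : l2 (hseq A W x (ℓ - 1)) ≤ 3) :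
    frob (gradW B A W x v ℓ) ^ 2 ≤ 9 * Γ ^ 2 * l2 v ^ 2 := by
  unfold gradW
  rw [frob_outer_sq, mulVec_diagMat]
  have h1 : l2 (mulVec (transpose (backMat B A W x (ℓ + 1))) v) ≤ Γ * l2 v := by
    refine l2_mulVec_transpose_le _ hΓ (fun u => ?_) v
    unfold backMat
    rw [mulVec_mmul]
    exact hback u
  have h2 := (l2_had_le (signOf (gseq A W x ℓ)) _ (signOf_abs_le _)).trans h1
  have h3 := pow_le_pow_left₀ (l2_nonneg _) h2 2
  have h4 := pow_le_pow_left₀ (l2_nonneg _) hh 2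
  calc _ ≤ (Γ * l2 v) ^ 2 * 3 ^ 2 := mul_le_mul h3 h4 (by positivity) (by positivity)
    _ = _ := by ring

/-- The rows of the last-layer gradient, for arbitrary loss vectors. -/
lemma grad_last_row {n : ℕ} (B : Fin d → Fin m → ℝ) (A : Fin m → Fin 𝔡 → ℝ)
    (W : Fin L → Fin m → Fin m → ℝ) (x : Fin n → Fin 𝔡 → ℝ) (v : Fin n → Fin d → ℝ) (k : Fin m) :
    (∑ i, gradW B A W (x i) (v i) L) k =
      ∑ i, (dot (transpose B k) (v i) * signOf (gseq A W (x i) L) k) • hseq A W (x i) (L - 1) := by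
  rw [Finset.sum_apply]
  refine Finset.sum_congr rfl fun i _ => ?_
  have h1 : mulVec (transpose (backMat B A W (x i) (L + 1))) (v i) = mulVec (transpose B) (v i) := by
    have : backMat B A W (x i) (L + 1) = B := by
      ext a b
      have h2 : mulVec (backMat B A W (x i) (L + 1)) (Pi.single b 1) = mulVec B (Pi.single b 1) := by
        unfold backMat
        rw [mulVec_mmul]
        exact congrArg _ (pvec_of_lt A W (x i) (Nat.lt_succ_self L) _)
      have h3 := congrFun h2 a
      simpa [mulVec, Pi.single_apply] using h3
    rw [this]
  unfold gradW
  rw [h1, mulVec_diagMat]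
  ext l
  simp only [outer, Pi.mul_apply, Pi.smul_apply, smul_eq_mul, mulVec_eq_dot]
  ring

/-- If many rows of the gradient computed at initialization are large, then the gradient at nearby
weights is large: rows whose activations are unchanged differ only through the change of the hidden
vectors, and that error is small in the sum of squares. -/
lemma rows_lower {n q p : ℕ} (h h₀ : Fin n → Fin q → ℝ) (v : Fin n → Fin d → ℝ)
    (σ : Fin n → Fin p → ℝ) (w : Fin p → Fin q → ℝ) (B : Fin d → Fin p → ℝ)
    (F : Fin n → Finset (Fin p)) {s : ℕ} {β M G θ N : ℝ} (hβ : 0 ≤ β) (hθ : 0 ≤ θ)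
    (hσF : ∀ i, ∀ k ∉ F i, σ i k = if 0 ≤ dot (w k) (h₀ i) then 1 else 0)
    (hσ : ∀ i k, |σ i k| ≤ 1) (hF : ∀ i, (F i).card ≤ s)
    (hB : ∀ u, l2 (mulVec B u) ≤ β * l2 u) (hh : ∀ i, l2 (h i - h₀ i) ≤ G)
    (hv : ∀ i, l2 (v i) ≤ M)
    (hN : N ≤ ((Finset.univ.filter fun k => θ ≤ l2 (rowR h₀ v (w k) (transpose B k))).card : ℝ)) :
    (N - n * s) * (θ ^ 2 / 2) - n ^ 2 * β ^ 2 * M ^ 2 * G ^ 2 ≤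
      ∑ k, l2 (∑ i, (dot (transpose B k) (v i) * σ i k) • h i) ^ 2 := by
  classical
  set P := Finset.univ.filter fun k => θ ≤ l2 (rowR h₀ v (w k) (transpose B k)) with hP
  set T := P \ Finset.univ.biUnion F with hT
  set err : Fin p → Fin q → ℝ := fun k =>
    ∑ i, (dot (transpose B k) (v i) * σ i k) • (h i - h₀ i) with herr
  have hTcard : N - n * s ≤ (T.card : ℝ) := by
    have h1 : P.card ≤ T.card + (Finset.univ.biUnion F).card := by
      have := Finset.le_card_sdiff (Finset.univ.biUnion F) P
      rw [← hT] at this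
      omega
    have h2 : (Finset.univ.biUnion F).card ≤ n * s := by
      refine Finset.card_biUnion_le.trans ((Finset.sum_le_sum fun i _ => hF i).trans ?_)
      simp
    have h3 : (P.card : ℝ) ≤ T.card + n * s := by exact_mod_cast h1.trans (by omega)
    linarith
  have herrsq : ∀ k, l2 (err k) ^ 2 ≤ n * G ^ 2 * ∑ i, dot (transpose B k) (v i) ^ 2 := by
    intro k
    have h1 : l2 (err k) ≤ ∑ i, |dot (transpose B k) (v i)| * G := by
      refine (l2_sum_le _ _).trans (Finset.sum_le_sum fun i _ => ?_)
      rw [l2_smul, abs_mul]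
      have := mul_le_mul_of_nonneg_left (hσ i k) (abs_nonneg (dot (transpose B k) (v i)))
      rw [mul_one] at this
      exact mul_le_mul this (hh i) (l2_nonneg _) (abs_nonneg _)
    have h2 := pow_le_pow_left₀ (l2_nonneg _) h1 2
    have h3 := sq_sum_le_card_mul_sum_sq (s := (Finset.univ : Finset (Fin n)))
      (f := fun i => |dot (transpose B k) (v i)| * G)
    refine h2.trans (h3.trans (le_of_eq ?_))
    simp only [mul_pow, sq_abs, Finset.card_univ, Fintype.card_fin, ← Finset.sum_mul]
    ring
  have hsum : ∑ k, l2 (err k) ^ 2 ≤ n ^ 2 * β ^ 2 * M ^ 2 * G ^ 2 := by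
    calc ∑ k, l2 (err k) ^ 2 ≤ ∑ k, n * G ^ 2 * ∑ i, dot (transpose B k) (v i) ^ 2 :=
          Finset.sum_le_sum fun k _ => herrsq k
      _ = n * G ^ 2 * ∑ i, l2 (mulVec (transpose B) (v i)) ^ 2 := by
          rw [← Finset.mul_sum, Finset.sum_comm]
          simp only [l2_sq, mulVec_eq_dot]
      _ ≤ n * G ^ 2 * ∑ _i : Fin n, (β * M) ^ 2 := by
          gcongr with i _
          · exact l2_nonneg _
          · exact (l2_mulVec_transpose_le B hβ hB (v i)).trans
              (mul_le_mul_of_nonneg_left (hv i) hβ)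
      _ = _ := by simp; ring
  have hrow : ∀ k ∈ T, θ ^ 2 / 2 ≤
      l2 (∑ i, (dot (transpose B k) (v i) * σ i k) • h i) ^ 2 + l2 (err k) ^ 2 := by
    intro k hk
    rw [hT, Finset.mem_sdiff] at hk
    have hkF : ∀ i, k ∉ F i := fun i hi => hk.2 (Finset.mem_biUnion.2 ⟨i, Finset.mem_univ _, hi⟩)
    have hkθ := (Finset.mem_filter.1 hk.1).2
    have e : rowR h₀ v (w k) (transpose B k) =
        (∑ i, (dot (transpose B k) (v i) * σ i k) • h i) - err k := by
      simp only [herr, rowR]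
      rw [← Finset.sum_sub_distrib]
      refine Finset.sum_congr rfl fun i _ => ?_
      rw [hσF i k (hkF i), ← smul_sub, sub_sub_cancel]
    rw [e] at hkθ
    have h1 := hkθ.trans (l2_sub_le _ _)
    have h2 := pow_le_pow_left₀ hθ h1 2
    nlinarith [sq_nonneg (l2 (∑ i, (dot (transpose B k) (v i) * σ i k) • h i) - l2 (err k))]
  have h1 : (T.card : ℝ) * (θ ^ 2 / 2) ≤
      ∑ k, (l2 (∑ i, (dot (transpose B k) (v i) * σ i k) • h i) ^ 2 + l2 (err k) ^ 2) := by
    calc (T.card : ℝ) * (θ ^ 2 / 2) = ∑ _k ∈ T, θ ^ 2 / 2 := by simp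
      _ ≤ ∑ k ∈ T, (l2 (∑ i, (dot (transpose B k) (v i) * σ i k) • h i) ^ 2 + l2 (err k) ^ 2) :=
        Finset.sum_le_sum hrow
      _ ≤ _ := Finset.sum_le_sum_of_subset_of_nonneg (Finset.subset_univ _)
        fun _ _ _ => by positivity
  rw [Finset.sum_add_distrib] at h1
  have h2 := mul_le_mul_of_nonneg_right hTcard (by positivity : 0 ≤ θ ^ 2 / 2)
  linarith

/-- Lower bound for the last-layer gradient at weights `W` close to the initialization. -/
lemma grad_lower {n : ℕ} (hn : 0 < n) (hm : 0 < m) (hd : 0 < d) (z : Init 𝔡 m d L)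
    (x : Fin n → Fin 𝔡 → ℝ) (y : Fin n → Fin d → ℝ) (j : Fin L) (hj : (j : ℕ) + 1 = L)
    (W : Fin L → Fin m → Fin m → ℝ) {δ G : ℝ} {s : ℕ} (hδ : 0 < δ)
    (hB : ∀ u, l2 (mulVec z.2.2 u) ≤ 50 * √((m : ℝ) / d) * l2 u)
    (hflip : ∀ i, (flips z.1 W z.2.1 (x i) j).card ≤ s)
    (hh : ∀ i, l2 (hseq z.1 W (x i) j - hseq z.1 z.2.1 (x i) j) ≤ G)
    (hs : (n : ℝ) * s ≤ δ * m / (4096 * n)) (hG : G ^ 2 ≤ δ / (2 * 10 ^ 10 * n ^ 3))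
    (hlast : ∀ (v : Fin n → Fin d → ℝ) (i₀ : Fin n), (∀ i, l2 (v i) ≤ l2 (v i₀)) →
      δ * m / (2048 * n) ≤ ((Finset.univ.filter fun k => l2 (v i₀) / (16 * √d)
        ≤ l2 (rowR (fun i => hseq z.1 z.2.1 (x i) j) v (z.2.1 j k) (transpose z.2.2 k))).card : ℝ)) :
    δ * m / (10 ^ 7 * d * n ^ 2) * objF z.2.2 z.1 W x y ≤
      frob (gradF z.2.2 z.1 W x y L) ^ 2 := by
  have : Nonempty (Fin n) := ⟨⟨0, hn⟩⟩
  set v : Fin n → Fin d → ℝ := fun i => lossVec z.2.2 z.1 W (x i) (y i) with hv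
  obtain ⟨i₀, hi₀⟩ := Finite.exists_max fun i => l2 (v i)
  set M := l2 (v i₀) with hM
  have hmR : (0 : ℝ) < m := by exact_mod_cast hm
  have hdR : (0 : ℝ) < d := by exact_mod_cast hd
  have hnR : (0 : ℝ) < n := by exact_mod_cast hn
  have hM0 : 0 ≤ M := l2_nonneg _
  have key := rows_lower (fun i => hseq z.1 W (x i) j) (fun i => hseq z.1 z.2.1 (x i) j) v
    (fun i => signOf (gseq z.1 W (x i) (j + 1))) (z.2.1 j) z.2.2
    (fun i => flips z.1 W z.2.1 (x i) j) (by positivity) (by positivity) (fun i k hk => by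
      have : signOf (gseq z.1 W (x i) (j + 1)) k = signOf (gseq z.1 z.2.1 (x i) (j + 1)) k := by
        unfold flips at hk
        simpa using hk
      rw [this, gseq_succ]; rfl) (fun i k => signOf_abs_le _ k) hflip hB hh hi₀ (hlast v i₀ hi₀)
  have hfrob : frob (gradF z.2.2 z.1 W x y L) ^ 2 = ∑ k, l2 (∑ i,
      (dot (transpose z.2.2 k) (v i) * signOf (gseq z.1 W (x i) (j + 1)) k) •
        hseq z.1 W (x i) j) ^ 2 := by
    rw [frob_sq]
    refine Finset.sum_congr rfl fun k _ => ?_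
    unfold gradF
    rw [grad_last_row]
    have : L - 1 = j := by omega
    rw [this, hj]
  rw [hfrob]
  refine le_trans ?_ key
  have hobj : objF z.2.2 z.1 W x y ≤ n * (1 / 2 * M ^ 2) := by
    unfold objF objFi
    calc _ ≤ ∑ _i : Fin n, 1 / 2 * M ^ 2 := by
          refine Finset.sum_le_sum fun i _ => ?_
          have := pow_le_pow_left₀ (l2_nonneg _) (hi₀ i) 2
          exact mul_le_mul_of_nonneg_left this (by norm_num)
      _ = _ := by simp
  have h1 : δ * m / (10 ^ 7 * d * n ^ 2) * objF z.2.2 z.1 W x y ≤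
      δ * m / (10 ^ 7 * d * n ^ 2) * (n * (1 / 2 * M ^ 2)) :=
    mul_le_mul_of_nonneg_left hobj (by positivity)
  refine h1.trans ?_
  have h2 : (M / (16 * √d)) ^ 2 = M ^ 2 / (256 * d) := by
    rw [div_pow, mul_pow, Real.sq_sqrt hdR.le]; norm_num
  have h3 : (50 * √((m : ℝ) / d)) ^ 2 = 2500 * (m / d) := by
    rw [mul_pow, Real.sq_sqrt (by positivity)]; norm_num
  rw [h2, h3]
  have h4 : δ * m / (4096 * n) ≤ δ * m / (2048 * n) - n * s := by
    have : δ * m / (2048 * n) = 2 * (δ * m / (4096 * n)) := by field_simp; norm_num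
    linarith
  have h5 : δ * m / (4096 * n) * (M ^ 2 / (256 * d) / 2) ≤
      (δ * m / (2048 * n) - n * s) * (M ^ 2 / (256 * d) / 2) :=
    mul_le_mul_of_nonneg_right h4 (by positivity)
  have h6 : (n : ℝ) ^ 2 * (2500 * (m / d)) * M ^ 2 * G ^ 2 ≤
      n ^ 2 * (2500 * (m / d)) * M ^ 2 * (δ / (2 * 10 ^ 10 * n ^ 3)) :=
    mul_le_mul_of_nonneg_left hG (by positivity)
  set Q := δ * m * M ^ 2 / (n * d) with hQ
  have hQ0 : 0 ≤ Q := by positivity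
  have e1 : δ * m / (4096 * n) * (M ^ 2 / (256 * d) / 2) = Q / 2097152 := by
    rw [hQ]; field_simp; ring
  have e2 : (n : ℝ) ^ 2 * (2500 * (m / d)) * M ^ 2 * (δ / (2 * 10 ^ 10 * n ^ 3)) = Q / 8000000 := by
    rw [hQ]; field_simp; ring
  have e3 : δ * m / (10 ^ 7 * d * n ^ 2) * (n * (1 / 2 * M ^ 2)) = Q / 20000000 := by
    rw [hQ]; field_simp; ring
  rw [e3]
  rw [e1] at h5
  rw [e2] at h6
  linarith

end GradientBounds

/-! ### The good event at initialization -/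

section GoodEvent

lemma bad_union {Ω ι : Type*} [MeasurableSpace Ω] [Fintype ι] (μ : Measure Ω) {P : ι → Ω → Prop}
    {r t y : ℝ} (hcard : (Fintype.card ι : ℝ) ≤ Real.exp r) (hyr : t ≤ y - r)
    (h : ∀ i, ∃ E : Set Ω, μ E ≤ ENNReal.ofReal (Real.exp (-y)) ∧ ∀ z ∉ E, P i z) :
    ∃ E : Set Ω, μ E ≤ ENNReal.ofReal (Real.exp (-t)) ∧ ∀ z ∉ E, ∀ i, P i z := by
  choose E h1 h2 using h
  refine ⟨⋃ i ∈ (Finset.univ : Finset ι), E i, ?_, fun z hz i => h2 i z fun hi => hz ?_⟩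
  · refine (union_bound μ Finset.univ E hcard fun i _ => h1 i).trans ?_
    exact ENNReal.ofReal_le_ofReal (Real.exp_le_exp.2 (by linarith))
  · exact Set.mem_biUnion (Finset.mem_univ i) hi

/-- The numerical relations between the parameters that drive the estimates: `τ` is the sparsity
level, so that at most `s = ⌊5 τ m⌋` activations of each layer change near initialization. -/
structure Params (m d L n : ℕ) (δ τ : ℝ) (s : ℕ) : Prop where
  δ_pos : 0 < δ
  δ_le : δ ≤ 1 / (10 ^ 14 * (L : ℝ))
  τ_pos : 0 < τ
  one_le_log : 1 ≤ Real.log m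
  n_le : (n : ℝ) ≤ m
  L_le : 2 * ((L : ℝ) + 1) ≤ m
  net_le : (⌈64 * 10 ^ 10 * L / δ⌉₊ : ℝ) ≤ m
  big : 2 * 10 ^ 7 * (n : ℝ) ^ 2 * d ≤ m
  large : 100 * (n * d * Real.log m) ≤ τ * m
  small_L : 10 ^ 24 * (τ * m) * (L : ℝ) ^ 2 ≤ m
  small_n : 10 ^ 24 * (τ * m) * (n : ℝ) ^ 2 ≤ δ * m
  small_log : 10 ^ 6 * (τ * m) * Real.log m * (L : ℝ) ^ 2 ≤ m
  s_eq : s = ⌊5 * (τ * m)⌋₊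

/-- Everything the deterministic part of the argument needs to know about the initialization. -/
structure InitGood {𝔡 m d L n : ℕ} (z : Init 𝔡 m d L) (x : Fin n → Fin 𝔡 → ℝ) (δ τ : ℝ) (s : ℕ) :
    Prop where
  chain : ∀ i, ChainGood z (x i) s (700 * L) 50 (2 * √(1200 * s * Real.log m / m))
    (50 * √(m / d)) (2 * √(600 * s * Real.log m / d))
  norm : ∀ i, ∀ ℓ ≤ L, 1 / 2 ≤ l2 (hseq z.1 z.2.1 (x i) ℓ) ∧ l2 (hseq z.1 z.2.1 (x i) ℓ) ≤ 2
  count : ∀ i, ∀ j : Fin L, ((Finset.univ.filter fun k => |gseq z.1 z.2.1 (x i) (j + 1) k| ≤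
    τ * l2 (hseq z.1 z.2.1 (x i) j) * √(2 / m)).card : ℝ) < 4 * τ * m
  last : ∀ j : Fin L, (j : ℕ) + 1 = L → ∀ (v : Fin n → Fin d → ℝ) (i₀ : Fin n),
    (∀ i, l2 (v i) ≤ l2 (v i₀)) →
    δ * m / (2048 * n) ≤ ((Finset.univ.filter fun k => l2 (v i₀) / (16 * √d)
      ≤ l2 (rowR (fun i => hseq z.1 z.2.1 (x i) j) v (z.2.1 j k) (transpose z.2.2 k))).card : ℝ)

set_option maxHeartbeats 1000000 in
/-- The initialization is good off the union of the bad events for norms, small pre-activations,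
separation, chains and last-layer rows, each taken over all samples or pairs of samples. -/
lemma init_good {𝔡 m d L n : ℕ} (h𝔡 : 0 < 𝔡) (hL : 2 ≤ L) (hm : 0 < m) (hd : 0 < d) (hn : 0 < n)
    (x : Fin n → Fin 𝔡 → ℝ) {δ τ : ℝ} {s : ℕ} (P : Params m d L n δ τ s)
    (hx : ∀ i, l2 (x i) = 1) (hx' : ∀ i, x i ⟨𝔡 - 1, Nat.sub_one_lt_of_lt h𝔡⟩ = 1 / Real.sqrt 2)
    (hsep : ∀ i j, i ≠ j → δ ≤ l2 (x i - x j)) :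
    ∃ E : Set (Init 𝔡 m d L),
      initMeasure 𝔡 m d L E ≤ ENNReal.ofReal (Real.exp (-(τ * m))) ∧
      ∀ z ∉ E, InitGood z x δ τ s := by
  obtain ⟨hδ, hδL, hτ, hΛ, hnm, hLm, hNm, hbig, hX, hXL, hXn, hXlog, hs⟩ := P
  set X := τ * m with hXdef
  set Λ := Real.log m with hΛdef
  have hmR : (0 : ℝ) < m := by exact_mod_cast hm
  have hdR : (1 : ℝ) ≤ d := by exact_mod_cast hd
  have hnR : (1 : ℝ) ≤ n := by exact_mod_cast hn
  have hLR : (2 : ℝ) ≤ L := by exact_mod_cast hL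
  have hexp : Real.exp Λ = m := Real.exp_log hmR
  have hnd : 1 ≤ (n : ℝ) * d := by nlinarith
  have hndΛ : Λ ≤ n * d * Λ := by nlinarith
  have hdX : (d : ℝ) ≤ X := by nlinarith [mul_nonneg (by linarith : (0 : ℝ) ≤ n - 1) (by linarith : (0 : ℝ) ≤ d)]
  have hX100 : 100 * Λ ≤ X := by linarith
  have hX1 : 100 ≤ X := by linarith
  have hL2 : (4 : ℝ) ≤ (L : ℝ) ^ 2 := by nlinarith
  have hδ1 : δ ≤ 1 := hδL.trans (by rw [div_le_one (by positivity)]; nlinarith)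
  have hs5 : (s : ℝ) ≤ 5 * X := by rw [hs]; exact Nat.floor_le (by linarith)
  have hs4 : 4 * X ≤ s := by
    have := Nat.lt_floor_add_one (5 * X)
    rw [← hs] at this; linarith
  have hXm : 10 ^ 24 * X ≤ m := by nlinarith
  have hcard : (Fintype.card (Fin n) : ℝ) ≤ Real.exp Λ := by
    rw [Fintype.card_fin, hexp]; exact hnm
  have hr2 : 2 * ((L : ℝ) + 1) ≤ Real.exp Λ := by rw [hexp]; exact hLm
  obtain ⟨E₁, hE₁, h₁⟩ := bad_union (initMeasure 𝔡 m d L) hcard (t := X + 3)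
    (y := m * (1 / (8 * (L : ℝ))) ^ 2 / 560 - Λ) (by
      have : 10 ^ 24 * X ≤ m / (L : ℝ) ^ 2 := by rw [le_div_iff₀ (by positivity)]; exact hXL
      have e : m * (1 / (8 * (L : ℝ))) ^ 2 / 560 = m / (L : ℝ) ^ 2 / 35840 := by
        field_simp; norm_num
      rw [e]
      linarith)
    fun i => norm_good (d := d) hm hL (x i) (hx i) hr2
  obtain ⟨E₂, hE₂, h₂⟩ := bad_union (initMeasure 𝔡 m d L) hcard (t := X + 3)
    (y := 2 * τ * m - Λ) (by rw [mul_assoc, ← hXdef]; linarith)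
    fun i => count_good (d := d) hm (x i) hτ.le (by linarith : (L : ℝ) ≤ Real.exp Λ)
  have hs1 : 1 ≤ s := by
    have : (1 : ℝ) ≤ s := by linarith
    exact_mod_cast this
  have hds : d ≤ s := by
    have : (d : ℝ) ≤ s := by linarith
    exact_mod_cast this
  have hsm : s ≤ m := by
    have : (s : ℝ) ≤ m := by linarith
    exact_mod_cast this
  have hchain : 3000 * s * Λ * (L : ℝ) ^ 2 ≤ m := by
    have : (s : ℝ) * (Λ * (L : ℝ) ^ 2) ≤ 5 * X * (Λ * (L : ℝ) ^ 2) :=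
      mul_le_mul_of_nonneg_right hs5 (by positivity)
    nlinarith
  obtain ⟨E₃, hE₃, h₃⟩ := bad_union (initMeasure 𝔡 m d L) hcard (t := X + 3) (y := 4 * X) (by linarith)
    fun i => by
      obtain ⟨E, h1, h2⟩ := chain_good hm hd hL (x i) hs1 hds hsm hΛ hchain
      refine ⟨E, h1.trans (ENNReal.ofReal_le_ofReal ?_), h2⟩
      have h10 : (10 : ℝ) ≤ Real.exp 9 := by
        have := Real.add_one_le_exp (9 : ℝ); linarith
      calc 10 * Real.exp (-(19 * s * Λ)) ≤ Real.exp 9 * Real.exp (-(19 * s * Λ)) := by gcongr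
        _ = Real.exp (9 + -(19 * s * Λ)) := (Real.exp_add _ _).symm
        _ ≤ Real.exp (-(4 * X)) := Real.exp_le_exp.2 (by nlinarith)
  obtain ⟨E₄, hE₄, h₄⟩ := bad_union (initMeasure 𝔡 m d L) (ι := Fin n × Fin n) (t := X + 3)
    (y := m * (1 / (10 ^ 10 * (L : ℝ))) ^ 2 / 560 - 2 * Λ) (r := 2 * Λ) (by
      rw [Fintype.card_prod, Fintype.card_fin, two_mul, Real.exp_add, hexp]
      push_cast
      gcongr) (by
      have : 10 ^ 24 * X ≤ m / (L : ℝ) ^ 2 := by rw [le_div_iff₀ (by positivity)]; exact hXL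
      have e : m * (1 / (10 ^ 10 * (L : ℝ))) ^ 2 / 560 = m / (L : ℝ) ^ 2 / (56 * 10 ^ 21) := by
        field_simp; norm_num
      have : 10 * X ≤ m / (L : ℝ) ^ 2 / (56 * 10 ^ 21) := by
        rw [le_div_iff₀ (by norm_num)]; linarith
      rw [e]
      linarith)
    (P := fun p z => p.1 ≠ p.2 →
      (∀ ℓ ≤ L, 1 / 2 ≤ l2 (hseq z.1 z.2.1 (x p.1) ℓ) ∧ l2 (hseq z.1 z.2.1 (x p.1) ℓ) ≤ 2) →
      (∀ ℓ ≤ L, 1 / 2 ≤ l2 (hseq z.1 z.2.1 (x p.2) ℓ) ∧ l2 (hseq z.1 z.2.1 (x p.2) ℓ) ≤ 2) →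
        ∀ ℓ ≤ L, Sep (δ / 4) (hseq z.1 z.2.1 (x p.1) ℓ) (hseq z.1 z.2.1 (x p.2) ℓ)) (by
      rintro ⟨i, j⟩
      by_cases hij : i = j
      · exact ⟨∅, by simp, fun z _ h => absurd hij h⟩
      · obtain ⟨E, h1, h2⟩ := sep_good (d := d) hm hL (x i) (x j) (hx i) (hx j)
          (input_dot_nonneg h𝔡 _ _ (hx i) (hx j) (hx' i) (hx' j)) hδ hδL (hsep i j hij)
          (Nat.le_ceil _) (r := 2 * Λ) (by
            rw [two_mul, Real.exp_add, hexp]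
            exact mul_le_mul hNm (by linarith) (by positivity) hmR.le)
        exact ⟨E, h1, fun z hz _ => h2 z hz⟩)
  let jL : Fin L := ⟨L - 1, by omega⟩
  obtain ⟨E₅, hE₅, h₅⟩ := last_good hm hd hn x jL hδ hδ1 hbig (r := 3 * (n * d * Λ)) (by
      have h3 : (3 : ℝ) ≤ m := by linarith
      have h2m : 2 * (m : ℝ) + 1 ≤ Real.exp (2 * Λ) := by
        rw [two_mul Λ, Real.exp_add, hexp]; nlinarith
      calc (2 * (m : ℝ) + 1) ^ (n * d) * n ≤ Real.exp (2 * Λ) ^ (n * d) * Real.exp Λ := by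
            refine mul_le_mul (pow_le_pow_left₀ (by positivity) h2m _) (by rw [hexp]; exact hnm)
              (by positivity) (by positivity)
        _ = Real.exp ((n * d : ℕ) * (2 * Λ) + Λ) := by rw [← Real.exp_nat_mul, Real.exp_add]
        _ ≤ _ := Real.exp_le_exp.2 (by push_cast; linarith))
  have hE₅' : initMeasure 𝔡 m d L E₅ ≤ ENNReal.ofReal (Real.exp (-(X + 3))) := by
    refine hE₅.trans (ENNReal.ofReal_le_ofReal (Real.exp_le_exp.2 ?_))
    have h1 : 10 ^ 20 * X ≤ δ * m / (2048 * n) := by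
      rw [le_div_iff₀ (by positivity)]
      have h2 : X * n ≤ X * (n : ℝ) ^ 2 := mul_le_mul_of_nonneg_left (by nlinarith) (by linarith)
      nlinarith
    linarith
  refine ⟨E₁ ∪ (E₂ ∪ (E₃ ∪ (E₄ ∪ E₅))), ?_, ?_⟩
  · set e := ENNReal.ofReal (Real.exp (-(X + 3))) with he
    calc _ ≤ e + (e + (e + (e + e))) := by
          refine (measure_union_le _ _).trans (add_le_add hE₁ ?_)
          refine (measure_union_le _ _).trans (add_le_add hE₂ ?_)
          refine (measure_union_le _ _).trans (add_le_add hE₃ ?_)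
          exact (measure_union_le _ _).trans (add_le_add hE₄ hE₅')
      _ = ENNReal.ofReal (5 * Real.exp (-(X + 3))) := by
          rw [ENNReal.ofReal_mul (by norm_num), ← he]
          rw [show ENNReal.ofReal 5 = 5 by norm_num]
          ring
      _ ≤ _ := by
          refine ENNReal.ofReal_le_ofReal ?_
          have h5 : (5 : ℝ) ≤ Real.exp 3 := by
            have h1 := Real.add_one_le_exp (1.5 : ℝ)
            have h2 : Real.exp 3 = Real.exp 1.5 * Real.exp 1.5 := by
              rw [← Real.exp_add]; norm_num
            rw [h2]; nlinarith
          calc 5 * Real.exp (-(X + 3)) ≤ Real.exp 3 * Real.exp (-(X + 3)) := by gcongr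
            _ = Real.exp (-X) := by rw [← Real.exp_add]; ring_nf
  · intro z hz
    simp only [Set.mem_union, not_or] at hz
    obtain ⟨z1, z2, z3, z4, z5⟩ := hz
    have hnorm := h₁ z z1
    have hchain := fun i => h₃ z z3 i fun j h0 => by
      have := (hnorm i j (by omega)).1
      rw [h0, l2_zero] at this
      norm_num at this
    refine ⟨hchain, hnorm, fun i j => h₂ z z2 i j ?_, ?_⟩
    · linarith [(hnorm i j (by omega)).1]
    · intro j hj v i₀ hv
      obtain rfl : j = jL := Fin.ext (by simp only [jL]; omega)
      refine h₅ z z5 (fun u => ?_) v i₀ ⟨fun i => (hnorm i _ (by omega)).1,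
        fun i => (hnorm i _ (by omega)).2, fun i hi =>
          h₄ z z4 (i, i₀) hi (hnorm i) (hnorm i₀) _ (by omega)⟩ hv
      have := (hchain i₀).out (L + 1) le_rfl u
      rwa [pvec_of_lt _ _ _ (Nat.lt_succ_self L)] at this

end GoodEvent

/-! ### Deterministic conclusion and choice of parameters -/

section Conclusion

lemma objF_nonneg {𝔡 m d L n : ℕ} (B : Fin d → Fin m → ℝ) (A : Fin m → Fin 𝔡 → ℝ)
    (W : Fin L → Fin m → Fin m → ℝ) (x : Fin n → Fin 𝔡 → ℝ) (y : Fin n → Fin d → ℝ) :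
    0 ≤ objF B A W x y :=
  Finset.sum_nonneg fun i _ => by unfold objFi; positivity

set_option maxHeartbeats 2000000 in
/-- On the good event the gradient bounds hold for all weights within spectral distance `ω`. -/
lemma grad_bounds {𝔡 m d L n : ℕ} (hL : 2 ≤ L) (hm : 0 < m) (hd : 0 < d) (hn : 0 < n)
    (x : Fin n → Fin 𝔡 → ℝ) (y : Fin n → Fin d → ℝ) {δ τ : ℝ} {s : ℕ} (P : Params m d L n δ τ s)
    {z : Init 𝔡 m d L} (I : InitGood z x δ τ s) {ω : ℝ} (hω : 0 ≤ ω)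
    (hG1 : 3 * 10 ^ 5 * ω * (L : ℝ) ^ 3 ≤ 1)
    (hG2 : 2 * (3 * 10 ^ 5 * ω * (L : ℝ) ^ 3) ^ 2 ≤ τ ^ 3)
    (hG3 : (3 * 10 ^ 5 * ω * (L : ℝ) ^ 3) ^ 2 ≤ δ / (2 * 10 ^ 10 * n ^ 3))
    (W : Fin L → Fin m → Fin m → ℝ) (hW : ∀ ℓ, spec (W ℓ - z.2.1 ℓ) ≤ ω) (ℓ : Fin L) (i : Fin n) :
    frob (gradW z.2.2 z.1 W (x i) (lossVec z.2.2 z.1 W (x i) (y i)) ((ℓ : ℕ) + 1)) ^ 2 ≤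
        10 ^ 7 * ((m : ℝ) / d) * objFi z.2.2 z.1 W (x i) (y i) ∧
      frob (gradF z.2.2 z.1 W x y ((ℓ : ℕ) + 1)) ^ 2 ≤
        10 ^ 7 * ((m : ℝ) * n / d) * objF z.2.2 z.1 W x y ∧
      δ * (m : ℝ) / (10 ^ 7 * (d : ℝ) * (n : ℝ) ^ 2) * objF z.2.2 z.1 W x y ≤
        frob (gradF z.2.2 z.1 W x y L) ^ 2 := by
  set G := 3 * 10 ^ 5 * ω * (L : ℝ) ^ 3 with hG
  have hmR : (0 : ℝ) < m := by exact_mod_cast hm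
  have hdR : (1 : ℝ) ≤ d := by exact_mod_cast hd
  have hnR : (1 : ℝ) ≤ n := by exact_mod_cast hn
  have hLR : (2 : ℝ) ≤ L := by exact_mod_cast hL
  have hΛ := P.one_le_log
  have hτ := P.τ_pos
  have hs5 : (s : ℝ) ≤ 5 * (τ * m) := by rw [P.s_eq]; exact Nat.floor_le (by positivity)
  have hsΛ : (s : ℝ) * Real.log m * (L : ℝ) ^ 2 ≤ m / 200000 := by
    have h1 : (s : ℝ) * (Real.log m * (L : ℝ) ^ 2) ≤ 5 * (τ * m) * (Real.log m * (L : ℝ) ^ 2) :=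
      mul_le_mul_of_nonneg_right hs5 (by positivity)
    have h2 := P.small_log
    nlinarith
  have hηL : 2 * √(1200 * s * Real.log m / m) * L ≤ 1 / 2 := by
    have h1 : √(1200 * s * Real.log m / m) ≤ 1 / (4 * L) := by
      refine Real.sqrt_le_iff.2 ⟨by positivity, ?_⟩
      rw [div_le_iff₀ hmR]
      have e : (1 / (4 * (L : ℝ))) ^ 2 * m = m / 16 / (L : ℝ) ^ 2 := by field_simp; norm_num
      rw [e, le_div_iff₀ (by positivity)]
      nlinarith
    calc 2 * √(1200 * s * Real.log m / m) * L ≤ 2 * (1 / (4 * L)) * L := by gcongr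
      _ = 1 / 2 := by field_simp; norm_num
  have hL1 : (1 : ℝ) ≤ L := by linarith
  have hpow2 : (L : ℝ) ≤ (L : ℝ) ^ 2 := by nlinarith
  have hpow3 : (L : ℝ) ^ 2 ≤ (L : ℝ) ^ 3 := by nlinarith [sq_nonneg (L : ℝ)]
  have hGle : 3 * ω * (700 * L * L * (2 * 50 * L + 1) + 1) ≤ G := by
    rw [hG]
    have : 3 * (700 * (L : ℝ) * L * (2 * 50 * L + 1) + 1) ≤ 3 * 10 ^ 5 * (L : ℝ) ^ 3 := by nlinarith
    nlinarith [mul_le_mul_of_nonneg_left this hω]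
  have hstable : ∀ i, (∀ j : Fin L, (flips z.1 W z.2.1 (x i) j).card ≤ s) ∧
      ∀ ℓ ≤ L, l2 (hseq z.1 W (x i) ℓ - hseq z.1 z.2.1 (x i) ℓ) ≤ G := fun i =>
    forward_stable (I.chain i) hm (by positivity) (by norm_num) (by positivity) hηL (I.norm i) hτ hω
      (I.count i) (fun c hc => by rw [P.s_eq]; exact Nat.le_floor (by linarith)) hGle hG1 hG2 hW
  have hh3 : ∀ i, ∀ ℓ ≤ L, l2 (hseq z.1 W (x i) ℓ) ≤ 3 := by
    intro i ℓ hℓ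
    have h1 := l2_add_le (hseq z.1 W (x i) ℓ - hseq z.1 z.2.1 (x i) ℓ) (hseq z.1 z.2.1 (x i) ℓ)
    rw [sub_add_cancel] at h1
    linarith [(hstable i).2 ℓ hℓ, (I.norm i ℓ hℓ).2]
  set Γ := 2 * (50 * √((m : ℝ) / d)) + 4 * 50 * L * (2 * √(600 * s * Real.log m / d)) with hΓ
  have hΓ0 : 0 ≤ Γ := by positivity
  have hΓle : Γ ≤ 300 * √((m : ℝ) / d) := by
    have h1 : L * √(600 * s * Real.log m / d) ≤ 1 / 2 * √((m : ℝ) / d) := by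
      refine (sq_le_sq₀ (by positivity) (by positivity)).1 ?_
      rw [mul_pow, mul_pow, Real.sq_sqrt (by positivity), Real.sq_sqrt (by positivity), mul_div_assoc',
        mul_div_assoc']
      refine div_le_div_of_nonneg_right ?_ (by positivity)
      nlinarith
    rw [hΓ]
    linarith
  have hΓ2 : Γ ^ 2 ≤ 90000 * ((m : ℝ) / d) := by
    have := pow_le_pow_left₀ hΓ0 hΓle 2
    rw [mul_pow, Real.sq_sqrt (by positivity)] at this
    linarith
  have hback : ∀ i, ∀ a ≤ L, ∀ u, l2 (mulVec z.2.2 (pvec z.1 W (x i) (a + 1) L u)) ≤ Γ * l2 u := by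
    intro i a ha u
    refine backward_stable (I.chain i) (by positivity) (by norm_num) (by positivity) hηL
      (by positivity) (by positivity) hω (Y := 2 * (700 * L) + 4 * 50 * (700 * L) * L + 1) le_rfl ?_
      hW (hstable i).1 ha u
    refine le_trans ?_ hG1
    have : (L : ℝ) * (2 * (700 * L) + 4 * 50 * (700 * L) * L + 1) ≤ 3 * 10 ^ 5 * (L : ℝ) ^ 3 := by
      nlinarith
    rw [hG]
    nlinarith [mul_le_mul_of_nonneg_left this hω]
  have hup : ∀ i, frob (gradW z.2.2 z.1 W (x i) (lossVec z.2.2 z.1 W (x i) (y i)) ((ℓ : ℕ) + 1)) ^ 2 ≤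
      10 ^ 7 * ((m : ℝ) / d) * objFi z.2.2 z.1 W (x i) (y i) := by
    intro i
    refine (grad_upper z.2.2 z.1 W (x i) _ _ hΓ0 (hback i _ (by omega))
      (hh3 i _ (by simp only [Nat.add_sub_cancel]; omega))).trans ?_
    unfold objFi
    have h0 := sq_nonneg (l2 (lossVec z.2.2 z.1 W (x i) (y i)))
    have hmd : 0 ≤ (m : ℝ) / d := by positivity
    nlinarith [mul_le_mul_of_nonneg_right hΓ2 h0, mul_nonneg hmd h0]
  refine ⟨hup i, ?_, ?_⟩
  · unfold gradF objF
    refine (frob_sum_sq_le _).trans ?_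
    calc (n : ℝ) * ∑ i, frob (gradW z.2.2 z.1 W (x i) (lossVec z.2.2 z.1 W (x i) (y i)) ((ℓ : ℕ) + 1)) ^ 2
        ≤ n * ∑ i, 10 ^ 7 * ((m : ℝ) / d) * objFi z.2.2 z.1 W (x i) (y i) := by
          gcongr with i _; exact hup i
      _ = _ := by rw [← Finset.mul_sum]; ring
  · let jL : Fin L := ⟨L - 1, by omega⟩
    have hjL : (jL : ℕ) + 1 = L := by simp only [jL]; omega
    refine grad_lower hn hm hd z x y jL hjL W P.δ_pos (fun u => ?_) (fun i => (hstable i).1 jL)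
      (fun i => (hstable i).2 _ (by omega)) ?_ hG3 (I.last jL hjL)
    · have := (I.chain i).out (L + 1) le_rfl u
      rwa [pvec_of_lt _ _ _ (Nat.lt_succ_self L)] at this
    · rw [le_div_iff₀ (by positivity)]
      have h1 := P.small_n
      have h2 : (s : ℝ) * (n : ℝ) ^ 2 ≤ 5 * (τ * m) * (n : ℝ) ^ 2 :=
        mul_le_mul_of_nonneg_right hs5 (by positivity)
      have h3 : 0 ≤ (τ * m) * (n : ℝ) ^ 2 := by positivity
      nlinarith

/-- The parameter relations follow from the width assumption, with
`τ = δ / (10²⁴ n³ L² (log m)²)`. -/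
lemma params_of_width {m d L n : ℕ} (hL : 2 ≤ L) (hm : 2 ≤ m) (hd : 0 < d) (hn : 0 < n) {δ : ℝ}
    (hδ : 0 < δ) (hδL : δ ≤ 1 / (10 ^ 50 * (L : ℝ)))
    (hw : 10 ^ 50 * (n : ℝ) ^ 24 * (L : ℝ) ^ 12 * (d : ℝ) * Real.log m ^ 5 / δ ^ 8 ≤ (m : ℝ)) :
    Params m d L n δ (δ / (10 ^ 24 * n ^ 3 * L ^ 2 * Real.log m ^ 2))
      ⌊5 * (δ / (10 ^ 24 * n ^ 3 * L ^ 2 * Real.log m ^ 2) * m)⌋₊ := by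
  set Λ := Real.log m with hΛdef
  have hm2 : (2 : ℝ) ≤ m := by exact_mod_cast hm
  have hmR : (0 : ℝ) < m := by linarith
  have hdR : (1 : ℝ) ≤ d := by exact_mod_cast hd
  have hnR : (1 : ℝ) ≤ n := by exact_mod_cast hn
  have hLR : (2 : ℝ) ≤ L := by exact_mod_cast hL
  have hL1 : (1 : ℝ) ≤ L := by linarith
  have hδ1 : δ ≤ 1 := hδL.trans (by rw [div_le_one (by positivity)]; nlinarith)
  have hΛhalf : 1 / 2 ≤ Λ := by
    have := Real.log_le_log (by norm_num) hm2
    linarith [Real.log_two_gt_d9]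
  have hδ8 : δ ^ 8 ≤ 1 := pow_le_one₀ hδ.le hδ1
  have hw' : 10 ^ 50 * (n : ℝ) ^ 24 * (L : ℝ) ^ 12 * (d : ℝ) * Λ ^ 5 ≤ m * δ ^ 8 := by
    rwa [div_le_iff₀ (by positivity)] at hw
  have hΛ : 1 ≤ Λ := by
    have h1 : (1 / 2 : ℝ) ^ 5 ≤ Λ ^ 5 := pow_le_pow_left₀ (by norm_num) hΛhalf 5
    have h2 : (3 : ℝ) ≤ m := by
      have h3 : (10 ^ 50 : ℝ) * 1 * 1 * 1 * (1 / 2) ^ 5 ≤ m * 1 := by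
        refine le_trans ?_ (hw'.trans (mul_le_mul_of_nonneg_left hδ8 hmR.le))
        gcongr
        · exact one_le_pow₀ hnR
        · exact one_le_pow₀ hL1
      linarith
    rw [hΛdef, Real.le_log_iff_exp_le hmR]
    linarith [Real.exp_one_lt_d9]
  -- all powers in the width assumption may be lowered, since every base is on the good side of `1`
  have hw1 : 10 ^ 50 * (n : ℝ) ^ 4 * (L : ℝ) ^ 2 * d * Λ ^ 3 ≤ m * δ := by
    refine le_trans ?_ (hw'.trans (mul_le_mul_of_nonneg_left
      (pow_le_of_le_one hδ.le hδ1 (by norm_num)) hmR.le))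
    gcongr <;> first | assumption | norm_num
  have hn2 : (1 : ℝ) ≤ (n : ℝ) ^ 2 := one_le_pow₀ hnR
  have hn3 : (1 : ℝ) ≤ (n : ℝ) ^ 3 := one_le_pow₀ hnR
  have hn4 : (1 : ℝ) ≤ (n : ℝ) ^ 4 := one_le_pow₀ hnR
  have hΛ2 : (1 : ℝ) ≤ Λ ^ 2 := one_le_pow₀ hΛ
  have hΛ3 : (1 : ℝ) ≤ Λ ^ 3 := one_le_pow₀ hΛ
  have hLL : (1 : ℝ) ≤ (L : ℝ) ^ 2 := one_le_pow₀ hL1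
  have hmδ : m * δ ≤ m := by nlinarith
  have hLmδ : 10 ^ 50 * (L : ℝ) ≤ m * δ := by
    refine le_trans ?_ hw1
    calc 10 ^ 50 * (L : ℝ) = 10 ^ 50 * 1 * (L : ℝ) * 1 * 1 := by ring
      _ ≤ _ := by
        gcongr
        nlinarith
  have hnnd : 10 ^ 50 * (n : ℝ) ^ 2 * d ≤ m := by
    refine le_trans ?_ (hw1.trans hmδ)
    calc 10 ^ 50 * (n : ℝ) ^ 2 * d = 10 ^ 50 * (n : ℝ) ^ 2 * 1 * d * 1 := by ring
      _ ≤ _ := by gcongr <;> first | assumption | norm_num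
  set τ := δ / (10 ^ 24 * n ^ 3 * L ^ 2 * Λ ^ 2) with hτ
  have hX : 10 ^ 24 * (n : ℝ) ^ 3 * L ^ 2 * Λ ^ 2 * (τ * m) = m * δ := by
    rw [hτ]; field_simp
  have hX0 : 0 ≤ τ * m := by positivity
  refine ⟨hδ, hδL.trans ?_, by positivity, hΛ, ?_, ?_, ?_, ?_, ?_, ?_, ?_, ?_, rfl⟩
  · gcongr <;> norm_num
  · nlinarith
  · nlinarith
  · refine (Nat.ceil_lt_add_one (by positivity)).le.trans ?_
    have h1 : 64 * 10 ^ 10 * L / δ ≤ m / 2 := by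
      rw [div_le_iff₀ hδ]; linarith
    linarith
  · nlinarith [mul_nonneg (sq_nonneg (n : ℝ)) (by linarith : (0 : ℝ) ≤ d)]
  · have hD : (0 : ℝ) < 10 ^ 24 * (n : ℝ) ^ 3 * L ^ 2 * Λ ^ 2 := by positivity
    refine le_of_mul_le_mul_left ?_ hD
    rw [hX]
    refine le_trans ?_ hw1
    have e : 10 ^ 24 * (n : ℝ) ^ 3 * L ^ 2 * Λ ^ 2 * (100 * (n * d * Λ)) =
        10 ^ 26 * ((n : ℝ) ^ 4 * L ^ 2 * d * Λ ^ 3) := by ring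
    have e' : 10 ^ 50 * (n : ℝ) ^ 4 * L ^ 2 * d * Λ ^ 3 =
        10 ^ 50 * ((n : ℝ) ^ 4 * L ^ 2 * d * Λ ^ 3) := by ring
    rw [e, e']
    gcongr <;> norm_num
  · refine le_trans ?_ hmδ
    rw [← hX]
    calc 10 ^ 24 * (τ * m) * (L : ℝ) ^ 2 = 10 ^ 24 * 1 * (L : ℝ) ^ 2 * 1 * (τ * m) := by ring
      _ ≤ _ := by gcongr
  · rw [mul_comm δ, ← hX]
    calc 10 ^ 24 * (τ * m) * (n : ℝ) ^ 2 = 10 ^ 24 * (n : ℝ) ^ 2 * 1 * 1 * (τ * m) := by ring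
      _ ≤ _ := by gcongr <;> first | assumption | norm_num
  · refine le_trans ?_ hmδ
    rw [← hX]
    calc 10 ^ 6 * (τ * m) * Λ * (L : ℝ) ^ 2 = 10 ^ 6 * 1 * (L : ℝ) ^ 2 * Λ * (τ * m) := by ring
      _ ≤ _ := by
        gcongr
        · norm_num
        · norm_num
        · nlinarith

/-- The radius `ω` satisfies `ω² = u³ / C²` with `u = δ / (n³ L⁴ (log m)²)`. -/
lemma radius_sq {n L : ℕ} {δ Λ C : ℝ} (hδ : 0 < δ) :
    (δ ^ ((3 : ℝ) / 2) / (C * (n : ℝ) ^ ((9 : ℝ) / 2) * (L : ℝ) ^ 6 * Λ ^ 3)) ^ 2 =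
      (δ / (n ^ 3 * L ^ 4 * Λ ^ 2)) ^ 3 / C ^ 2 := by
  have h1 : (δ ^ ((3 : ℝ) / 2)) ^ 2 = δ ^ 3 := by
    rw [← Real.rpow_natCast, ← Real.rpow_mul hδ.le, ← Real.rpow_natCast]; norm_num
  have h2 : ((n : ℝ) ^ ((9 : ℝ) / 2)) ^ 2 = (n : ℝ) ^ 9 := by
    rw [← Real.rpow_natCast, ← Real.rpow_mul (Nat.cast_nonneg n), ← Real.rpow_natCast]; norm_num
  rw [div_pow, h1, mul_pow, mul_pow, mul_pow, h2, div_pow, div_div]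
  congr 1
  ring

end Conclusion

section Radius

/-- Numerical consequences of the choice of `ω`, with `τ` as in `params_of_width`. -/
lemma radius_bounds {m n L : ℕ} (hL : 2 ≤ L) (hn : 0 < n) {δ Λ ω τ : ℝ} (hδ : 0 < δ) (hδ1 : δ ≤ 1)
    (hΛ : 1 ≤ Λ) (hω : ω = δ ^ ((3 : ℝ) / 2) /
      (10 ^ 50 * (n : ℝ) ^ ((9 : ℝ) / 2) * (L : ℝ) ^ 6 * Λ ^ 3))
    (hτ : τ = δ / (10 ^ 24 * n ^ 3 * L ^ 2 * Λ ^ 2)) :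
    0 ≤ ω ∧ 3 * 10 ^ 5 * ω * (L : ℝ) ^ 3 ≤ 1 ∧ 2 * (3 * 10 ^ 5 * ω * (L : ℝ) ^ 3) ^ 2 ≤ τ ^ 3 ∧
      (3 * 10 ^ 5 * ω * (L : ℝ) ^ 3) ^ 2 ≤ δ / (2 * 10 ^ 10 * n ^ 3) ∧
      1 / 10 ^ 24 * (m : ℝ) * ω ^ ((2 : ℝ) / 3) * (L : ℝ) ≤ τ * m := by
  have hnR : (1 : ℝ) ≤ n := by exact_mod_cast hn
  have hLR : (2 : ℝ) ≤ L := by exact_mod_cast hL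
  have hω0 : 0 ≤ ω := by rw [hω]; positivity
  have hsq : ω ^ 2 = (δ / (n ^ 3 * L ^ 4 * Λ ^ 2)) ^ 3 / (10 ^ 50) ^ 2 := by
    rw [hω]; exact radius_sq hδ
  set u := δ / ((n : ℝ) ^ 3 * L ^ 4 * Λ ^ 2) with hu
  have hu0 : 0 ≤ u := by positivity
  set w := δ / ((n : ℝ) ^ 3 * L ^ 2 * Λ ^ 2) with hw
  have hw0 : 0 ≤ w := by positivity
  have huw : u * (L : ℝ) ^ 2 = w := by rw [hu, hw]; field_simp
  have hτw : τ = w / 10 ^ 24 := by rw [hτ, hw]; field_simp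
  have hn3 : (1 : ℝ) ≤ (n : ℝ) ^ 3 := one_le_pow₀ hnR
  have hwδ : w ≤ δ / (n : ℝ) ^ 3 := by
    rw [hw]
    refine div_le_div_of_nonneg_left hδ.le (by positivity) ?_
    rw [mul_assoc]
    exact le_mul_of_one_le_right (by positivity)
      (one_le_mul_of_one_le_of_one_le (one_le_pow₀ (by linarith)) (one_le_pow₀ hΛ))
  have hδn : δ / (n : ℝ) ^ 3 ≤ 1 := by rw [div_le_one (by positivity)]; linarith
  have hw3 : w ^ 3 ≤ δ / (n : ℝ) ^ 3 :=
    (pow_le_of_le_one hw0 (hwδ.trans hδn) (by norm_num)).trans hwδ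
  have hGsq : (3 * 10 ^ 5 * ω * (L : ℝ) ^ 3) ^ 2 = 9 / 10 ^ 90 * w ^ 3 := by
    rw [← huw, mul_pow, mul_pow, hsq]; ring
  have hw30 : 0 ≤ w ^ 3 := by positivity
  refine ⟨hω0, ?_, ?_, ?_, ?_⟩
  · refine (sq_le_sq₀ (by positivity) (by norm_num)).1 ?_
    rw [hGsq]; linarith
  · rw [hGsq, hτw, div_pow w (10 ^ 24) 3]; linarith
  · rw [hGsq]
    have : δ / (2 * 10 ^ 10 * (n : ℝ) ^ 3) = δ / (n : ℝ) ^ 3 / (2 * 10 ^ 10) := by field_simp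
    rw [this]; linarith
  · have h1 : ω ^ ((2 : ℝ) / 3) ≤ u := by
      have e : ω ^ ((2 : ℝ) / 3) = (ω ^ 2) ^ ((1 : ℝ) / 3) := by
        rw [← Real.rpow_natCast ω, ← Real.rpow_mul hω0]; norm_num
      have e' : u = (u ^ 3) ^ ((1 : ℝ) / 3) := by
        rw [← Real.rpow_natCast u, ← Real.rpow_mul hu0]; norm_num
      rw [e]
      conv_rhs => rw [e']
      refine Real.rpow_le_rpow (by positivity) ?_ (by norm_num)
      rw [hsq]
      exact div_le_self (by positivity) (by norm_num)
    have hm0 : (0 : ℝ) ≤ m := Nat.cast_nonneg m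
    calc 1 / 10 ^ 24 * (m : ℝ) * ω ^ ((2 : ℝ) / 3) * (L : ℝ)
        ≤ 1 / 10 ^ 24 * m * u * (L : ℝ) ^ 2 := by
          gcongr
          nlinarith
      _ = τ * m := by rw [hτw, ← huw]; ring

end Radius

/-- Theorem 3, gradient upper and lower bounds near initialization. -/
theorem statement2 :
    ∃ C c : ℝ, 0 < C ∧ 0 < c ∧
      ∀ (𝔡 m d L n : ℕ) (h𝔡 : 0 < 𝔡) (hL : 2 ≤ L) (hm : 0 < m) (hd : 0 < d) (hn : 0 < n)
        (x : Fin n → Fin 𝔡 → ℝ) (y : Fin n → Fin d → ℝ) (δ ω : ℝ),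
        0 < δ → δ ≤ 1 / (C * L) →
        (∀ i, l2 (x i) = 1) →
        (∀ i, x i ⟨𝔡 - 1, by omega⟩ = 1 / Real.sqrt 2) →
        (∀ i j, i ≠ j → δ ≤ l2 (x i - x j)) →
        (∀ i, l2 (y i) ≤ 1) →
        C * (n : ℝ) ^ 24 * (L : ℝ) ^ 12 * (d : ℝ) * Real.log m ^ 5 / δ ^ 8 ≤ (m : ℝ) →
        ω = δ ^ ((3 : ℝ) / 2) /
            (C * (n : ℝ) ^ ((9 : ℝ) / 2) * (L : ℝ) ^ 6 * Real.log m ^ 3) →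
        ENNReal.ofReal (1 - Real.exp (-(c * (m : ℝ) * ω ^ ((2 : ℝ) / 3) * (L : ℝ)))) ≤
          initMeasure 𝔡 m d L
            {z | ∀ W : Fin L → Fin m → Fin m → ℝ,
              (∀ ℓ, spec (W ℓ - z.2.1 ℓ) ≤ ω) →
              ∀ (ℓ : Fin L) (i : Fin n),
                frob (gradW z.2.2 z.1 W (x i)
                    (lossVec z.2.2 z.1 W (x i) (y i)) ((ℓ : ℕ) + 1)) ^ 2 ≤
                  C * ((m : ℝ) / (d : ℝ)) * objFi z.2.2 z.1 W (x i) (y i) ∧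
                frob (gradF z.2.2 z.1 W x y ((ℓ : ℕ) + 1)) ^ 2 ≤
                  C * ((m : ℝ) * (n : ℝ) / (d : ℝ)) * objF z.2.2 z.1 W x y ∧
                δ * (m : ℝ) / (C * (d : ℝ) * (n : ℝ) ^ 2) * objF z.2.2 z.1 W x y ≤
                  frob (gradF z.2.2 z.1 W x y L) ^ 2} := by
  refine ⟨10 ^ 50, 1 / 10 ^ 24, by norm_num, by norm_num, ?_⟩
  intro 𝔡 m d L n h𝔡 hL hm hd hn x y δ ω hδ hδL hx hx' hsep _ hw hω
  rcases Nat.lt_or_ge m 2 with hm1 | hm2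
  · -- for `m = 1` the logarithm vanishes, so `ω = 0` and the claimed probability is `0`
    obtain rfl : m = 1 := by omega
    have hω0 : ω = 0 := by rw [hω]; simp
    rw [hω0, Real.zero_rpow (by norm_num)]
    simp
  have P := params_of_width hL hm2 hd hn hδ hδL hw
  have hLR : (2 : ℝ) ≤ L := by exact_mod_cast hL
  have hmR : (0 : ℝ) < m := by exact_mod_cast hm
  have hdR : (0 : ℝ) < d := by exact_mod_cast hd
  have hnR : (0 : ℝ) < n := by exact_mod_cast hn
  have hδ1 : δ ≤ 1 := hδL.trans (by rw [div_le_one (by positivity)]; linarith)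
  obtain ⟨hω0, hG1, hG2, hG3, hprob⟩ := radius_bounds (m := m) hL hn hδ hδ1 P.one_le_log hω rfl
  obtain ⟨E, hE, hgood⟩ := init_good h𝔡 hL hm hd hn x P hx hx' hsep
  set S := {z : Init 𝔡 m d L | InitGood z x δ (δ / (10 ^ 24 * n ^ 3 * L ^ 2 * Real.log m ^ 2))
    ⌊5 * (δ / (10 ^ 24 * n ^ 3 * L ^ 2 * Real.log m ^ 2) * m)⌋₊} with hS
  have hSm : ENNReal.ofReal (1 - Real.exp (-(1 / 10 ^ 24 * (m : ℝ) * ω ^ ((2 : ℝ) / 3) * (L : ℝ))))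
      ≤ initMeasure 𝔡 m d L S := by
    -- subadditivity of the (outer) measure: the good set need not be measurable
    have h1 : (1 : ENNReal) ≤ initMeasure 𝔡 m d L S + initMeasure 𝔡 m d L E := by
      rw [← measure_univ (μ := initMeasure 𝔡 m d L)]
      refine (measure_mono fun z _ => ?_).trans (measure_union_le S E)
      by_cases hz : z ∈ E
      · exact Or.inr hz
      · exact Or.inl (hgood z hz)
    rw [ENNReal.ofReal_sub _ (Real.exp_pos _).le, ENNReal.ofReal_one]
    refine tsub_le_iff_right.2 (h1.trans (add_le_add le_rfl (hE.trans ?_)))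
    exact ENNReal.ofReal_le_ofReal (Real.exp_le_exp.2 (neg_le_neg hprob))
  refine hSm.trans (measure_mono fun z hz => ?_)
  intro W hW ℓ i
  obtain ⟨b1, b2, b3⟩ := grad_bounds hL hm hd hn x y P hz hω0 hG1 hG2 hG3 W hW ℓ i
  have hF := objF_nonneg z.2.2 z.1 W x y
  have hFi : 0 ≤ objFi z.2.2 z.1 W (x i) (y i) := by unfold objFi; positivity
  refine ⟨b1.trans ?_, b2.trans ?_, le_trans ?_ b3⟩
  · gcongr <;> norm_num
  · gcongr <;> norm_num
  · gcongr <;> norm_num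

end DNNPaper
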